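/- Every parameterized decision problem solvable by an alternating Turing machine with f(k)·log n memory whose computation tree is obtained from a binary tree of depth O(log n)+f(k) by subdividing each edge f(k)·n^{O(1)} times (for some computable f) is solvable by an alternating Turing machine with g(k)·log n memory whose computation tree has size g(k)·n^{O(1)} and which uses O(log n)+g(k) co-non-deterministic steps per computation path, for some computable function g. -/

import Mathlib

/-!
A machine `M'` without access to `k` simulates the given machine `M`. Write `n` for the length of
the input, `N = n + 2`, `ℓ = logb n`. In a subdivided tree at most `C * ℓ + f k` branchings occur on
a path and each edge is subdivided at most `f k * N ^ c` times, so the simulation only has to check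
these two budgets and the space bound. The difficulty is that the budgets of `M` are independent of
each other, while `M'` is subject to bounds in terms of some new function `g`: a tree of size
`g k * N ^ cw` could, for instance, use far more than `f k * ℓ` cells. Hence `M'` has to be forced
to work with the right value `f k`, although `f` is merely computable.

*Guess and certificate.* `M'` guesses a number `v`, in the form of a word with `v` blocks on its
work tape, checks that all blocks have length exactly `ℓ`, and branches universally. One branch
builds a full binary tree of depth `a * v + cw * ℓ`, the certificate, which contributes at least
`2 ^ (a * v + cw * ℓ)` nodes to the computation tree. The other branch simulates `M` with `f k`
replaced by `v`. With `κ = a - cw` and `g k = 2 ^ (a * f k + κ)` the certificate fits into a tree of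
size `g k * N ^ cw` only if `v ≤ f k` (`guess_le`, because `N < 2 ^ (ℓ + 1)`), and acceptance of `M`
is monotone in the budgets. Conversely `v = f k` is affordable: the whole tree has size at most
`g k * N ^ cw` (`size_bound`), and every path has at most
`a * f k + cw * ℓ + 1 ≤ cw * ℓ + g k` branchings.

*Simulation.* The `v * ℓ` cells of the word hold the simulated work tape, together with binary
counters in each block: a reference counter set to `N` by scanning the input, and an odometer of `c`
digits in base `N`, which with its `v` overflow tokens counts up to `v * N ^ c` and is restarted
after each branching of `M`. Further tokens, `C` on each cell of the last block and one on each
block, pay for the `C * ℓ + v` branchings. All these manipulations are sweeps of Mealy machines over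
the word (`Prog`, `pass_sim`), costing `O(v * ℓ)` nodes each.

The two directions are `machine_sound` and `machine_complete`.
-/

namespace XALP

/-! ## Binary trees (used both for computation trees of alternating Turing
machines and for tree-shaped inputs such as tree decompositions). -/

inductive CTree (α : Type) : Type
  | leaf (a : α)
  | node1 (a : α) (t : CTree α)
  | node2 (a : α) (l r : CTree α)

namespace CTree

variable {α β : Type}

/-- The label of the root. -/
def root : CTree α → α
  | leaf a => a
  | node1 a _ => a
  | node2 a _ _ => a

/-- Total number of nodes (the treesize). -/
def size : CTree α → ℕ
  | leaf _ => 1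
  | node1 _ t => t.size + 1
  | node2 _ l r => l.size + r.size + 1

/-- Depth of the tree. -/
def depth : CTree α → ℕ
  | leaf _ => 0
  | node1 _ t => t.depth + 1
  | node2 _ l r => max l.depth r.depth + 1

/-- Maximum number of binary branchings (co-non-deterministic steps) on a
root-to-leaf path. -/
def branchDepth : CTree α → ℕ
  | leaf _ => 0
  | node1 _ t => t.branchDepth
  | node2 _ l r => max l.branchDepth r.branchDepth + 1

/-- All node labels satisfy `p`. -/
def Forall (p : α → Prop) : CTree α → Prop
  | leaf a => p a
  | node1 a t => p a ∧ Forall p t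
  | node2 a l r => p a ∧ Forall p l ∧ Forall p r

/-- Some node label satisfies `p`. -/
def Any (p : α → Prop) : CTree α → Prop
  | leaf a => p a
  | node1 a t => p a ∨ Any p t
  | node2 a l r => p a ∨ Any p l ∨ Any p r

def map (f : α → β) : CTree α → CTree β
  | leaf a => leaf (f a)
  | node1 a t => node1 (f a) (map f t)
  | node2 a l r => node2 (f a) (map f l) (map f r)

end CTree

/-- `SubdivShape m d j t`: the tree `t` has the shape of a binary tree of
depth at most `d` in which every edge has been subdivided at most `m` times;
`j` is the remaining subdivision budget on the current edge. -/
inductive SubdivShape {α : Type} (m : ℕ) : ℕ → ℕ → CTree α → Prop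
  | leaf (d j : ℕ) (a : α) : SubdivShape m d j (.leaf a)
  | branch (d j : ℕ) (a : α) (l r : CTree α)
      (hl : SubdivShape m d m l) (hr : SubdivShape m d m r) :
      SubdivShape m (d + 1) j (.node2 a l r)
  | unary (d j : ℕ) (a : α) (t : CTree α) (h : SubdivShape m d j t) :
      SubdivShape m d (j + 1) (.node1 a t)

/-- `t` is obtained from a binary tree of depth at most `d` by subdividing each
edge at most `m` times. -/
def IsSubdividedBinaryTree {α : Type} (d m : ℕ) (t : CTree α) : Prop :=
  SubdivShape m d m t

/-! ## Turing machines -/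

/-- Direction of a head move. -/
inductive Dir : Type
  | left
  | stay
  | right

def moveDir (i : ℤ) : Dir → ℤ
  | .left => i - 1
  | .stay => i
  | .right => i + 1

/-- The symbol of the (read-only) input tape at position `i` (`none` when the
head is outside of the input word). -/
def inputAt (x : List Bool) (i : ℤ) : Option Bool :=
  if 0 ≤ i then x[i.toNat]? else none

/-- Operations on the auxiliary stack: do nothing, push a symbol, or pop the
top element (only the top element of the stack may be accessed). -/
inductive StackOp (Γ : Type) : Type
  | none
  | push (s : Γ)
  | pop

def applyStackOp {Γ : Type} : StackOp Γ → List Γ → Option (List Γ)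
  | .none, st => some st
  | .push s, st => some (s :: st)
  | .pop, st => st.tail?

/-- A non-deterministic Turing machine with a read-only input tape, a work
tape, and an auxiliary stack (only the top element of the stack may be
inspected). -/
structure AuxTM where
  states : ℕ
  syms : ℕ
  start : Fin states
  accept : Fin states → Prop
  blank : Fin syms
  /-- Transition relation: from the current state, the input symbol under the
  input head, the work symbol under the work head and the top stack symbol
  (if any), nondeterministically choose a new state, a symbol to write, the
  two head movements, and a stack operation. -/
  trans : Fin states → Option Bool → Fin syms → Option (Fin syms) →
      (Fin states × Fin syms × Dir × Dir × StackOp (Fin syms)) → Prop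

namespace AuxTM

/-- A configuration: state, input head position, work tape contents, work head
position, and stack contents. -/
structure Cfg (M : AuxTM) where
  state : Fin M.states
  ipos : ℤ
  tape : ℤ → Fin M.syms
  wpos : ℤ
  stack : List (Fin M.syms)

/-- Initial configuration. -/
def init (M : AuxTM) : M.Cfg :=
  ⟨M.start, 0, fun _ => M.blank, 0, []⟩

/-- One computation step on input `x`. -/
def Step (M : AuxTM) (x : List Bool) (c c' : M.Cfg) : Prop :=
  ∃ q' w di dw op st',
    M.trans c.state (inputAt x c.ipos) (c.tape c.wpos) c.stack.head?
      (q', w, di, dw, op) ∧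
    applyStackOp op c.stack = some st' ∧
    c' = ⟨q', moveDir c.ipos di, Function.update c.tape c.wpos w,
      moveDir c.wpos dw, st'⟩

/-- The configuration uses at most `s` cells of the work tape. -/
def CfgOk (M : AuxTM) (s : ℕ) (c : M.Cfg) : Prop :=
  0 ≤ c.wpos ∧ c.wpos < (s : ℤ) ∧
    ∀ i : ℤ, (i < 0 ∨ (s : ℤ) ≤ i) → c.tape i = M.blank

/-- `M.AcceptsWith x P t c`: from configuration `c` on input `x` there is an
accepting run of at most `t` steps, all whose configurations satisfy the
invariant `P`. -/
inductive AcceptsWith (M : AuxTM) (x : List Bool) (P : M.Cfg → Prop) :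
    ℕ → M.Cfg → Prop
  | accept (t : ℕ) (c : M.Cfg) (hacc : M.accept c.state) (hP : P c) :
      AcceptsWith M x P t c
  | step (t : ℕ) (c c' : M.Cfg) (hP : P c) (hs : M.Step x c c')
      (h : AcceptsWith M x P t c') : AcceptsWith M x P (t + 1) c

end AuxTM

/-- An alternating Turing machine with a read-only input tape and a work tape.
States satisfying `univ` are universal: in them the machine makes a binary
co-non-deterministic step, given by the function `utrans`; in all other states
the machine makes (non-)deterministic steps given by the relation `trans`. -/
structure ATM where
  states : ℕ
  syms : ℕ
  start : Fin states
  accept : Fin states → Prop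
  univ : Fin states → Prop
  blank : Fin syms
  trans : Fin states → Option Bool → Fin syms →
      (Fin states × Fin syms × Dir × Dir) → Prop
  utrans : Fin states → Option Bool → Fin syms →
      ((Fin states × Fin syms × Dir × Dir) × (Fin states × Fin syms × Dir × Dir))

namespace ATM

/-- A configuration: state, input head position, work tape contents and work
head position. -/
structure Cfg (M : ATM) where
  state : Fin M.states
  ipos : ℤ
  tape : ℤ → Fin M.syms
  wpos : ℤ

/-- Initial configuration. -/
def init (M : ATM) : M.Cfg :=
  ⟨M.start, 0, fun _ => M.blank, 0⟩

/-- The configuration obtained by applying a transition. -/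
def applyTr (M : ATM) (c : M.Cfg) (tr : Fin M.states × Fin M.syms × Dir × Dir) :
    M.Cfg :=
  ⟨tr.1, moveDir c.ipos tr.2.2.1, Function.update c.tape c.wpos tr.2.1,
    moveDir c.wpos tr.2.2.2⟩

/-- The configuration uses at most `s` cells of the work tape. -/
def CfgOk (M : ATM) (s : ℕ) (c : M.Cfg) : Prop :=
  0 ≤ c.wpos ∧ c.wpos < (s : ℤ) ∧
    ∀ i : ℤ, (i < 0 ∨ (s : ℤ) ≤ i) → c.tape i = M.blank

/-- `M.ValidTree x t`: `t` is an accepting computation tree of `M` on input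
`x`: every leaf is an accepting configuration, unary nodes are
non-deterministic steps, and binary nodes are (binary) co-non-deterministic
steps. -/
inductive ValidTree (M : ATM) (x : List Bool) : CTree M.Cfg → Prop
  | leaf (c : M.Cfg) (h : M.accept c.state) : ValidTree M x (.leaf c)
  | estep (c : M.Cfg) (tr : Fin M.states × Fin M.syms × Dir × Dir)
      (t : CTree M.Cfg)
      (hne : ¬ M.univ c.state)
      (htr : M.trans c.state (inputAt x c.ipos) (c.tape c.wpos) tr)
      (hroot : t.root = M.applyTr c tr)
      (ht : ValidTree M x t) : ValidTree M x (.node1 c t)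
  | ustep (c : M.Cfg) (l r : CTree M.Cfg)
      (hu : M.univ c.state)
      (hl : l.root = M.applyTr c ((M.utrans c.state (inputAt x c.ipos) (c.tape c.wpos)).1))
      (hr : r.root = M.applyTr c ((M.utrans c.state (inputAt x c.ipos) (c.tape c.wpos)).2))
      (hlv : ValidTree M x l) (hrv : ValidTree M x r) :
      ValidTree M x (.node2 c l r)

end ATM

/-! ## Parameterized complexity classes -/

/-- A parameterized decision problem: a set of pairs of an input word and a
parameter value. -/
abbrev ParamProblem : Type := Set (List Bool × ℕ)

/-- A convenient version of the binary logarithm (positive for all `n`). -/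
def logb (n : ℕ) : ℕ := Nat.log 2 (n + 2)

/-- Characterisation (1): the problem is solved by a non-deterministic Turing
machine with an auxiliary stack in `f(k) · n^{O(1)}` time and `f(k) · log n`
space, for a computable `f`.  This class is XALP. -/
def SolvableAuxPDA (Q : ParamProblem) : Prop :=
  ∃ (M : AuxTM) (f : ℕ → ℕ) (c : ℕ), Computable f ∧
    ∀ x k, (x, k) ∈ Q ↔
      M.AcceptsWith x (M.CfgOk (f k * logb x.length))
        (f k * (x.length + 2) ^ c) M.init

/-- XALP: parameterized problems solvable by a non-deterministic Turing
machine with an auxiliary stack in `f(k) · n^{O(1)}` time and `f(k) · log n`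
space, for a computable function `f`. -/
def InXALP : ParamProblem → Prop := SolvableAuxPDA

/-- Characterisation (2): solvable by an alternating Turing machine with
`f(k) · log n` memory whose computation tree is a binary tree on
`f(k) · n^{O(1)}` nodes. -/
def SolvableATMTreeSize (Q : ParamProblem) : Prop :=
  ∃ (M : ATM) (f : ℕ → ℕ) (c : ℕ), Computable f ∧
    ∀ x k, (x, k) ∈ Q ↔
      ∃ t : CTree M.Cfg, t.root = M.init ∧ M.ValidTree x t ∧
        t.Forall (M.CfgOk (f k * logb x.length)) ∧
        t.size ≤ f k * (x.length + 2) ^ c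

/-- Characterisation (3): solvable by an alternating Turing machine with
`f(k) · log n` memory whose computation tree is obtained from a binary tree of
depth `O(log n) + f(k)` by subdividing each edge `f(k) · n^{O(1)}` times. -/
def SolvableATMSubdiv (Q : ParamProblem) : Prop :=
  ∃ (M : ATM) (f : ℕ → ℕ) (c C : ℕ), Computable f ∧
    ∀ x k, (x, k) ∈ Q ↔
      ∃ t : CTree M.Cfg, t.root = M.init ∧ M.ValidTree x t ∧
        t.Forall (M.CfgOk (f k * logb x.length)) ∧
        IsSubdividedBinaryTree (C * logb x.length + f k)
          (f k * (x.length + 2) ^ c) t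

/-- Characterisation (4): solvable by an alternating Turing machine with
`f(k) · log n` memory whose computation tree has size `f(k) · n^{O(1)}` and
uses at most `O(log n) + f(k)` co-non-deterministic steps per computation
path. -/
def SolvableATMFewCo (Q : ParamProblem) : Prop :=
  ∃ (M : ATM) (f : ℕ → ℕ) (c C : ℕ), Computable f ∧
    ∀ x k, (x, k) ∈ Q ↔
      ∃ t : CTree M.Cfg, t.root = M.init ∧ M.ValidTree x t ∧
        t.Forall (M.CfgOk (f k * logb x.length)) ∧
        t.size ≤ f k * (x.length + 2) ^ c ∧
        t.branchDepth ≤ C * logb x.length + f k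

/-! ## Space-bounded reductions (pl-reductions) -/

/-- A deterministic Turing machine transducer, with a read-only input tape, a
work tape and a write-only output tape (each step may append one output
bit). -/
structure Transducer where
  states : ℕ
  syms : ℕ
  start : Fin states
  halting : Fin states → Prop
  blank : Fin syms
  trans : Fin states → Option Bool → Fin syms →
      Fin states × Fin syms × Dir × Dir × Option Bool

namespace Transducer

structure Cfg (M : Transducer) where
  state : Fin M.states
  ipos : ℤ
  tape : ℤ → Fin M.syms
  wpos : ℤ
  out : List Bool

def init (M : Transducer) : M.Cfg :=
  ⟨M.start, 0, fun _ => M.blank, 0, []⟩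

def stepFn (M : Transducer) (x : List Bool) (c : M.Cfg) : M.Cfg :=
  match M.trans c.state (inputAt x c.ipos) (c.tape c.wpos) with
  | (q', w, di, dw, o) =>
    ⟨q', moveDir c.ipos di, Function.update c.tape c.wpos w,
      moveDir c.wpos dw, c.out ++ o.toList⟩

/-- The configuration uses at most `s` cells of the work tape (the write-only
output tape is not counted). -/
def CfgOk (M : Transducer) (s : ℕ) (c : M.Cfg) : Prop :=
  0 ≤ c.wpos ∧ c.wpos < (s : ℤ) ∧
    ∀ i : ℤ, (i < 0 ∨ (s : ℤ) ≤ i) → c.tape i = M.blank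

/-- On input `x`, `M` halts with output `y`, never using more than `s` work
tape cells. -/
def ComputesIn (M : Transducer) (x y : List Bool) (s : ℕ) : Prop :=
  ∃ n : ℕ, M.halting ((M.stepFn x)^[n] M.init).state ∧
    ((M.stepFn x)^[n] M.init).out = y ∧
    ∀ m ≤ n, M.CfgOk s ((M.stepFn x)^[m] M.init)

end Transducer

/-- A self-delimiting binary encoding of a natural number. -/
def encNat (n : ℕ) : List Bool :=
  (Nat.bits n).foldr (fun b acc => b :: b :: acc) [true, false]

/-- Encoding of the pair (input word, parameter) as a single word. -/
def encPairInput (x : List Bool) (k : ℕ) : List Bool := encNat k ++ x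

/-- `r` is a pl-reduction from `Q₁` to `Q₂`: it preserves membership, the
output parameter is bounded by a computable function `g` of the input
parameter, and `r` is computable by a deterministic transducer in space
`O(g(k) + log n)`. -/
def IsPlReduction (Q₁ Q₂ : ParamProblem) (r : List Bool × ℕ → List Bool × ℕ) :
    Prop :=
  (∀ p, p ∈ Q₁ ↔ r p ∈ Q₂) ∧
  ∃ g : ℕ → ℕ, Computable g ∧
    (∀ x k, (r (x, k)).2 ≤ g k) ∧
    ∃ (M : Transducer) (C : ℕ),
      ∀ x k, M.ComputesIn (encPairInput x k)
        (encPairInput (r (x, k)).1 (r (x, k)).2)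
        (g k + C * logb x.length + C)

def PlReducible (Q₁ Q₂ : ParamProblem) : Prop := ∃ r, IsPlReduction Q₁ Q₂ r

/-- `Q` is XALP-hard: every problem in XALP pl-reduces to `Q`. -/
def XALPHard (Q : ParamProblem) : Prop :=
  ∀ Q' : ParamProblem, InXALP Q' → PlReducible Q' Q

/-- `Q` is XALP-complete: it is in XALP and XALP-hard. -/
def XALPComplete (Q : ParamProblem) : Prop := InXALP Q ∧ XALPHard Q

/-! ## Encodings of structured inputs as binary words -/

def encBool (b : Bool) : List Bool := [b]

def encOption {α : Type} (e : α → List Bool) : Option α → List Bool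
  | Option.none => [false]
  | Option.some a => true :: e a

def encList {α : Type} (e : α → List Bool) (l : List α) : List Bool :=
  encNat l.length ++ (l.map e).foldr (· ++ ·) []

def encPair {α β : Type} (e₁ : α → List Bool) (e₂ : β → List Bool)
    (p : α × β) : List Bool :=
  e₁ p.1 ++ e₂ p.2

def encCTree {α : Type} (e : α → List Bool) : CTree α → List Bool
  | .leaf a => false :: false :: e a
  | .node1 a t => false :: true :: (e a ++ encCTree e t)
  | .node2 a l r => true :: false :: (e a ++ encCTree e l ++ encCTree e r)

/-! ## Graphs given by a number of vertices and a list of edges -/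

/-- A graph on vertex set `{0, …, n-1}` given by a list of edges. -/
structure GraphInst where
  n : ℕ
  edges : List (ℕ × ℕ)

/-- Adjacency in a graph given by an edge list. -/
def Adj (E : List (ℕ × ℕ)) (u v : ℕ) : Prop :=
  u ≠ v ∧ ((u, v) ∈ E ∨ (v, u) ∈ E)

instance (E : List (ℕ × ℕ)) (u v : ℕ) : Decidable (Adj E u v) := by
  unfold Adj; exact inferInstance

def GraphInst.WF (G : GraphInst) : Prop :=
  ∀ p ∈ G.edges, p.1 < G.n ∧ p.2 < G.n ∧ p.1 ≠ p.2

def encGraph (G : GraphInst) : List Bool :=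
  encNat G.n ++ encList (encPair encNat encNat) G.edges

/-! ## Tree decompositions and treewidth -/

/-- Count the nodes of the tree decomposition whose bag contains `v` and whose
parent bag does not contain `v` (the boolean argument indicates whether the
parent bag contains `v`; a connected occurrence set has at most one such
node). -/
def countEntries (v : ℕ) : CTree (List ℕ) → Bool → ℕ
  | .leaf a, pIn => if v ∈ a ∧ pIn = false then 1 else 0
  | .node1 a t, pIn =>
      (if v ∈ a ∧ pIn = false then 1 else 0) + countEntries v t (decide (v ∈ a))
  | .node2 a l r, pIn =>
      (if v ∈ a ∧ pIn = false then 1 else 0) +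
        countEntries v l (decide (v ∈ a)) + countEntries v r (decide (v ∈ a))

/-- `td` is a tree decomposition of `G`: bags cover all vertices, every edge is
contained in some bag, and the bags containing any fixed vertex form a
connected subtree. -/
def IsTreeDecomp (G : GraphInst) (td : CTree (List ℕ)) : Prop :=
  (∀ v < G.n, td.Any (fun bag => v ∈ bag)) ∧
  (∀ p ∈ G.edges, td.Any (fun bag => p.1 ∈ bag ∧ p.2 ∈ bag)) ∧
  (∀ v : ℕ, countEntries v td false ≤ 1) ∧
  td.Forall (fun bag => ∀ v ∈ bag, v < G.n)

/-- The width of the decomposition is at most `w` (bags have at most `w + 1`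
distinct vertices). -/
def WidthLe (td : CTree (List ℕ)) (w : ℕ) : Prop :=
  td.Forall (fun bag => bag.dedup.length ≤ w + 1)

def TreewidthLe (G : GraphInst) (w : ℕ) : Prop :=
  ∃ td, IsTreeDecomp G td ∧ WidthLe td w

/-- The treewidth of `G` equals `w`. -/
def TreewidthEq (G : GraphInst) (w : ℕ) : Prop :=
  TreewidthLe G w ∧ ∀ w' < w, ¬ TreewidthLe G w'

/-! ## Tree-Chained Multicolor Clique / Independent Set -/

/-- An instance of Tree-Chained Multicolor Clique (or Independent Set): a
binary tree each of whose nodes `i` carries `k` vertex classes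
`V_{i,1}, …, V_{i,k}`, and a graph (given by edges) on the union of all the
classes. -/
structure TCMCInstance where
  k : ℕ
  tree : CTree (List (List ℕ))
  edges : List (ℕ × ℕ)

def encTCMC (I : TCMCInstance) : List Bool :=
  encNat I.k ++ encCTree (encList (encList encNat)) I.tree ++
    encList (encPair encNat encNat) I.edges

/-- Well-formedness: every tree node carries exactly `k` pairwise disjoint
duplicate-free vertex classes. -/
def TCMCInstance.WF (I : TCMCInstance) : Prop :=
  I.tree.Forall (fun cls => cls.length = I.k ∧ (∀ X ∈ cls, X.Nodup) ∧
    List.Pairwise (fun X Y => ∀ v ∈ X, v ∉ Y) cls)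

/-- `ChainSol R p t`: one vertex can be chosen from each class of each node of
`t` so that any two choices in the same node or in adjacent nodes of the tree
are related by `R`; `p` is the list of choices made at the parent node (`[]`
for the root). -/
inductive ChainSol (R : ℕ → ℕ → Prop) : List ℕ → CTree (List (List ℕ)) → Prop
  | leaf (p c : List ℕ) (cls : List (List ℕ))
      (hc : List.Forall₂ (fun v X => v ∈ X) c cls)
      (hin : c.Pairwise R)
      (hcross : ∀ u ∈ p, ∀ v ∈ c, R u v) :
      ChainSol R p (.leaf cls)
  | node1 (p c : List ℕ) (cls : List (List ℕ)) (t : CTree (List (List ℕ)))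
      (hc : List.Forall₂ (fun v X => v ∈ X) c cls)
      (hin : c.Pairwise R)
      (hcross : ∀ u ∈ p, ∀ v ∈ c, R u v)
      (ht : ChainSol R c t) :
      ChainSol R p (.node1 cls t)
  | node2 (p c : List ℕ) (cls : List (List ℕ)) (l r : CTree (List (List ℕ)))
      (hc : List.Forall₂ (fun v X => v ∈ X) c cls)
      (hin : c.Pairwise R)
      (hcross : ∀ u ∈ p, ∀ v ∈ c, R u v)
      (hl : ChainSol R c l) (hr : ChainSol R c r) :
      ChainSol R p (.node2 cls l r)

/-- The instance has a tree-chained multicolor clique. -/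
def TCMCInstance.HasClique (I : TCMCInstance) : Prop :=
  ChainSol (Adj I.edges) [] I.tree

/-- The instance has a tree-chained multicolor independent set. -/
def TCMCInstance.HasIndepSet (I : TCMCInstance) : Prop :=
  ChainSol (fun u v => ¬ Adj I.edges u v) [] I.tree

/-- The parameterized problem Tree-Chained Multicolor Clique. -/
def TCMCLang : ParamProblem :=
  {p | ∃ I : TCMCInstance, encTCMC I = p.1 ∧ I.k = p.2 ∧ I.WF ∧ I.HasClique}

/-- The parameterized problem Tree-Chained Multicolor Independent Set. -/
def TCMISLang : ParamProblem :=
  {p | ∃ I : TCMCInstance, encTCMC I = p.1 ∧ I.k = p.2 ∧ I.WF ∧ I.HasIndepSet}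

/-! ## List Coloring and Pre-coloring Extension parameterized by treewidth -/

structure ListColInst where
  graph : GraphInst
  lists : List (List ℕ)

def ListColInst.WF (I : ListColInst) : Prop :=
  I.graph.WF ∧ I.lists.length = I.graph.n

/-- There is a proper coloring choosing for every vertex a color from its
list. -/
def ListColInst.HasColoring (I : ListColInst) : Prop :=
  ∃ col : List ℕ, List.Forall₂ (fun c L => c ∈ L) col I.lists ∧
    ∀ p ∈ I.graph.edges, col[p.1]? ≠ col[p.2]?

def encListCol (I : ListColInst) : List Bool :=
  encGraph I.graph ++ encList (encList encNat) I.lists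

/-- List Coloring, parameterized by the treewidth of the input graph. -/
def ListColoringTW : ParamProblem :=
  {p | ∃ I : ListColInst, encListCol I = p.1 ∧ I.WF ∧
    TreewidthEq I.graph p.2 ∧ I.HasColoring}

structure PrecolInst where
  graph : GraphInst
  numColors : ℕ
  pre : List (Option ℕ)

def PrecolInst.WF (I : PrecolInst) : Prop :=
  I.graph.WF ∧ I.pre.length = I.graph.n ∧
  (∀ c ∈ I.pre, ∀ a ∈ c, a < I.numColors) ∧
  (∀ p ∈ I.graph.edges, ∀ a : ℕ,
    I.pre[p.1]? = some (some a) → I.pre[p.2]? ≠ some (some a))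

/-- The given precoloring extends to a proper coloring of the whole graph with
the given number of colors. -/
def PrecolInst.HasExtension (I : PrecolInst) : Prop :=
  ∃ col : List ℕ, col.length = I.graph.n ∧ (∀ a ∈ col, a < I.numColors) ∧
    (∀ (v : ℕ) (a : ℕ), I.pre[v]? = some (some a) → col[v]? = some a) ∧
    ∀ p ∈ I.graph.edges, col[p.1]? ≠ col[p.2]?

def encPrecol (I : PrecolInst) : List Bool :=
  encGraph I.graph ++ encNat I.numColors ++ encList (encOption encNat) I.pre

/-- Pre-coloring Extension, parameterized by the treewidth of the input
graph. -/
def PrecolExtTW : ParamProblem :=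
  {p | ∃ I : PrecolInst, encPrecol I = p.1 ∧ I.WF ∧
    TreewidthEq I.graph p.2 ∧ I.HasExtension}

/-! ## Tree-chained satisfiability problems -/

/-- The variable scopes allowed for clauses: the variables of a single tree
node, or of two adjacent tree nodes. -/
def treeScopes : CTree (List ℕ) → List (List ℕ)
  | .leaf a => [a]
  | .node1 a t => [a, a ++ t.root] ++ treeScopes t
  | .node2 a l r => [a, a ++ l.root, a ++ r.root] ++ treeScopes l ++ treeScopes r

/-- Tree-Chained Weighted CNF-Satisfiability.  A literal is a pair of a sign
(`true` = positive) and a variable. -/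
structure TCSatInst where
  k : ℕ
  tree : CTree (List ℕ)
  clauses : List (List (Bool × ℕ))

def TCSatInst.WF (I : TCSatInst) : Prop :=
  I.tree.Forall List.Nodup ∧
  ∀ C ∈ I.clauses, ∃ s ∈ treeScopes I.tree, ∀ lit ∈ C, lit.2 ∈ s

/-- Some assignment sets at most `k` variables of each `X_i` to true and
satisfies all clauses. -/
def TCSatInst.HasAssignment (I : TCSatInst) : Prop :=
  ∃ σ : ℕ → Bool, I.tree.Forall (fun X => X.countP σ ≤ I.k) ∧
    ∀ C ∈ I.clauses, ∃ lit ∈ C, σ lit.2 = lit.1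

def encTCSat (I : TCSatInst) : List Bool :=
  encNat I.k ++ encCTree (encList encNat) I.tree ++
    encList (encList (encPair encBool encNat)) I.clauses

def TCWeightedCNFSat : ParamProblem :=
  {p | ∃ I : TCSatInst, encTCSat I = p.1 ∧ I.k = p.2 ∧ I.WF ∧ I.HasAssignment}

/-- Partitioned tree-chained satisfiability instance: each tree node carries a
partition of its variable set into `k` parts; all clause literals have the
same sign, so clauses are just lists of variables. -/
structure PartTCSatInst where
  k : ℕ
  tree : CTree (List (List ℕ))
  clauses : List (List ℕ)

def PartTCSatInst.WF (I : PartTCSatInst) : Prop :=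
  I.tree.Forall (fun parts => parts.length = I.k ∧ (∀ X ∈ parts, X.Nodup) ∧
    List.Pairwise (fun X Y => ∀ v ∈ X, v ∉ Y) parts) ∧
  ∀ C ∈ I.clauses, ∃ s ∈ treeScopes (I.tree.map List.flatten), ∀ v ∈ C, v ∈ s

/-- Some assignment sets exactly one variable of each part to true and
satisfies all clauses of positive literals. -/
def PartTCSatInst.HasPositiveAssignment (I : PartTCSatInst) : Prop :=
  ∃ σ : ℕ → Bool,
    I.tree.Forall (fun parts => ∀ X ∈ parts, X.countP σ = 1) ∧
    ∀ C ∈ I.clauses, ∃ v ∈ C, σ v = true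

/-- Some assignment sets exactly one variable of each part to true and
satisfies all clauses of negative literals. -/
def PartTCSatInst.HasNegativeAssignment (I : PartTCSatInst) : Prop :=
  ∃ σ : ℕ → Bool,
    I.tree.Forall (fun parts => ∀ X ∈ parts, X.countP σ = 1) ∧
    ∀ C ∈ I.clauses, ∃ v ∈ C, σ v = false

def encPartTCSat (I : PartTCSatInst) : List Bool :=
  encNat I.k ++ encCTree (encList (encList encNat)) I.tree ++
    encList (encList encNat) I.clauses

def PosPartTCWeightedCNFSat : ParamProblem :=
  {p | ∃ I : PartTCSatInst, encPartTCSat I = p.1 ∧ I.k = p.2 ∧ I.WF ∧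
    I.HasPositiveAssignment}

def NegPartTCWeightedCNFSat : ParamProblem :=
  {p | ∃ I : PartTCSatInst, encPartTCSat I = p.1 ∧ I.k = p.2 ∧ I.WF ∧
    I.HasNegativeAssignment}

/-! ## Set-based description of tree-chained multicolor independent sets -/

def ordPairs {α : Type} : List α → List (α × α)
  | [] => []
  | a :: l => l.map (fun b => (a, b)) ++ ordPairs l

def allPairs {α β : Type} (l₁ : List α) (l₂ : List β) : List (α × β) :=
  (l₁.map (fun a => l₂.map (fun b => (a, b)))).foldr (· ++ ·) []

/-- All pairs of distinct classes of the same tree node, and all pairs of a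
class of a node and a class of one of its children. -/
def relatedPairs : CTree (List (List ℕ)) → List (List ℕ × List ℕ)
  | .leaf a => ordPairs a
  | .node1 a t => ordPairs a ++ allPairs a t.root ++ relatedPairs t
  | .node2 a l r => ordPairs a ++ allPairs a l.root ++ allPairs a r.root ++
      relatedPairs l ++ relatedPairs r

/-- The edges of the graph only go between related distinct classes. -/
def EdgesRespectStructure (I : TCMCInstance) : Prop :=
  ∀ p ∈ I.edges, ∃ q ∈ relatedPairs I.tree,
    (p.1 ∈ q.1 ∧ p.2 ∈ q.2) ∨ (p.1 ∈ q.2 ∧ p.2 ∈ q.1)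

/-- `U` contains exactly one vertex of every class `V_{i,j}`. -/
def PickOnePerClass (tree : CTree (List (List ℕ))) (U : Finset ℕ) : Prop :=
  tree.Forall (fun parts => ∀ X ∈ parts, X.countP (fun v => decide (v ∈ U)) = 1)

/-- `U` is a tree-chained multicolor independent set of the instance `I`. -/
def SetIsTCMIS (I : TCMCInstance) (U : Finset ℕ) : Prop :=
  PickOnePerClass I.tree U ∧
  ∀ q ∈ relatedPairs I.tree, ∀ u ∈ q.1, ∀ v ∈ q.2,
    u ∈ U → v ∈ U → ¬ Adj I.edges u v

/-! ## Problems parameterized by logarithmic treewidth -/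

def HasIndepSetOfSize (G : GraphInst) (W : ℕ) : Prop :=
  ∃ S : Finset ℕ, (∀ v ∈ S, v < G.n) ∧ W ≤ S.card ∧
    ∀ p ∈ G.edges, ¬ (p.1 ∈ S ∧ p.2 ∈ S)

def HasVertexCoverOfSize (G : GraphInst) (L : ℕ) : Prop :=
  ∃ S : Finset ℕ, (∀ v ∈ S, v < G.n) ∧ S.card ≤ L ∧
    ∀ p ∈ G.edges, p.1 ∈ S ∨ p.2 ∈ S

def HasDominatingSetOfSize (G : GraphInst) (K : ℕ) : Prop :=
  ∃ S : Finset ℕ, (∀ v ∈ S, v < G.n) ∧ S.card ≤ K ∧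
    ∀ v < G.n, v ∉ S → ∃ u ∈ S, Adj G.edges u v

/-- Instance of a problem on a graph given together with a tree decomposition
and a numerical target. -/
structure TDGraphInst where
  graph : GraphInst
  td : CTree (List ℕ)
  target : ℕ

def encTDGraph (I : TDGraphInst) : List Bool :=
  encGraph I.graph ++ encCTree (encList encNat) I.td ++ encNat I.target

/-- Independent Set parameterized by logarithmic treewidth: the instance comes
with a tree decomposition of width at most `k log n`. -/
def IndependentSetLogTW : ParamProblem :=
  {p | ∃ I : TDGraphInst, encTDGraph I = p.1 ∧ I.graph.WF ∧
    IsTreeDecomp I.graph I.td ∧ WidthLe I.td (p.2 * Nat.log 2 I.graph.n) ∧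
    HasIndepSetOfSize I.graph I.target}

/-- Vertex Cover parameterized by logarithmic treewidth. -/
def VertexCoverLogTW : ParamProblem :=
  {p | ∃ I : TDGraphInst, encTDGraph I = p.1 ∧ I.graph.WF ∧
    IsTreeDecomp I.graph I.td ∧ WidthLe I.td (p.2 * Nat.log 2 I.graph.n) ∧
    HasVertexCoverOfSize I.graph I.target}

/-- Dominating Set parameterized by logarithmic treewidth. -/
def DominatingSetLogTW : ParamProblem :=
  {p | ∃ I : TDGraphInst, encTDGraph I = p.1 ∧ I.graph.WF ∧
    IsTreeDecomp I.graph I.td ∧ WidthLe I.td (p.2 * Nat.log 2 I.graph.n) ∧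
    HasDominatingSetOfSize I.graph I.target}

/-- Instance of Red-Blue Dominating Set with a tree decomposition: `blue`
records the color of each vertex (`true` = blue). -/
structure RBTDInst where
  graph : GraphInst
  blue : List Bool
  td : CTree (List ℕ)
  target : ℕ

def RBTDInst.WF (I : RBTDInst) : Prop :=
  I.graph.WF ∧ I.blue.length = I.graph.n

/-- There is a set of at most `target` blue vertices dominating all red
vertices. -/
def RBTDInst.HasRBDS (I : RBTDInst) : Prop :=
  ∃ S : Finset ℕ, (∀ v ∈ S, v < I.graph.n ∧ I.blue[v]? = some true) ∧
    S.card ≤ I.target ∧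
    ∀ v < I.graph.n, I.blue[v]? = some false → ∃ u ∈ S, Adj I.graph.edges u v

def encRBTD (I : RBTDInst) : List Bool :=
  encGraph I.graph ++ encList encBool I.blue ++
    encCTree (encList encNat) I.td ++ encNat I.target

/-- Red-Blue Dominating Set parameterized by logarithmic treewidth. -/
def RedBlueDominatingSetLogTW : ParamProblem :=
  {p | ∃ I : RBTDInst, encRBTD I = p.1 ∧ I.WF ∧
    IsTreeDecomp I.graph I.td ∧ WidthLe I.td (p.2 * Nat.log 2 I.graph.n) ∧
    I.HasRBDS}

/-! ## Cliquewidth, Max Cut and Maximum Regular Induced Subgraph -/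

/-- Cliquewidth expressions with `w` labels. -/
inductive CWExpr (w : ℕ) : Type
  | vert (l : Fin w)
  | union (e₁ e₂ : CWExpr w)
  | addEdges (i j : Fin w) (e : CWExpr w)
  | relabel (i j : Fin w) (e : CWExpr w)

/-- Evaluate a cliquewidth expression to a labelled graph: a list of labels of
the vertices `0, …, len - 1`, and a list of edges. -/
def CWExpr.eval {w : ℕ} : CWExpr w → List (Fin w) × List (ℕ × ℕ)
  | .vert l => ([l], [])
  | .union e₁ e₂ =>
      let r₁ := e₁.eval
      let r₂ := e₂.eval
      (r₁.1 ++ r₂.1,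
        r₁.2 ++ r₂.2.map (fun p => (p.1 + r₁.1.length, p.2 + r₁.1.length)))
  | .addEdges i j e =>
      let r := e.eval
      if i = j then r
      else
        (r.1, r.2 ++ ((List.range r.1.length).map (fun u =>
          (List.range r.1.length).filterMap (fun v =>
            if r.1[u]? = some i ∧ r.1[v]? = some j ∧ u ≠ v then some (u, v)
            else none))).foldr (· ++ ·) [])
  | .relabel i j e =>
      let r := e.eval
      (r.1.map (fun l => if l = i then j else l), r.2)

/-- The graph `G` can be constructed by a cliquewidth expression with `w`
labels (up to isomorphism). -/
def CliquewidthLe (G : GraphInst) (w : ℕ) : Prop :=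
  ∃ e : CWExpr w, (e.eval).1.length = G.n ∧
    ∃ π : Fin G.n ≃ Fin G.n, ∀ u v : Fin G.n,
      Adj G.edges u.val v.val ↔ Adj (e.eval).2 (π u).val (π v).val

def CliquewidthEq (G : GraphInst) (w : ℕ) : Prop :=
  CliquewidthLe G w ∧ ∀ w' < w, ¬ CliquewidthLe G w'

/-- Normalized well-formedness for edge lists used in counting problems. -/
def GraphInst.WFcut (G : GraphInst) : Prop :=
  G.edges.Nodup ∧ ∀ p ∈ G.edges, p.1 < p.2 ∧ p.2 < G.n

/-- There is a partition of the vertices into two parts with at least `W`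
crossing edges. -/
def HasCutOfSize (G : GraphInst) (W : ℕ) : Prop :=
  ∃ S : Finset ℕ,
    W ≤ G.edges.countP (fun p => decide (p.1 ∈ S) != decide (p.2 ∈ S))

/-- There is an induced subgraph on at least `W` vertices that is regular. -/
def HasRegularInducedSubgraph (G : GraphInst) (W : ℕ) : Prop :=
  ∃ S : Finset ℕ, (∀ v ∈ S, v < G.n) ∧ W ≤ S.card ∧
    ∃ d : ℕ, ∀ v ∈ S, (S.filter (fun u => Adj G.edges u v)).card = d

/-- Instance of a graph problem with a numerical target. -/
structure TargetGraphInst where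
  graph : GraphInst
  target : ℕ

def encTargetGraph (I : TargetGraphInst) : List Bool :=
  encGraph I.graph ++ encNat I.target

/-- Max Cut parameterized by the cliquewidth of the input graph. -/
def MaxCutCW : ParamProblem :=
  {p | ∃ I : TargetGraphInst, encTargetGraph I = p.1 ∧ I.graph.WFcut ∧
    CliquewidthEq I.graph p.2 ∧ HasCutOfSize I.graph I.target}

/-- Maximum Regular Induced Subgraph parameterized by the cliquewidth of the
input graph. -/
def MaxRegularInducedSubgraphCW : ParamProblem :=
  {p | ∃ I : TargetGraphInst, encTargetGraph I = p.1 ∧ I.graph.WFcut ∧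
    CliquewidthEq I.graph p.2 ∧ HasRegularInducedSubgraph I.graph I.target}

/-! ### Acceptance games -/

/-- `M.Acc x ok s b c`: from `c`, the machine `M` has an accepting computation tree on input `x`
with at most `s` nodes, at most `b` binary branchings on every path, and all of whose
configurations satisfy `ok`. -/
inductive ATM.Acc (M : ATM) (x : List Bool) (ok : M.Cfg → Prop) : ℕ → ℕ → M.Cfg → Prop
  | leaf (s b : ℕ) (c : M.Cfg) (h : M.accept c.state) (hok : ok c) : Acc M x ok (s + 1) b c
  | estep (s b : ℕ) (c : M.Cfg) (tr : Fin M.states × Fin M.syms × Dir × Dir) (hok : ok c)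
      (hne : ¬ M.univ c.state)
      (htr : M.trans c.state (inputAt x c.ipos) (c.tape c.wpos) tr)
      (h : Acc M x ok s b (M.applyTr c tr)) : Acc M x ok (s + 1) b c
  | ustep (s₁ s₂ b : ℕ) (c : M.Cfg) (hok : ok c) (hu : M.univ c.state)
      (hl : Acc M x ok s₁ b
        (M.applyTr c ((M.utrans c.state (inputAt x c.ipos) (c.tape c.wpos)).1)))
      (hr : Acc M x ok s₂ b
        (M.applyTr c ((M.utrans c.state (inputAt x c.ipos) (c.tape c.wpos)).2))) :
      Acc M x ok (s₁ + s₂ + 1) (b + 1) c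

theorem ATM.Acc.mono {M : ATM} {x : List Bool} {ok : M.Cfg → Prop} {s b : ℕ} {c : M.Cfg}
    (h : M.Acc x ok s b c) : ∀ {s' b' : ℕ}, s ≤ s' → b ≤ b' → M.Acc x ok s' b' c := by
  induction h with
  | leaf s b c h hok =>
    intro s' b' hs hb
    obtain ⟨u, rfl⟩ := Nat.exists_eq_add_of_le' hs
    exact .leaf (u + s) b' c h hok
  | estep s b c tr hok hne htr h ih =>
    intro s' b' hs hb
    obtain ⟨u, rfl⟩ := Nat.exists_eq_add_of_le' hs
    exact .estep (u + s) b' c tr hok hne htr (ih (by omega) hb)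
  | ustep s₁ s₂ b c hok hu hl hr ihl ihr =>
    intro s' b' hs hb
    obtain ⟨u, rfl⟩ := Nat.exists_eq_add_of_le' hs
    obtain ⟨w, rfl⟩ := Nat.exists_eq_add_of_le' hb
    have := ATM.Acc.ustep (u + s₁) s₂ (w + b) c hok hu (ihl (by omega) (by omega))
      (ihr le_rfl (by omega))
    convert this using 1 <;> omega

theorem ATM.acc_iff_tree (M : ATM) (x : List Bool) (ok : M.Cfg → Prop) (s b : ℕ) (c : M.Cfg) :
    M.Acc x ok s b c ↔ ∃ t : CTree M.Cfg, t.root = c ∧ M.ValidTree x t ∧ t.Forall ok ∧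
      t.size ≤ s ∧ t.branchDepth ≤ b := by
  constructor
  · intro h
    induction h with
    | leaf s b c h hok =>
      exact ⟨.leaf c, rfl, .leaf c h, hok, by simp [CTree.size], by simp [CTree.branchDepth]⟩
    | estep s b c tr hok hne htr h ih =>
      obtain ⟨t, h1, h2, h3, h4, h5⟩ := ih
      exact ⟨.node1 c t, rfl, .estep c tr t hne htr h1 h2, ⟨hok, h3⟩,
        by simpa [CTree.size] using h4, by simpa [CTree.branchDepth] using h5⟩
    | ustep s₁ s₂ b c hok hu hl hr ihl ihr =>
      obtain ⟨t, h1, h2, h3, h4, h5⟩ := ihl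
      obtain ⟨t', h1', h2', h3', h4', h5'⟩ := ihr
      exact ⟨.node2 c t t', rfl, .ustep c t t' hu h1 h1' h2 h2', ⟨hok, h3, h3'⟩,
        by simp only [CTree.size]; omega, by simp only [CTree.branchDepth]; omega⟩
  · rintro ⟨t, rfl, hv, hf, hs, hb⟩
    induction hv generalizing s b with
    | leaf c h =>
      exact (ATM.Acc.leaf 0 b c h hf).mono (by simpa [CTree.size] using hs) le_rfl
    | estep c tr t hne htr hroot ht ih =>
      have := ih (s - 1) b hf.2 (by simp only [CTree.size] at hs; omega) hb
      rw [hroot] at this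
      exact (ATM.Acc.estep _ b c tr hf.1 hne htr this).mono
        (by simp only [CTree.size] at hs; omega) le_rfl
    | ustep c l r hu hl hr hlv hrv ihl ihr =>
      simp only [CTree.size, CTree.branchDepth] at hs hb
      have h1 := ihl l.size (b - 1) hf.2.1 le_rfl (by omega)
      have h2 := ihr r.size (b - 1) hf.2.2 le_rfl (by omega)
      rw [hl] at h1
      rw [hr] at h2
      exact (ATM.Acc.ustep _ _ _ c hf.1 hu h1 h2).mono hs (by omega)

/-- `M.AccS x ok m d j c`: from `c`, the machine `M` has an accepting computation tree on input `x`
all of whose configurations satisfy `ok` and which has the shape `SubdivShape m d j`. -/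
inductive ATM.AccS (M : ATM) (x : List Bool) (ok : M.Cfg → Prop) (m : ℕ) :
    ℕ → ℕ → M.Cfg → Prop
  | leaf (d j : ℕ) (c : M.Cfg) (h : M.accept c.state) (hok : ok c) : AccS M x ok m d j c
  | estep (d j : ℕ) (c : M.Cfg) (tr : Fin M.states × Fin M.syms × Dir × Dir) (hok : ok c)
      (hne : ¬ M.univ c.state)
      (htr : M.trans c.state (inputAt x c.ipos) (c.tape c.wpos) tr)
      (h : AccS M x ok m d j (M.applyTr c tr)) : AccS M x ok m d (j + 1) c
  | ustep (d j : ℕ) (c : M.Cfg) (hok : ok c) (hu : M.univ c.state)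
      (hl : AccS M x ok m d m
        (M.applyTr c ((M.utrans c.state (inputAt x c.ipos) (c.tape c.wpos)).1)))
      (hr : AccS M x ok m d m
        (M.applyTr c ((M.utrans c.state (inputAt x c.ipos) (c.tape c.wpos)).2))) :
      AccS M x ok m (d + 1) j c

theorem ATM.accS_iff_tree (M : ATM) (x : List Bool) (ok : M.Cfg → Prop) (m d j : ℕ) (c : M.Cfg) :
    M.AccS x ok m d j c ↔ ∃ t : CTree M.Cfg, t.root = c ∧ M.ValidTree x t ∧ t.Forall ok ∧
      SubdivShape m d j t := by
  constructor
  · intro h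
    induction h with
    | leaf d j c h hok => exact ⟨.leaf c, rfl, .leaf c h, hok, .leaf d j c⟩
    | estep d j c tr hok hne htr h ih =>
      obtain ⟨t, h1, h2, h3, h4⟩ := ih
      exact ⟨.node1 c t, rfl, .estep c tr t hne htr h1 h2, ⟨hok, h3⟩, .unary d j c t h4⟩
    | ustep d j c hok hu hl hr ihl ihr =>
      obtain ⟨t, h1, h2, h3, h4⟩ := ihl
      obtain ⟨t', h1', h2', h3', h4'⟩ := ihr
      exact ⟨.node2 c t t', rfl, .ustep c t t' hu h1 h1' h2 h2', ⟨hok, h3, h3'⟩,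
        .branch d j c t t' h4 h4'⟩
  · rintro ⟨t, rfl, hv, hf, hs⟩
    induction hs with
    | leaf d j a =>
      cases hv with
      | leaf c h => exact .leaf d j a h hf
    | branch d j a l r hl hr ihl ihr =>
      cases hv with
      | ustep c l r hu hl' hr' hlv hrv =>
        have h1 := ihl hlv hf.2.1
        have h2 := ihr hrv hf.2.2
        rw [hl'] at h1
        rw [hr'] at h2
        exact .ustep d j a hf.1 hu h1 h2
    | unary d j a t h ih =>
      cases hv with
      | estep c tr t hne htr hroot ht =>
        have h1 := ih ht hf.2
        rw [hroot] at h1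
        exact .estep d j a tr hf.1 hne htr h1

theorem ATM.AccS.mono {M : ATM} {x : List Bool} {ok ok' : M.Cfg → Prop} {m m' d j : ℕ} {c : M.Cfg}
    (hok : ∀ c, ok c → ok' c) (hm : m ≤ m') (h : M.AccS x ok m d j c) :
    ∀ {d' j' : ℕ}, d ≤ d' → j ≤ j' → M.AccS x ok' m' d' j' c := by
  induction h with
  | leaf d j c h hk => intro d' j' _ _; exact .leaf d' j' c h (hok _ hk)
  | estep d j c tr hk hne htr h ih =>
    intro d' j' hd hj
    obtain ⟨u, rfl⟩ := Nat.exists_eq_add_of_le' hj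
    exact .estep d' (u + j) c tr (hok _ hk) hne htr (ih hd (by omega))
  | ustep d j c hk hu hl hr ihl ihr =>
    intro d' j' hd hj
    obtain ⟨u, rfl⟩ := Nat.exists_eq_add_of_le' hd
    exact .ustep (u + d) j' c (hok _ hk) hu (ihl (by omega) hm) (ihr (by omega) hm)

/-! ### Alternating machines over arbitrary finite types -/

/-- An alternating machine with state type `S` and tape alphabet `A`. -/
structure GM (S A : Type) where
  start : S
  accept : S → Prop
  univ : S → Prop
  blank : A
  trans : S → Option Bool → A → (S × A × Dir × Dir) → Prop
  utrans : S → Option Bool → A → (S × A × Dir × Dir) × (S × A × Dir × Dir)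

/-- Configurations of a `GM`. -/
structure GC (S A : Type) where
  state : S
  ipos : ℤ
  tape : ℤ → A
  wpos : ℤ

/-- The configuration obtained by applying a transition. -/
def GC.app {S A : Type} (c : GC S A) (tr : S × A × Dir × Dir) : GC S A :=
  ⟨tr.1, moveDir c.ipos tr.2.2.1, Function.update c.tape c.wpos tr.2.1, moveDir c.wpos tr.2.2.2⟩

/-- The analogue of `ATM.Acc` for a `GM`. -/
inductive GM.Acc {S A : Type} (M : GM S A) (x : List Bool) (ok : GC S A → Prop) :
    ℕ → ℕ → GC S A → Prop
  | leaf (s b : ℕ) (c : GC S A) (h : M.accept c.state) (hok : ok c) : Acc M x ok (s + 1) b c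
  | estep (s b : ℕ) (c : GC S A) (tr : S × A × Dir × Dir) (hok : ok c)
      (hne : ¬ M.univ c.state)
      (htr : M.trans c.state (inputAt x c.ipos) (c.tape c.wpos) tr)
      (h : Acc M x ok s b (c.app tr)) : Acc M x ok (s + 1) b c
  | ustep (s₁ s₂ b : ℕ) (c : GC S A) (hok : ok c) (hu : M.univ c.state)
      (hl : Acc M x ok s₁ b (c.app (M.utrans c.state (inputAt x c.ipos) (c.tape c.wpos)).1))
      (hr : Acc M x ok s₂ b (c.app (M.utrans c.state (inputAt x c.ipos) (c.tape c.wpos)).2)) :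
      Acc M x ok (s₁ + s₂ + 1) (b + 1) c

theorem GM.Acc.mono {S A : Type} {M : GM S A} {x : List Bool} {ok ok' : GC S A → Prop}
    (hk : ∀ c, ok c → ok' c) {s b : ℕ} {c : GC S A}
    (h : M.Acc x ok s b c) : ∀ {s' b' : ℕ}, s ≤ s' → b ≤ b' → M.Acc x ok' s' b' c := by
  induction h with
  | leaf s b c h hok =>
    intro s' b' hs hb
    obtain ⟨u, rfl⟩ := Nat.exists_eq_add_of_le' hs
    exact .leaf (u + s) b' c h (hk _ hok)
  | estep s b c tr hok hne htr h ih =>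
    intro s' b' hs hb
    obtain ⟨u, rfl⟩ := Nat.exists_eq_add_of_le' hs
    exact .estep (u + s) b' c tr (hk _ hok) hne htr (ih (by omega) hb)
  | ustep s₁ s₂ b c hok hu hl hr ihl ihr =>
    intro s' b' hs hb
    obtain ⟨u, rfl⟩ := Nat.exists_eq_add_of_le' hs
    obtain ⟨w, rfl⟩ := Nat.exists_eq_add_of_le' hb
    have := GM.Acc.ustep (u + s₁) s₂ (w + b) c (hk _ hok) hu (ihl (by omega) (by omega))
      (ihr le_rfl (by omega))
    convert this using 1 <;> omega

/-- Transport of a transition along enumerations of states and symbols. -/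
def codeTr {S A : Type} {n k : ℕ} (e : S ≃ Fin n) (e' : A ≃ Fin k) (tr : S × A × Dir × Dir) :
    Fin n × Fin k × Dir × Dir :=
  (e tr.1, e' tr.2.1, tr.2.2)

/-- The `ATM` obtained from a `GM` by enumerating its states and symbols. -/
def GM.toATM {S A : Type} {n k : ℕ} (M : GM S A) (e : S ≃ Fin n) (e' : A ≃ Fin k) : ATM where
  states := n
  syms := k
  start := e M.start
  accept q := M.accept (e.symm q)
  univ q := M.univ (e.symm q)
  blank := e' M.blank
  trans q b a tr := M.trans (e.symm q) b (e'.symm a) (e.symm tr.1, e'.symm tr.2.1, tr.2.2)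
  utrans q b a :=
    (codeTr e e' (M.utrans (e.symm q) b (e'.symm a)).1,
      codeTr e e' (M.utrans (e.symm q) b (e'.symm a)).2)

/-- Transport of configurations to `GM.toATM`. -/
def GM.code {S A : Type} {n k : ℕ} (M : GM S A) (e : S ≃ Fin n) (e' : A ≃ Fin k) (c : GC S A) :
    (M.toATM e e').Cfg :=
  ⟨e c.state, c.ipos, fun i => e' (c.tape i), c.wpos⟩

theorem GM.code_app {S A : Type} {n k : ℕ} (M : GM S A) (e : S ≃ Fin n) (e' : A ≃ Fin k)
    (c : GC S A) (tr : S × A × Dir × Dir) :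
    M.code e e' (c.app tr) = (M.toATM e e').applyTr (M.code e e' c) (codeTr e e' tr) := by
  simp only [GM.code, GC.app, ATM.applyTr, codeTr]
  congr 1
  funext i
  by_cases h : i = c.wpos
  · subst h
    rw [Function.update_self]
    exact (Function.update_self (β := fun _ => Fin k) _ _ _).symm
  · rw [Function.update_of_ne h]
    exact (Function.update_of_ne (β := fun _ => Fin k) h (e' tr.2.1) (fun i => e' (c.tape i))).symm

theorem GM.acc_code_iff {S A : Type} {n k : ℕ} (M : GM S A) (e : S ≃ Fin n) (e' : A ≃ Fin k)
    (x : List Bool) (ok : (M.toATM e e').Cfg → Prop) (s b : ℕ) (c : GC S A) :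
    (M.toATM e e').Acc x ok s b (M.code e e' c) ↔
      M.Acc x (fun c => ok (M.code e e' c)) s b c := by
  constructor
  · intro h
    generalize hc : M.code e e' c = cc at h
    induction h generalizing c with
    | leaf s b cc h hok =>
      subst hc
      exact .leaf s b c (by simpa [GM.toATM, GM.code] using h) hok
    | estep s b cc tr hok hne htr h ih =>
      subst hc
      refine .estep s b c (e.symm tr.1, e'.symm tr.2.1, tr.2.2) hok
        (by simpa [GM.toATM, GM.code] using hne) (by simpa [GM.toATM, GM.code] using htr) ?_
      refine ih _ ?_
      rw [GM.code_app]
      have htr' : codeTr e e' (e.symm tr.1, e'.symm tr.2.1, tr.2.2) = tr :=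
        Prod.ext (e.apply_symm_apply _) (Prod.ext (e'.apply_symm_apply _) rfl)
      exact congrArg ((M.toATM e e').applyTr (M.code e e' c)) htr'
    | ustep s₁ s₂ b cc hok hu hl hr ihl ihr =>
      subst hc
      refine .ustep s₁ s₂ b c hok (by simpa [GM.toATM, GM.code] using hu) (ihl _ ?_) (ihr _ ?_)
      · rw [GM.code_app]; simp [GM.toATM, GM.code]
      · rw [GM.code_app]; simp [GM.toATM, GM.code]
  · intro h
    induction h with
    | leaf s b c h hok => exact .leaf s b _ (by simpa [GM.toATM, GM.code] using h) hok
    | estep s b c tr hok hne htr h ih =>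
      rw [GM.code_app] at ih
      have htr' : (e.symm (e tr.1), e'.symm (e' tr.2.1), tr.2.2) = tr :=
        Prod.ext (e.symm_apply_apply _) (Prod.ext (e'.symm_apply_apply _) rfl)
      refine .estep s b _ _ hok (by simpa [GM.toATM, GM.code] using hne) ?_ ih
      have : M.trans (e.symm (e c.state)) (inputAt x c.ipos) (e'.symm (e' (c.tape c.wpos)))
          (e.symm (e tr.1), e'.symm (e' tr.2.1), tr.2.2) := by
        rw [htr']
        simpa using htr
      exact this
    | ustep s₁ s₂ b c hok hu hl hr ihl ihr =>
      rw [GM.code_app] at ihl ihr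
      refine .ustep s₁ s₂ b _ hok (by simpa [GM.toATM, GM.code] using hu) ?_ ?_
      · simpa [GM.toATM, GM.code] using ihl
      · simpa [GM.toATM, GM.code] using ihr

/-! ### Sweep machines -/

/-- What a sweep machine does in a control state, with its work head on the first cell:
accept; guess a new control state and an input head move; branch universally; sweep over the whole
word with the Mealy machine `τf` and back with the Mealy machine `τb`; or spawn the certificate
tree. -/
inductive Op (Ctl Cell Sg : Type) : Type
  | acc
  | ex (R : Option Bool → Ctl → Dir → Prop)
  | un (q₁ q₂ : Ctl)
  | pass (τf τb : Sg → Cell → Sg × Cell) (s₀ : Sg) (nxt : Sg → Ctl)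
  | cert

/-- A program of a sweep machine. The machine first writes a nonempty word accepted by the guess
automaton `gst, gtr, gend`, and then runs from the control state `entry`. -/
structure Prog (Ctl Cell Sg G : Type) where
  op : Ctl → Op Ctl Cell Sg
  gst : G
  gtr : G → Cell → G → Prop
  gend : G → Prop
  entry : Ctl
  sg0 : Sg
  W : ℕ
  weight : Cell → Fin (W + 1)

/-- States of the machine of a program whose weights are at most `W`. -/
inductive St (Ctl Sg G : Type) (W : ℕ) : Type
  | home (q : Ctl)
  | fwd (q : Ctl) (s : Sg)
  | bwd (q : Ctl) (s : Sg)
  | guess (first : Bool) (g : G)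
  | certR
  | cert (j : Fin (W + 1))
  | done

instance {Ctl Sg G : Type} {W : ℕ} [Finite Ctl] [Finite Sg] [Finite G] :
    Finite (St Ctl Sg G W) := by
  let f : St Ctl Sg G W →
      Ctl ⊕ (Ctl × Sg) ⊕ (Ctl × Sg) ⊕ (Bool × G) ⊕ Unit ⊕ Fin (W + 1) ⊕ Unit := fun s =>
    match s with
    | .home q => .inl q
    | .fwd q s => .inr (.inl (q, s))
    | .bwd q s => .inr (.inr (.inl (q, s)))
    | .guess a g => .inr (.inr (.inr (.inl (a, g))))
    | .certR => .inr (.inr (.inr (.inr (.inl ()))))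
    | .cert j => .inr (.inr (.inr (.inr (.inr (.inl j)))))
    | .done => .inr (.inr (.inr (.inr (.inr (.inr ())))))
  refine Finite.of_injective f ?_
  intro a b h
  cases a <;> cases b <;> simp_all [f]

section Sweep

variable {Ctl Cell Sg G : Type}

/-- Transitions of the machine of a program. Tape symbols are `none` (blank) or a cell together
with a flag marking the first cell. -/
def Prog.trans (P : Prog Ctl Cell Sg G) : St Ctl Sg G P.W → Option Bool → Option (Bool × Cell) →
    (St Ctl Sg G P.W × Option (Bool × Cell) × Dir × Dir) → Prop
  | .home q, b, a, tr =>
    match P.op q with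
    | .ex R => ∃ q' d, R b q' d ∧ tr = (.home q', a, d, .stay)
    | .pass _ _ s₀ _ => tr = (.fwd q s₀, a, .stay, .stay)
    | .cert => tr = (.certR, a, .stay, .stay)
    | _ => False
  | .fwd q s, _, some (f, x), tr =>
    match P.op q with
    | .pass τf _ _ _ => tr = (.fwd q (τf s x).1, some (f, (τf s x).2), .stay, .right)
    | _ => False
  | .fwd q s, _, none, tr => tr = (.bwd q s, none, .stay, .left)
  | .bwd q s, _, some (f, x), tr =>
    match P.op q with
    | .pass _ τb _ nxt =>
      if f then tr = (.home (nxt (τb s x).1), some (f, (τb s x).2), .stay, .stay)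
      else tr = (.bwd q (τb s x).1, some (f, (τb s x).2), .stay, .left)
    | _ => False
  | .bwd _ _, _, none, _ => False
  | .guess first g, _, none, tr =>
    (∃ x g', P.gtr g x g' ∧ tr = (.guess false g', some (first, x), .stay, .right)) ∨
      (first = false ∧ P.gend g ∧ tr = (.bwd P.entry P.sg0, none, .stay, .left))
  | .guess _ _, _, some _, _ => False
  | .certR, _, some (f, x), tr => tr = (.cert (P.weight x), some (f, x), .stay, .stay)
  | .certR, _, none, tr => tr = (.done, none, .stay, .stay)
  | .cert _, _, a, tr => tr = (.certR, a, .stay, .right)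
  | .done, _, _, _ => False

/-- Universal transitions of the machine of a program. -/
def Prog.utrans (P : Prog Ctl Cell Sg G) (st : St Ctl Sg G P.W) (a : Option (Bool × Cell)) :
    (St Ctl Sg G P.W × Option (Bool × Cell) × Dir × Dir) ×
      (St Ctl Sg G P.W × Option (Bool × Cell) × Dir × Dir) :=
  match st with
  | .home q =>
    match P.op q with
    | .un q₁ q₂ => ((.home q₁, a, .stay, .stay), (.home q₂, a, .stay, .stay))
    | _ => ((st, a, .stay, .stay), (st, a, .stay, .stay))
  | .cert j =>
    let j' : Fin (P.W + 1) := ⟨j - 1, by omega⟩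
    ((.cert j', a, .stay, .stay), (.cert j', a, .stay, .stay))
  | _ => ((st, a, .stay, .stay), (st, a, .stay, .stay))

/-- The machine of a program. -/
def Prog.toGM (P : Prog Ctl Cell Sg G) : GM (St Ctl Sg G P.W) (Option (Bool × Cell)) where
  start := .guess true P.gst
  accept st :=
    match st with
    | .home q => match P.op q with | .acc => True | _ => False
    | .done => True
    | _ => False
  univ st :=
    match st with
    | .home q => match P.op q with | .un _ _ => True | _ => False
    | .cert j => 0 < j.val
    | _ => False
  blank := none
  trans := P.trans
  utrans st _ a := P.utrans st a

/-- The tape holding the word `w` on cells `0, …, w.length - 1`. -/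
def wtape (w : List Cell) : ℤ → Option (Bool × Cell) :=
  fun i => if 0 ≤ i then (w[i.toNat]?).map (fun x => (decide (i = 0), x)) else none

theorem wtape_at (pre post : List Cell) (y : Cell) :
    wtape (pre ++ y :: post) pre.length = some (decide (pre.length = 0), y) := by
  simp [wtape]

theorem wtape_end (w : List Cell) : wtape w w.length = none := by
  simp [wtape]

theorem wtape_update (pre post : List Cell) (y z : Cell) :
    Function.update (wtape (pre ++ y :: post)) pre.length
      (some (decide (pre.length = 0), z)) = wtape (pre ++ z :: post) := by
  funext i
  by_cases h : i = pre.length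
  · subst h; rw [Function.update_self, wtape_at]
  · rw [Function.update_of_ne h]
    simp only [wtape]
    split
    · congr 1
      have : i.toNat ≠ pre.length := by omega
      rw [List.getElem?_append, List.getElem?_append]
      split
      · rfl
      · rw [List.getElem?_cons, List.getElem?_cons]
        have : i.toNat - pre.length ≠ 0 := by omega
        simp [this]
    · rfl

theorem wtape_snoc (w : List Cell) (z : Cell) :
    Function.update (wtape w) w.length (some (decide (w.length = 0), z)) = wtape (w ++ [z]) := by
  funext i
  by_cases h : i = w.length
  · subst h; rw [Function.update_self, wtape_at]
  · rw [Function.update_of_ne h]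
    simp only [wtape]
    split
    · congr 1
      have : i.toNat ≠ w.length := by omega
      rw [List.getElem?_append]
      split
      · rfl
      · rw [List.getElem?_eq_none (by omega), List.getElem?_eq_none (by simp; omega)]
    · rfl

theorem wtape_nil : wtape ([] : List Cell) = fun _ => none := by
  funext i; simp [wtape]

variable (P : Prog Ctl Cell Sg G)

/-- The configuration with state `st`, input head position `ip`, word `w` and head position `p`. -/
def wc {W : ℕ} (st : St Ctl Sg G W) (ip : ℤ) (w : List Cell) (p : ℤ) :
    GC (St Ctl Sg G W) (Option (Bool × Cell)) := ⟨st, ip, wtape w, p⟩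

/-- The configuration in control state `q` with the work head at the first cell. -/
def Prog.hc (q : Ctl) (ip : ℤ) (w : List Cell) : GC (St Ctl Sg G P.W) (Option (Bool × Cell)) :=
  wc (.home q) ip w 0

/-- The run of a Mealy machine. -/
def run (τ : Sg → Cell → Sg × Cell) : Sg → List Cell → Sg × List Cell
  | s, [] => (s, [])
  | s, y :: w => ((run τ (τ s y).1 w).1, (τ s y).2 :: (run τ (τ s y).1 w).2)

@[simp] theorem run_length (τ : Sg → Cell → Sg × Cell) (s : Sg) (w : List Cell) :
    (run τ s w).2.length = w.length := by
  induction w generalizing s with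
  | nil => rfl
  | cons y w ih => simp [run, ih]

theorem run_id (s : Sg) (w : List Cell) : run (fun s y => (s, y)) s w = (s, w) := by
  induction w generalizing s with
  | nil => rfl
  | cons y w ih => simp [run, ih]

theorem run_map {β : Type} (g : Cell → β) (τ : Sg → Cell → Sg × Cell)
    (h : ∀ s y, g (τ s y).2 = g y) (s : Sg) (w : List Cell) :
    (run τ s w).2.map g = w.map g := by
  induction w generalizing s with
  | nil => rfl
  | cons y w ih => simp [run, ih, h]

variable (x : List Bool) (ok : GC (St Ctl Sg G P.W) (Option (Bool × Cell)) → Prop)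

/-- `P.Sim x ok K c c'`: acceptance from `c` and from `c'` are equivalent, at a cost of at most `K`
further tree nodes. -/
def Prog.Sim (K : ℕ) (c c' : GC (St Ctl Sg G P.W) (Option (Bool × Cell))) : Prop :=
  (∀ s b, P.toGM.Acc x ok s b c' → P.toGM.Acc x ok (s + K) b c) ∧
    (∀ s b, P.toGM.Acc x ok s b c → P.toGM.Acc x ok s b c')

variable {P x ok}

theorem Prog.Sim.refl (c) : P.Sim x ok 0 c c := ⟨fun _ _ h => h, fun _ _ h => h⟩

theorem Prog.Sim.trans {K K' : ℕ} {c c' c''} (h : P.Sim x ok K c c') (h' : P.Sim x ok K' c' c'') :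
    P.Sim x ok (K + K') c c'' :=
  ⟨fun s b hh => (h.1 _ _ (h'.1 _ _ hh)).mono (fun _ h => h) (by omega) le_rfl,
    fun s b hh => h'.2 _ _ (h.2 _ _ hh)⟩

theorem Prog.Sim.mono {K K' : ℕ} {c c'} (h : P.Sim x ok K c c') (hK : K ≤ K') :
    P.Sim x ok K' c c' :=
  ⟨fun s b hh => (h.1 _ _ hh).mono (fun _ h => h) (by omega) le_rfl, h.2⟩

theorem Prog.Sim.det {c : GC (St Ctl Sg G P.W) (Option (Bool × Cell))}
    (tr : St Ctl Sg G P.W × Option (Bool × Cell) × Dir × Dir) (hok : ok c)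
    (hu : ¬ P.toGM.univ c.state) (ha : ¬ P.toGM.accept c.state)
    (h : ∀ tr', P.trans c.state (inputAt x c.ipos) (c.tape c.wpos) tr' ↔ tr' = tr) :
    P.Sim x ok 1 c (c.app tr) := by
  constructor
  · intro s b hh
    exact .estep s b c tr hok hu ((h tr).2 rfl) hh
  · intro s b hh
    cases hh with
    | leaf s b c h hok => exact absurd h ha
    | ustep s₁ s₂ b c hok hu' hl hr => exact absurd hu' hu
    | estep s b c tr' hok hne htr h' =>
      obtain rfl := (h tr').1 htr
      exact h'.mono (fun _ h => h) (by omega) le_rfl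

variable {L : ℕ}

variable (ok L) in
/-- All configurations using the first `L` cells, and one more head position, satisfy `ok`. -/
def OkL : Prop := ∀ st ip w (p : ℤ), w.length ≤ L → 0 ≤ p → p ≤ L → ok (wc st ip w p)

theorem fwd_sim (hok : OkL ok L) {q : Ctl} {τf τb s₀ nxt} (hq : P.op q = .pass τf τb s₀ nxt)
    (ip : ℤ) (rest : List Cell) : ∀ (s : Sg) (pre : List Cell), (pre ++ rest).length ≤ L →
    P.Sim x ok rest.length (wc (.fwd q s) ip (pre ++ rest) pre.length)
      (wc (.fwd q (run τf s rest).1) ip (pre ++ (run τf s rest).2)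
        (pre ++ (run τf s rest).2).length) := by
  induction rest with
  | nil => intro s pre _; simpa [run] using Prog.Sim.refl _
  | cons y rest ih =>
    intro s pre hL
    have h1 : P.Sim x ok 1 (wc (.fwd q s) ip (pre ++ y :: rest) pre.length) _ :=
      Prog.Sim.det (.fwd q (τf s y).1, some (decide (pre.length = 0), (τf s y).2), .stay, .right)
        (hok _ _ _ _ hL (by positivity) (by simp at hL; omega)) (fun h => h) (fun h => h)
        (by intro tr'; simp only [wc, wtape_at, Prog.trans, hq])
    have h2 : (wc (G := G) (W := P.W) (.fwd q s) ip (pre ++ y :: rest) pre.length).app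
        (.fwd q (τf s y).1, some (decide (pre.length = 0), (τf s y).2), .stay, .right)
        = wc (.fwd q (τf s y).1) ip ((pre ++ [(τf s y).2]) ++ rest)
          (pre ++ [(τf s y).2]).length := by
      simp only [wc, GC.app, moveDir, wtape_update]
      simp
    rw [h2] at h1
    have h3 := h1.trans (ih (τf s y).1 (pre ++ [(τf s y).2]) (by simpa [add_assoc, add_comm, add_left_comm] using hL))
    simp only [run, List.append_assoc, List.singleton_append] at h3 ⊢
    exact h3.mono (by simp [add_comm])

theorem bwd_sim (hok : OkL ok L) {q : Ctl} {τf τb s₀ nxt} (hq : P.op q = .pass τf τb s₀ nxt)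
    (ip : ℤ) (rp : List Cell) : ∀ (s : Sg) (y : Cell) (post : List Cell),
    ((y :: rp).reverse ++ post).length ≤ L →
    P.Sim x ok (rp.length + 1) (wc (.bwd q s) ip ((y :: rp).reverse ++ post) rp.length)
      (P.hc (nxt (run τb s (y :: rp)).1) ip ((run τb s (y :: rp)).2.reverse ++ post)) := by
  induction rp with
  | nil =>
    intro s y post hL
    have h1 : P.Sim x ok 1 (wc (.bwd q s) ip (y :: post) 0) _ :=
      Prog.Sim.det (.home (nxt (τb s y).1), some (true, (τb s y).2), .stay, .stay)
        (hok _ _ _ _ (by simpa [add_comm] using hL) le_rfl (by positivity)) (fun h => h) (fun h => h)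
        (by
          intro tr'
          have := wtape_at [] post y
          simp only [List.nil_append, List.length_nil, Nat.cast_zero, decide_true] at this
          simp only [wc, this, Prog.trans, hq, if_true])
    have h2 : (wc (G := G) (W := P.W) (.bwd q s) ip (y :: post) 0).app
        (.home (nxt (τb s y).1), some (true, (τb s y).2), .stay, .stay)
        = P.hc (nxt (τb s y).1) ip ((τb s y).2 :: post) := by
      have := wtape_update [] post y (τb s y).2
      simp only [List.nil_append, List.length_nil, Nat.cast_zero, decide_true] at this
      simp [wc, Prog.hc, GC.app, moveDir, this]
    rw [h2] at h1
    simpa [run] using h1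
  | cons z rp ih =>
    intro s y post hL
    have hlen : ((z :: rp).reverse).length = (z :: rp).length := by simp
    have h1 : P.Sim x ok 1 (wc (.bwd q s) ip ((z :: rp).reverse ++ y :: post) (z :: rp).length) _ :=
      Prog.Sim.det (.bwd q (τb s y).1, some (false, (τb s y).2), .stay, .left)
        (hok _ _ _ _ (by simp at hL ⊢; omega) (by positivity) (by simp at hL ⊢; omega))
        (fun h => h) (fun h => h)
        (by
          intro tr'
          have := wtape_at (z :: rp).reverse post y
          rw [hlen] at this
          simp only [List.length_cons, Nat.add_one_ne_zero, decide_false] at this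
          simp only [wc, List.length_cons, this, Prog.trans, hq, Bool.false_eq_true, if_false])
    have h2 : (wc (G := G) (W := P.W) (.bwd q s) ip ((z :: rp).reverse ++ y :: post) (z :: rp).length).app
        (.bwd q (τb s y).1, some (false, (τb s y).2), .stay, .left)
        = wc (.bwd q (τb s y).1) ip ((z :: rp).reverse ++ ((τb s y).2 :: post)) rp.length := by
      have := wtape_update (z :: rp).reverse post y (τb s y).2
      rw [hlen] at this
      simp only [List.length_cons, Nat.add_one_ne_zero, decide_false] at this
      simp only [wc, GC.app, moveDir, List.length_cons, this]
      simp
    rw [h2] at h1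
    have h3 := h1.trans (ih (τb s y).1 z ((τb s y).2 :: post) (by simp at hL ⊢; omega))
    have e1 : (z :: rp).reverse ++ y :: post = (y :: z :: rp).reverse ++ post := by simp
    rw [e1] at h3
    simp only [run, List.reverse_cons, List.append_assoc, List.singleton_append,
      List.length_cons] at h3 ⊢
    exact h3.mono (by omega)

/-- The effect of a `pass` operation on the word, together with the final Mealy state. -/
def sweep (τf τb : Sg → Cell → Sg × Cell) (s₀ : Sg) (w : List Cell) : Sg × List Cell :=
  ((run τb (run τf s₀ w).1 (run τf s₀ w).2.reverse).1,
    (run τb (run τf s₀ w).1 (run τf s₀ w).2.reverse).2.reverse)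

theorem pass_sim (hok : OkL ok L) {q : Ctl} {τf τb s₀ nxt} (hq : P.op q = .pass τf τb s₀ nxt)
    (ip : ℤ) (w : List Cell) (hw : w ≠ []) (hL : w.length ≤ L) :
    P.Sim x ok (2 * L + 2) (P.hc q ip w)
      (P.hc (nxt (sweep τf τb s₀ w).1) ip (sweep τf τb s₀ w).2) := by
  have h0 : P.Sim x ok 1 (P.hc q ip w) _ :=
    Prog.Sim.det (.fwd q s₀, wtape w 0, .stay, .stay) (hok _ _ _ _ hL le_rfl (by positivity))
      (by simp [Prog.hc, wc, Prog.toGM, hq]) (by simp [Prog.hc, wc, Prog.toGM, hq])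
      (by intro tr'; simp only [Prog.hc, wc, Prog.trans, hq])
  have e0 : (P.hc q ip w).app (.fwd q s₀, wtape w 0, .stay, .stay) = wc (.fwd q s₀) ip w 0 := by
    simp [Prog.hc, wc, GC.app, moveDir]
  rw [e0] at h0
  have h1 := fwd_sim (x := x) (P := P) hok hq ip w s₀ [] (by simpa using hL)
  simp only [List.nil_append, List.length_nil, Nat.cast_zero] at h1
  set r := run τf s₀ w with hr
  have hrl : r.2.length = w.length := by rw [hr]; simp
  have h2 : P.Sim x ok 1 (wc (.fwd q r.1) ip r.2 r.2.length) _ :=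
    Prog.Sim.det (.bwd q r.1, none, .stay, .left) (hok _ _ _ _ (by omega) (by positivity) (by omega))
      (fun h => h) (fun h => h) (by intro tr'; simp only [wc, wtape_end, Prog.trans])
  obtain ⟨y, rp, hrev⟩ : ∃ y rp, r.2.reverse = y :: rp := by
    cases h : r.2.reverse with
    | nil => exfalso; apply hw; apply List.length_eq_zero_iff.1; rw [← hrl]; simpa using h
    | cons y rp => exact ⟨y, rp, rfl⟩
  have hrev' : r.2 = (y :: rp).reverse := by rw [← hrev]; simp
  have hl' : r.2.length = rp.length + 1 := by rw [hrev']; simp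
  have e2 : (wc (G := G) (W := P.W) (.fwd q r.1) ip r.2 r.2.length).app (.bwd q r.1, none, .stay, .left)
      = wc (.bwd q r.1) ip ((y :: rp).reverse ++ []) rp.length := by
    have hu : Function.update (wtape r.2) (r.2.length : ℤ) none = wtape r.2 := by
      conv_lhs => rw [← wtape_end r.2]
      exact Function.update_eq_self _ _
    simp only [wc, GC.app, moveDir]
    rw [hu, List.append_nil, ← hrev', hl']
    simp
  rw [e2] at h2
  have h3 := bwd_sim (x := x) (P := P) hok hq ip rp r.1 y [] (by
    rw [List.append_nil, ← hrev']; omega)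
  have h4 := ((h0.trans h1).trans h2).trans h3
  rw [List.append_nil, ← hrev] at h4
  exact h4.mono (by omega)

theorem ex_iff (hok : OkL ok L) {q : Ctl} {R} (hq : P.op q = .ex R)
    (ip : ℤ) (w : List Cell) (hL : w.length ≤ L) (s b : ℕ) :
    P.toGM.Acc x ok (s + 1) b (P.hc q ip w) ↔
      ∃ q' d, R (inputAt x ip) q' d ∧ P.toGM.Acc x ok s b (P.hc q' (moveDir ip d) w) := by
  have e : ∀ q' d, (P.hc q ip w).app (.home q', wtape w 0, d, .stay)
      = P.hc q' (moveDir ip d) w := by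
    intro q' d; simp [Prog.hc, wc, GC.app, moveDir]
  constructor
  · intro h
    generalize hs : s + 1 = s' at h
    generalize hc : P.hc q ip w = c at h
    cases h with
    | leaf _ _ _ h _ => subst hc; simp [Prog.hc, wc, Prog.toGM, hq] at h
    | ustep _ _ _ _ _ hu _ _ => subst hc; simp [Prog.hc, wc, Prog.toGM, hq] at hu
    | estep s₁ _ _ tr _ _ htr h =>
      subst hc
      have htr' : ∃ q' d, R (inputAt x ip) q' d ∧ tr = (.home q', wtape w 0, d, .stay) := by
        simpa only [Prog.hc, wc, Prog.toGM, Prog.trans, hq] using htr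
      obtain ⟨q', d, hR, rfl⟩ := htr'
      rw [e] at h
      obtain rfl : s = s₁ := by omega
      exact ⟨q', d, hR, h⟩
  · rintro ⟨q', d, hR, h⟩
    refine .estep s b _ (.home q', wtape w 0, d, .stay) (hok _ _ _ _ hL le_rfl (by positivity))
      (by simp [Prog.hc, wc, Prog.toGM, hq]) ?_ (by rw [e]; exact h)
    simp only [Prog.hc, wc, Prog.toGM, Prog.trans, hq]
    exact ⟨q', d, hR, rfl⟩

theorem acc_pos {c : GC (St Ctl Sg G P.W) (Option (Bool × Cell))} {s b : ℕ}
    (h : P.toGM.Acc x ok s b c) : 0 < s := by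
  cases h <;> omega

theorem ex_sim (hok : OkL ok L) {q : Ctl} {R} (hq : P.op q = .ex R)
    (ip : ℤ) (w : List Cell) (hL : w.length ≤ L) (q' : Ctl) (d : Dir)
    (hR : ∀ q'' d', R (inputAt x ip) q'' d' ↔ q'' = q' ∧ d' = d) :
    P.Sim x ok 1 (P.hc q ip w) (P.hc q' (moveDir ip d) w) := by
  constructor
  · intro s b h
    exact (ex_iff hok hq ip w hL s b).2 ⟨q', d, (hR _ _).2 ⟨rfl, rfl⟩, h⟩
  · intro s b h
    obtain ⟨s, rfl⟩ := Nat.exists_eq_add_of_lt (acc_pos h)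
    rw [zero_add] at h
    obtain ⟨q'', d', hR', h'⟩ := (ex_iff hok hq ip w hL s b).1 h
    obtain ⟨rfl, rfl⟩ := (hR _ _).1 hR'
    exact h'.mono (fun _ h => h) (by omega) le_rfl

theorem rej_false {q : Ctl} (hq : P.op q = .ex (fun _ _ _ => False))
    (ip : ℤ) (w : List Cell) (s b : ℕ) : ¬ P.toGM.Acc x ok s b (P.hc q ip w) := by
  intro h
  generalize hc : P.hc q ip w = c at h
  cases h with
  | leaf _ _ _ h _ => subst hc; simp [Prog.hc, wc, Prog.toGM, hq] at h
  | ustep _ _ _ _ _ hu _ _ => subst hc; simp [Prog.hc, wc, Prog.toGM, hq] at hu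
  | estep s₁ _ _ tr _ _ htr h =>
    subst hc
    simp [Prog.hc, wc, Prog.toGM, Prog.trans, hq] at htr

theorem acc_leaf (hok : OkL ok L) {q : Ctl} (hq : P.op q = .acc)
    (ip : ℤ) (w : List Cell) (hL : w.length ≤ L) (s b : ℕ) :
    P.toGM.Acc x ok (s + 1) b (P.hc q ip w) :=
  .leaf s b _ (by simp [Prog.hc, wc, Prog.toGM, hq]) (hok _ _ _ _ hL le_rfl (by positivity))

theorem un_complete (hok : OkL ok L) {q q₁ q₂ : Ctl} (hq : P.op q = .un q₁ q₂)
    (ip : ℤ) (w : List Cell) (hL : w.length ≤ L) {s₁ s₂ b : ℕ}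
    (h₁ : P.toGM.Acc x ok s₁ b (P.hc q₁ ip w)) (h₂ : P.toGM.Acc x ok s₂ b (P.hc q₂ ip w)) :
    P.toGM.Acc x ok (s₁ + s₂ + 1) (b + 1) (P.hc q ip w) := by
  have e : ∀ q', (P.hc q ip w).app (.home q', wtape w 0, .stay, .stay) = P.hc q' ip w := by
    intro q'; simp [Prog.hc, wc, GC.app, moveDir]
  have e1 : P.toGM.utrans (P.hc q ip w).state (inputAt x (P.hc q ip w).ipos)
      ((P.hc q ip w).tape (P.hc q ip w).wpos)
      = ((.home q₁, wtape w 0, .stay, .stay), (.home q₂, wtape w 0, .stay, .stay)) := by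
    simp only [Prog.hc, wc, Prog.toGM, Prog.utrans, hq]
  refine .ustep s₁ s₂ b _ (hok _ _ _ _ hL le_rfl (by positivity))
    (by simp [Prog.hc, wc, Prog.toGM, hq]) ?_ ?_
  · rw [e1, e]; exact h₁
  · rw [e1, e]; exact h₂

theorem un_sound {q q₁ q₂ : Ctl} (hq : P.op q = .un q₁ q₂)
    (ip : ℤ) (w : List Cell) {s b : ℕ} (h : P.toGM.Acc x ok s b (P.hc q ip w)) :
    ∃ s₁ s₂, s₁ < s ∧ s₂ < s ∧ P.toGM.Acc x ok s₁ b (P.hc q₁ ip w) ∧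
      P.toGM.Acc x ok s₂ b (P.hc q₂ ip w) := by
  have e : ∀ q', (P.hc q ip w).app (.home q', wtape w 0, .stay, .stay) = P.hc q' ip w := by
    intro q'; simp [Prog.hc, wc, GC.app, moveDir]
  have e1 : P.toGM.utrans (P.hc q ip w).state (inputAt x (P.hc q ip w).ipos)
      ((P.hc q ip w).tape (P.hc q ip w).wpos)
      = ((.home q₁, wtape w 0, .stay, .stay), (.home q₂, wtape w 0, .stay, .stay)) := by
    simp only [Prog.hc, wc, Prog.toGM, Prog.utrans, hq]
  generalize hc : P.hc q ip w = c at h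
  cases h with
  | leaf _ _ _ h _ => subst hc; simp [Prog.hc, wc, Prog.toGM, hq] at h
  | estep _ _ _ tr _ hne htr h => subst hc; simp [Prog.hc, wc, Prog.toGM, hq] at hne
  | ustep s₁ s₂ b _ _ hu hl hr =>
    subst hc
    rw [e1, e] at hl hr
    exact ⟨s₁, s₂, by omega, by omega, hl.mono (fun _ h => h) le_rfl (by omega),
      hr.mono (fun _ h => h) le_rfl (by omega)⟩

/-! ### Guessing the word -/

/-- Words generated by the guess automaton from a state. -/
inductive Prog.Gen (P : Prog Ctl Cell Sg G) : G → List Cell → Prop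
  | nil (g : G) (h : P.gend g) : Gen P g []
  | cons (g g' : G) (y : Cell) (w : List Cell) (h : P.gtr g y g') (hw : Gen P g' w) :
      Gen P g (y :: w)

theorem guess_complete (hok : OkL ok L) (u : List Cell) (s b : ℕ) :
    ∀ (g : G) (w : List Cell), P.Gen g u → (w ++ u).length ≤ L → w ++ u ≠ [] →
    P.toGM.Acc x ok s b (wc (.bwd P.entry P.sg0) 0 (w ++ u) ((w ++ u).length - 1)) →
    P.toGM.Acc x ok (s + u.length + 1) b
      (wc (.guess (decide (w.length = 0)) g) 0 w w.length) := by
  induction u with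
  | nil =>
    intro g w hg hL hne h
    rw [List.append_nil] at h hL hne
    have hw : w.length ≠ 0 := fun h0 => hne (List.length_eq_zero_iff.1 h0)
    cases hg with
    | nil g hg =>
      refine .estep s b _ (.bwd P.entry P.sg0, none, .stay, .left)
        (hok _ _ _ _ hL (by positivity) (by exact_mod_cast hL)) (fun h => h) ?_ ?_
      · simp only [wc, wtape_end, Prog.toGM, Prog.trans]
        exact Or.inr ⟨by simp [hw], hg, trivial⟩
      · have hu : Function.update (wtape w) (w.length : ℤ) none = wtape w := by
          conv_lhs => rw [← wtape_end w]
          exact Function.update_eq_self _ _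
        simp only [wc, GC.app, moveDir]
        rw [hu]
        exact h
  | cons y u ih =>
    intro g w hg hL hne h
    cases hg with
    | cons g g' y u hy hu =>
      have h1 := ih g' (w ++ [y]) hu (by simpa using hL) (by simp) (by simpa using h)
      refine (GM.Acc.estep (s + u.length + 1) b _
        (.guess false g', some (decide (w.length = 0), y), .stay, .right)
        (hok _ _ _ _ (by simp at hL; omega) (by positivity) (by simp at hL; omega))
        (fun h => h) ?_ ?_)
      · simp only [wc, wtape_end, Prog.toGM, Prog.trans]
        exact Or.inl ⟨y, g', hy, rfl⟩
      · simp only [wc, GC.app, moveDir, wtape_snoc]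
        simpa [wc] using h1

theorem guess_sound {s b : ℕ} {c} (h : P.toGM.Acc x ok s b c) :
    ∀ (g : G) (w : List Cell), c = wc (.guess (decide (w.length = 0)) g) 0 w w.length →
    ∃ u, P.Gen g u ∧ w ++ u ≠ [] ∧
      P.toGM.Acc x ok s b (wc (.bwd P.entry P.sg0) 0 (w ++ u) ((w ++ u).length - 1)) := by
  induction h with
  | leaf s b c h hok => rintro g w rfl; exact absurd h (fun h => h)
  | ustep s₁ s₂ b c hok hu hl hr ihl ihr => rintro g w rfl; exact absurd hu (fun h => h)
  | estep s b c tr hok hne htr h ih =>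
    rintro g w rfl
    simp only [wc, wtape_end, Prog.toGM, Prog.trans] at htr
    rcases htr with ⟨y, g', hy, rfl⟩ | ⟨hf, hg, rfl⟩
    · obtain ⟨u, hu, hne', hacc⟩ := ih g' (w ++ [y]) (by
        simp only [wc, GC.app, moveDir, wtape_snoc]
        simp)
      exact ⟨y :: u, .cons _ _ _ _ hy hu, by simp,
        by simpa using hacc.mono (fun _ h => h) (Nat.le_succ s) le_rfl⟩
    · have hw : w ≠ [] := by rintro rfl; simp at hf
      have hu : Function.update (wtape w) (w.length : ℤ) none = wtape w := by
        conv_lhs => rw [← wtape_end w]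
        exact Function.update_eq_self _ _
      refine ⟨[], .nil _ hg, by simpa using hw, ?_⟩
      simp only [wc, GC.app, moveDir] at h
      rw [hu] at h
      simpa [wc] using h.mono (fun _ h => h) (Nat.le_succ s) le_rfl

theorem start_complete (hok : OkL ok L) {τf s₀ nxt}
    (hq : P.op P.entry = .pass τf (fun s y => (s, y)) s₀ nxt) {u : List Cell} {s b : ℕ}
    (hu : P.Gen P.gst u) (hne : u ≠ []) (hL : u.length ≤ L)
    (h : P.toGM.Acc x ok s b (P.hc (nxt P.sg0) 0 u)) :
    P.toGM.Acc x ok (s + 2 * L + 1) b ⟨P.toGM.start, 0, fun _ => P.toGM.blank, 0⟩ := by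
  obtain ⟨y, rp, hrev⟩ : ∃ y rp, u.reverse = y :: rp := by
    cases h : u.reverse with
    | nil => exact absurd (by simpa using h) hne
    | cons y rp => exact ⟨y, rp, rfl⟩
  have hrev' : u = (y :: rp).reverse := by rw [← hrev]; simp
  have hl' : u.length = rp.length + 1 := by rw [hrev']; simp
  have h3 := (bwd_sim (x := x) (P := P) hok hq 0 rp P.sg0 y [] (by
    rw [List.append_nil, ← hrev']; omega)).1 s b (by
      rw [run_id, List.append_nil, ← hrev']; exact h)
  rw [List.append_nil, ← hrev'] at h3
  have h4 := guess_complete hok u (s + (rp.length + 1)) b P.gst [] hu (by simpa using hL) (by simpa using hne)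
    (by
      rw [List.nil_append, hl']; simpa using h3)
  have e : (⟨P.toGM.start, 0, fun _ => P.toGM.blank, 0⟩ :
      GC (St Ctl Sg G P.W) (Option (Bool × Cell)))
      = wc (.guess (decide (([] : List Cell).length = 0)) P.gst) 0 [] ([] : List Cell).length := by
    simp [wc, wtape_nil, Prog.toGM]
  rw [e]
  exact h4.mono (fun _ h => h) (by omega) le_rfl

theorem start_sound {τf s₀ nxt}
    (hq : P.op P.entry = .pass τf (fun s y => (s, y)) s₀ nxt) {s b : ℕ}
    (h : P.toGM.Acc x (fun _ => True) s b ⟨P.toGM.start, 0, fun _ => P.toGM.blank, 0⟩) :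
    ∃ u, P.Gen P.gst u ∧ u ≠ [] ∧ P.toGM.Acc x (fun _ => True) s b (P.hc (nxt P.sg0) 0 u) := by
  have e : (⟨P.toGM.start, 0, fun _ => P.toGM.blank, 0⟩ :
      GC (St Ctl Sg G P.W) (Option (Bool × Cell)))
      = wc (.guess (decide (([] : List Cell).length = 0)) P.gst) 0 [] ([] : List Cell).length := by
    simp [wc, wtape_nil, Prog.toGM]
  obtain ⟨u, hu, hne, h'⟩ := guess_sound h P.gst [] e
  rw [List.nil_append] at h' hne
  refine ⟨u, hu, hne, ?_⟩
  obtain ⟨y, rp, hrev⟩ : ∃ y rp, u.reverse = y :: rp := by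
    cases h : u.reverse with
    | nil => exact absurd (by simpa using h) hne
    | cons y rp => exact ⟨y, rp, rfl⟩
  have hrev' : u = (y :: rp).reverse := by rw [← hrev]; simp
  have hl' : u.length = rp.length + 1 := by rw [hrev']; simp
  have h3 := (bwd_sim (x := x) (P := P) (ok := fun _ => True) (L := u.length)
    (fun _ _ _ _ _ _ _ => trivial) hq 0 rp P.sg0 y [] (by
    rw [List.append_nil, ← hrev'])).2 s b (by
      rw [List.append_nil, ← hrev']; rw [hl'] at h'; simpa using h')
  rwa [run_id, List.append_nil, ← hrev'] at h3

/-! ### The certificate tree -/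

variable (P) in
/-- The number of nodes of the certificate tree of a word. -/
def Prog.csize : List Cell → ℕ
  | [] => 2
  | y :: w => 2 ^ (P.weight y).val * (2 + csize w)

variable (P) in
/-- The total weight of a word. -/
def Prog.wsum (w : List Cell) : ℕ := (w.map (fun y => (P.weight y).val)).sum

theorem cert_complete_aux (hok : OkL ok L) (w : List Cell) (p : ℕ) (hw : w.length ≤ L)
    (hp : p ≤ L) (ip : ℤ) {T b : ℕ} (h : P.toGM.Acc x ok T b (wc .certR ip w (p + 1))) :
    ∀ (j : ℕ) (hj : j < P.W + 1),
      P.toGM.Acc x ok (2 ^ j * (2 + T) - 1) (b + j) (wc (.cert ⟨j, hj⟩) ip w p) := by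
  intro j
  induction j with
  | zero =>
    intro hj
    have : P.toGM.Acc x ok (T + 1) b (wc (.cert ⟨0, hj⟩) ip w p) := by
      refine .estep T b _ (.certR, wtape w p, .stay, .right)
        (hok _ _ _ _ hw (by positivity) (by exact_mod_cast hp)) (by simp [wc, Prog.toGM])
        (by simp only [wc, Prog.toGM, Prog.trans]) ?_
      simpa [wc, GC.app, moveDir] using h
    exact this.mono (fun _ h => h) (by omega) le_rfl
  | succ j ih =>
    intro hj
    have h1 := ih (by omega)
    have : P.toGM.Acc x ok ((2 ^ j * (2 + T) - 1) + (2 ^ j * (2 + T) - 1) + 1) (b + j + 1)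
        (wc (.cert ⟨j + 1, hj⟩) ip w p) := by
      refine .ustep _ _ _ _ (hok _ _ _ _ hw (by positivity) (by exact_mod_cast hp))
        (Nat.succ_pos j) ?_ ?_
      · simpa [wc, GC.app, moveDir, Prog.toGM, Prog.utrans] using h1
      · simpa [wc, GC.app, moveDir, Prog.toGM, Prog.utrans] using h1
    have h0 : 0 < 2 ^ j := by positivity
    have : 0 < 2 ^ j * (2 + T) := by positivity
    refine GM.Acc.mono (fun _ h => h) ‹_› ?_ (by omega)
    rw [pow_succ]
    nlinarith [Nat.sub_add_cancel this, Nat.sub_add_cancel (show 1 ≤ 2 ^ j * 2 * (2 + T) by nlinarith)]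

theorem certR_complete (hok : OkL ok L) (ip : ℤ) (rest : List Cell) : ∀ (pre : List Cell),
    (pre ++ rest).length ≤ L →
    P.toGM.Acc x ok (P.csize rest) (P.wsum rest) (wc .certR ip (pre ++ rest) pre.length) := by
  induction rest with
  | nil =>
    intro pre hL
    rw [List.append_nil] at hL ⊢
    have hu : Function.update (wtape pre) (pre.length : ℤ) none = wtape pre := by
      conv_lhs => rw [← wtape_end pre]
      exact Function.update_eq_self _ _
    refine .estep 1 _ _ (.done, none, .stay, .stay)
      (hok _ _ _ _ hL (by positivity) (by exact_mod_cast hL)) (fun h => h)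
      (by simp only [wc, wtape_end, Prog.toGM, Prog.trans]) ?_
    simp only [wc, GC.app, moveDir]
    rw [hu]
    exact .leaf 0 _ _ trivial (hok _ _ _ _ hL (by positivity) (by exact_mod_cast hL))
  | cons y rest ih =>
    intro pre hL
    have h1 := ih (pre ++ [y]) (by simpa using hL)
    rw [List.append_assoc, List.singleton_append, List.length_append, List.length_singleton,
      Nat.cast_add, Nat.cast_one] at h1
    have hp : pre.length ≤ L := by simp at hL; omega
    have h2 := cert_complete_aux hok _ pre.length hL hp ip h1 (P.weight y).val (P.weight y).isLt
    have h3 : P.toGM.Acc x ok (2 ^ (P.weight y).val * (2 + P.csize rest) - 1 + 1)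
        (P.wsum rest + (P.weight y).val) (wc .certR ip (pre ++ y :: rest) pre.length) := by
      refine .estep _ _ _ (.cert (P.weight y), wtape (pre ++ y :: rest) pre.length, .stay, .stay)
        (hok _ _ _ _ hL (by positivity) (by exact_mod_cast hp)) (fun h => h)
        (by simp only [wc, wtape_at, Prog.toGM, Prog.trans]) ?_
      simpa [wc, GC.app, moveDir] using h2
    have : 0 < 2 ^ (P.weight y).val * (2 + P.csize rest) := by positivity
    refine h3.mono (fun _ h => h) ?_ ?_
    · rw [Prog.csize]; omega
    · simp [Prog.wsum, add_comm]

theorem cert_complete (hok : OkL ok L) {q : Ctl} (hq : P.op q = .cert) (ip : ℤ) (w : List Cell)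
    (hL : w.length ≤ L) :
    P.toGM.Acc x ok (P.csize w + 1) (P.wsum w) (P.hc q ip w) := by
  have h := certR_complete (x := x) hok ip w [] (by simpa using hL)
  refine .estep _ _ _ (.certR, wtape w 0, .stay, .stay) (hok _ _ _ _ hL le_rfl (by positivity))
    (by simp [Prog.hc, wc, Prog.toGM, hq])
    (by simp only [Prog.hc, wc, Prog.toGM, Prog.trans, hq]) ?_
  simpa [Prog.hc, wc, GC.app, moveDir] using h

theorem cert_sound_aux (w : List Cell) (p : ℤ) (ip : ℤ) {T : ℕ}
    (h : ∀ s b, P.toGM.Acc x ok s b (wc .certR ip w (p + 1)) → T ≤ s) :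
    ∀ (j : ℕ) (hj : j < P.W + 1) (s b : ℕ),
      P.toGM.Acc x ok s b (wc (.cert ⟨j, hj⟩) ip w p) → 2 ^ j * T ≤ s := by
  intro j
  induction j with
  | zero =>
    intro hj s b hacc
    generalize hc : wc (.cert ⟨0, hj⟩) ip w p = c at hacc
    cases hacc with
    | leaf _ _ _ h _ => subst hc; exact absurd h (fun h => h)
    | ustep _ _ _ _ _ hu _ _ => subst hc; simp [wc, Prog.toGM] at hu
    | estep s b _ tr _ hne htr h' =>
      subst hc
      simp only [wc, Prog.toGM, Prog.trans] at htr
      subst htr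
      have := h s b (by simpa [wc, GC.app, moveDir] using h')
      omega
  | succ j ih =>
    intro hj s b hacc
    generalize hc : wc (.cert ⟨j + 1, hj⟩) ip w p = c at hacc
    cases hacc with
    | leaf _ _ _ h _ => subst hc; exact absurd h (fun h => h)
    | estep s b _ tr _ hne htr h' => subst hc; simp [wc, Prog.toGM] at hne
    | ustep s₁ s₂ b _ _ hu hl hr =>
      subst hc
      have h1 := ih (by omega) s₁ b (by
        simpa [wc, GC.app, moveDir, Prog.toGM, Prog.utrans] using hl)
      have h2 := ih (by omega) s₂ b (by
        simpa [wc, GC.app, moveDir, Prog.toGM, Prog.utrans] using hr)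
      rw [pow_succ]
      nlinarith

theorem certR_sound (ip : ℤ) (rest : List Cell) : ∀ (pre : List Cell) (s b : ℕ),
    P.toGM.Acc x ok s b (wc .certR ip (pre ++ rest) pre.length) → 2 ^ P.wsum rest ≤ s := by
  induction rest with
  | nil => intro pre s b h; simpa [Prog.wsum] using Nat.succ_le_of_lt (acc_pos h)
  | cons y rest ih =>
    intro pre s b hacc
    have h1 := cert_sound_aux (P := P) (x := x) (ok := ok) (pre ++ y :: rest) pre.length ip
      (T := 2 ^ P.wsum rest) (by
        intro s b h
        exact ih (pre ++ [y]) s b (by simpa using h)) (P.weight y).val (P.weight y).isLt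
    generalize hc : wc (G := G) (W := P.W) .certR ip (pre ++ y :: rest) pre.length = c at hacc
    cases hacc with
    | leaf _ _ _ h _ => subst hc; exact absurd h (fun h => h)
    | ustep _ _ _ _ _ hu _ _ => subst hc; exact absurd hu (fun h => h)
    | estep s b _ tr _ hne htr h' =>
      subst hc
      simp only [wc, wtape_at, Prog.toGM, Prog.trans] at htr
      subst htr
      have := h1 s b (by
        rw [← wtape_at pre rest y] at h'
        simpa [wc, GC.app, moveDir] using h')
      simp only [Prog.wsum, List.map_cons, List.sum_cons, pow_add] at this ⊢
      omega

theorem cert_sound {q : Ctl} (hq : P.op q = .cert) (ip : ℤ) (w : List Cell) {s b : ℕ}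
    (h : P.toGM.Acc x ok s b (P.hc q ip w)) : 2 ^ P.wsum w ≤ s := by
  generalize hc : P.hc q ip w = c at h
  cases h with
  | leaf _ _ _ h _ => subst hc; simp [Prog.hc, wc, Prog.toGM, hq] at h
  | ustep _ _ _ _ _ hu _ _ => subst hc; simp [Prog.hc, wc, Prog.toGM, hq] at hu
  | estep s b _ tr _ hne htr h' =>
    subst hc
    simp only [Prog.hc, wc, Prog.toGM, Prog.trans, hq] at htr
    subst htr
    have := certR_sound (P := P) (x := x) (ok := ok) ip w [] s b (by
      simpa [Prog.hc, wc, GC.app, moveDir] using h')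
    omega

end Sweep

/-! ### Cells and binary counters -/

/-- A cell of the simulating machine. The word is divided into blocks; `fin` marks the last cell
of a block and `lst` the cells of the last block. Each of the tracks `t : Fin (c + 1)` holds, in
every block, a binary counter (`bit t`, least significant bit first, with one additional bit `top t`
on the last cell of the block): track `Fin.last c` holds the reference value, the other tracks
hold the digits of an odometer. `tok true` and `tok false` are tokens paying for universal
branchings and for overflows of the odometer. `sym` and `hd` are the tape symbol and a mark for the
head position of the simulated machine. -/
@[ext] structure Cl (c C k : ℕ) where
  fin : Bool
  lst : Bool
  bit : Fin (c + 1) → Bool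
  top : Fin (c + 1) → Bool
  tok : Bool → Fin (C + 2)
  sym : Fin k
  hd : Bool

instance (c C k : ℕ) : Finite (Cl c C k) := by
  let f : Cl c C k → Bool × Bool × (Fin (c + 1) → Bool) × (Fin (c + 1) → Bool) ×
      (Bool → Fin (C + 2)) × Fin k × Bool :=
    fun y => (y.fin, y.lst, y.bit, y.top, y.tok, y.sym, y.hd)
  refine Finite.of_injective f ?_
  intro a b h
  simp only [f, Prod.mk.injEq] at h
  obtain ⟨h1, h2, h3, h4, h5, h6, h7⟩ := h
  exact Cl.ext h1 h2 h3 h4 h5 h6 h7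

/-- States of the Mealy machines used in the passes. -/
abbrev Sig (k : ℕ) : Type := Bool × Bool × Fin k

variable {c C k : ℕ}

/-- The list of pairs (value, length) of the counters given by a list of triples
(end of block, bit, additional bit). -/
def decl : List (Bool × Bool × Bool) → List (ℕ × ℕ)
  | [] => []
  | (f, b, t) :: r =>
    if f then (b.toNat + 2 * t.toNat, 1) :: decl r
    else
      match decl r with
      | [] => []
      | (v, l) :: r' => (b.toNat + 2 * v, l + 1) :: r'

/-- Values and lengths of the counters on track `t`. -/
def dec (t : Fin (c + 1)) (w : List (Cl c C k)) : List (ℕ × ℕ) :=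
  decl (w.map (fun y => (y.fin, y.bit t, y.top t)))

/-- The last block is complete. -/
def Cmp : List Bool → Prop
  | [] => True
  | b :: r => (b = true ∨ r ≠ []) ∧ Cmp r

theorem dec_nil (t : Fin (c + 1)) : dec t ([] : List (Cl c C k)) = [] := rfl

theorem dec_fin (t : Fin (c + 1)) (y : Cl c C k) (w : List (Cl c C k)) (h : y.fin = true) :
    dec t (y :: w) = ((y.bit t).toNat + 2 * (y.top t).toNat, 1) :: dec t w := by
  simp [dec, decl, h]

theorem dec_nonfin (t : Fin (c + 1)) (y : Cl c C k) (w : List (Cl c C k)) (h : y.fin = false) :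
    dec t (y :: w) = match dec t w with
      | [] => []
      | (v, l) :: r' => ((y.bit t).toNat + 2 * v, l + 1) :: r' := by
  simp [dec, decl, h]

theorem dec_ne_nil (t : Fin (c + 1)) (w : List (Cl c C k)) (h : Cmp (w.map Cl.fin))
    (hw : w ≠ []) : dec t w ≠ [] := by
  induction w with
  | nil => exact absurd rfl hw
  | cons y w ih =>
    by_cases hy : y.fin = true
    · rw [dec_fin t y w hy]; simp
    · simp only [Bool.not_eq_true] at hy
      rw [dec_nonfin t y w hy]
      obtain ⟨h1, h2⟩ := h
      rw [hy] at h1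
      have hw' : w ≠ [] := by rintro rfl; simp at h1
      have := ih h2 hw'
      cases hd : dec t w with
      | nil => exact absurd hd this
      | cons p r => simp

/-- Add `cy` to the first counter and one to all others. -/
def bump (cy : Bool) : List (ℕ × ℕ) → List (ℕ × ℕ)
  | [] => []
  | (v, l) :: r => (v + cy.toNat, l) :: r.map (fun p => (p.1 + 1, p.2))

/-- The operation `bump` overflows some counter. -/
def Ovf (cy : Bool) : List (ℕ × ℕ) → Prop
  | [] => False
  | (v, l) :: r => 2 ^ (l + 1) ≤ v + cy.toNat ∨ ∃ p ∈ r, 2 ^ (p.2 + 1) ≤ p.1 + 1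

theorem bump_true (r : List (ℕ × ℕ)) : bump true r = r.map (fun p => (p.1 + 1, p.2)) := by
  cases r <;> simp [bump]

theorem ovf_true (r : List (ℕ × ℕ)) : Ovf true r ↔ ∃ p ∈ r, 2 ^ (p.2 + 1) ≤ p.1 + 1 := by
  cases r <;> simp [Ovf]

/-- Increment of all counters on track `t`. The state holds the carry and an overflow flag. -/
def incM (t : Fin (c + 1)) (s : Sig k) (y : Cl c C k) : Sig k × Cl c C k :=
  if y.fin then
    ((true, s.2.1 || (s.1 && y.bit t && y.top t), s.2.2),
      { y with bit := Function.update y.bit t (xor (y.bit t) s.1)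
               top := Function.update y.top t (xor (y.top t) (y.bit t && s.1)) })
  else
    ((y.bit t && s.1, s.2), { y with bit := Function.update y.bit t (xor (y.bit t) s.1) })

theorem incM_run (t : Fin (c + 1)) (w : List (Cl c C k)) : ∀ s : Sig k,
    ((run (incM t) s w).1.2.1 = false ↔ s.2.1 = false ∧ ¬ Ovf s.1 (dec t w)) ∧
      ((run (incM t) s w).1.2.1 = false → dec t (run (incM t) s w).2 = bump s.1 (dec t w)) := by
  induction w with
  | nil => intro s; simp [run, dec_nil, Ovf, bump]
  | cons y w ih =>
    intro s
    obtain ⟨ih1, ih2⟩ := ih (incM t s y).1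
    simp only [run]
    by_cases hy : y.fin = true
    · have e1 : (incM t s y).1 = (true, s.2.1 || (s.1 && y.bit t && y.top t), s.2.2) := by
        simp [incM, hy]
      have e2 : (incM t s y).2.fin = true := by simp [incM, hy]
      have e3 : (incM t s y).2.bit t = xor (y.bit t) s.1 := by simp [incM, hy]
      have e4 : (incM t s y).2.top t = xor (y.top t) (y.bit t && s.1) := by simp [incM, hy]
      rw [dec_fin t y w hy, dec_fin t _ _ e2, e3, e4]
      rw [e1] at ih1 ih2 ⊢
      simp only [ovf_true, bump_true] at ih1 ih2
      simp only [bump, Ovf]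
      constructor
      · rw [ih1]
        cases s.1 <;> cases y.bit t <;> cases y.top t <;> simp
      · intro h
        have h' := ih1.1 h
        rw [ih2 h]
        revert h'
        cases s.1 <;> cases y.bit t <;> cases y.top t <;> simp
    · simp only [Bool.not_eq_true] at hy
      have e1 : (incM t s y).1 = (y.bit t && s.1, s.2) := by simp [incM, hy]
      have e2 : (incM t s y).2.fin = false := by simp [incM, hy]
      have e3 : (incM t s y).2.bit t = xor (y.bit t) s.1 := by simp [incM, hy]
      rw [dec_nonfin t y w hy, dec_nonfin t _ _ e2, e3]
      rw [e1] at ih1 ih2 ⊢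
      cases hd : dec t w with
      | nil =>
        rw [hd] at ih1 ih2
        simp only [Ovf, bump] at ih1 ih2 ⊢
        refine ⟨ih1, fun h => ?_⟩
        rw [ih2 h]
      | cons p r =>
        obtain ⟨v, l⟩ := p
        rw [hd] at ih1 ih2
        simp only [Ovf, bump] at ih1 ih2 ⊢
        constructor
        · rw [ih1]
          have : (2 ^ (l + 1) ≤ v + (y.bit t && s.1).toNat) ↔
              2 ^ (l + 1 + 1) ≤ (y.bit t).toNat + 2 * v + s.1.toNat := by
            rw [pow_succ 2 (l + 1)]
            cases s.1 <;> cases y.bit t <;> simp <;> omega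
          rw [this]
        · intro h
          rw [ih2 h]
          simp only [List.cons.injEq, Prod.mk.injEq, and_true]
          cases s.1 <;> cases y.bit t <;> simp <;> omega

/-- Comparison of track `t` with the reference track. -/
def cmpM (t : Fin (c + 1)) (s : Sig k) (y : Cl c C k) : Sig k × Cl c C k :=
  ((s.1 && (y.bit t == y.bit (Fin.last c)) && (!y.fin || y.top t == y.top (Fin.last c)), s.2), y)

theorem cmpM_run (t : Fin (c + 1)) (w : List (Cl c C k)) (hw : Cmp (w.map Cl.fin)) : ∀ s : Sig k,
    (run (cmpM t) s w).1.1 = true ↔ s.1 = true ∧ dec t w = dec (Fin.last c) w := by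
  induction w with
  | nil => intro s; simp [run, dec_nil]
  | cons y w ih =>
    intro s
    have ih1 := ih hw.2 (cmpM t s y).1
    simp only [run]
    rw [ih1]
    by_cases hy : y.fin = true
    · rw [dec_fin t y w hy, dec_fin _ y w hy]
      simp only [cmpM, hy]
      cases s.1 <;> cases y.bit t <;> cases y.top t <;> cases y.bit (Fin.last c) <;>
        cases y.top (Fin.last c) <;> simp
    · simp only [Bool.not_eq_true] at hy
      rw [dec_nonfin t y w hy, dec_nonfin _ y w hy]
      have hne : w ≠ [] := by
        rintro rfl
        simpa [hy] using hw.1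
      have h1 := dec_ne_nil t w hw.2 hne
      have h2 := dec_ne_nil (Fin.last c) w hw.2 hne
      cases hd : dec t w with
      | nil => exact absurd hd h1
      | cons p r =>
      cases hd' : dec (Fin.last c) w with
      | nil => exact absurd hd' h2
      | cons p' r' =>
        simp only [cmpM, hy]
        cases s.1 <;> cases y.bit t <;> cases y.bit (Fin.last c) <;>
          simp [Prod.ext_iff] <;> omega

/-- Check that the additional bit of every reference counter is set. -/
def chkM (s : Sig k) (y : Cl c C k) : Sig k × Cl c C k :=
  ((s.1 && (!y.fin || y.top (Fin.last c)), s.2), y)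

theorem chkM_run (w : List (Cl c C k)) (hw : Cmp (w.map Cl.fin)) : ∀ s : Sig k,
    (run chkM s w).1.1 = true ↔ s.1 = true ∧ ∀ p ∈ dec (Fin.last c) w, 2 ^ p.2 ≤ p.1 := by
  induction w with
  | nil => intro s; simp [run, dec_nil]
  | cons y w ih =>
    intro s
    have ih1 := ih hw.2 (chkM s y).1
    simp only [run]
    rw [ih1]
    by_cases hy : y.fin = true
    · rw [dec_fin _ y w hy]
      simp only [chkM, hy]
      cases s.1 <;> cases y.bit (Fin.last c) <;> cases y.top (Fin.last c) <;> simp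
    · simp only [Bool.not_eq_true] at hy
      rw [dec_nonfin _ y w hy]
      have hne : w ≠ [] := by
        rintro rfl
        simpa [hy] using hw.1
      have h2 := dec_ne_nil (Fin.last c) w hw.2 hne
      cases hd' : dec (Fin.last c) w with
      | nil => exact absurd hd' h2
      | cons p' r' =>
        have : 2 ^ (p'.2 + 1) ≤ (y.bit (Fin.last c)).toNat + 2 * p'.1 ↔ 2 ^ p'.2 ≤ p'.1 := by
          rw [pow_succ]
          cases y.bit (Fin.last c) <;> simp <;> omega
        simp [chkM, hy, this]

/-- The lengths of the blocks. -/
def lens (w : List (Cl c C k)) : List ℕ := (decl (w.map (fun y => (y.fin, false, false)))).map Prod.snd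

theorem decl_zero (w : List (Cl c C k)) (g : Cl c C k → Bool × Bool × Bool)
    (hg : ∀ y ∈ w, g y = (y.fin, false, false)) :
    decl (w.map g) = (lens w).map (fun l => (0, l)) := by
  have e : w.map g = w.map (fun y => (y.fin, false, false)) := List.map_congr_left hg
  rw [e]
  clear e hg
  unfold lens
  induction w with
  | nil => rfl
  | cons y w ih =>
    simp only [List.map_cons, decl]
    split
    · simpa using ih
    · rw [ih]
      cases decl (w.map (fun y => (y.fin, false, false))) with
      | nil => rfl
      | cons p r => simp

/-! ### The remaining Mealy machines -/

/-- The Mealy machine without effect. -/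
def idM (s : Sig k) (y : Cl c C k) : Sig k × Cl c C k := (s, y)

/-- Total number of tokens of a kind. -/
def tsum (b : Bool) (w : List (Cl c C k)) : ℕ := (w.map (fun y => (y.tok b).val)).sum

/-- Remove the first token of a kind. The flag tells whether this has been done. -/
def tokM (b : Bool) (s : Sig k) (y : Cl c C k) : Sig k × Cl c C k :=
  if s.1 = false ∧ 0 < (y.tok b).val then
    ((true, s.2), { y with tok := Function.update y.tok b ⟨(y.tok b).val - 1, by omega⟩ })
  else (s, y)

theorem tokM_run_true (b : Bool) (w : List (Cl c C k)) (s : Sig k) (hs : s.1 = true) :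
    run (tokM b) s w = (s, w) := by
  induction w with
  | nil => rfl
  | cons y w ih => simp [run, tokM, hs, ih]

theorem tokM_run (b : Bool) (w : List (Cl c C k)) (s : Sig k) (hs : s.1 = false) :
    ((run (tokM b) s w).1.1 = false ∧ tsum b w = 0) ∨
      ((run (tokM b) s w).1.1 = true ∧ tsum b w = tsum b (run (tokM b) s w).2 + 1) := by
  induction w with
  | nil => left; simp [run, hs, tsum]
  | cons y w ih =>
    by_cases hy : 0 < (y.tok b).val
    · right
      simp only [run]
      have e : tokM b s y = ((true, s.2),
          { y with tok := Function.update y.tok b ⟨(y.tok b).val - 1, by omega⟩ }) := by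
        simp [tokM, hs, hy]
      rw [e, tokM_run_true b w _ rfl]
      refine ⟨rfl, ?_⟩
      simp [tsum]
      omega
    · have e : tokM b s y = (s, y) := by simp only [tokM, hy, and_false, if_false]
      simp only [run, e]
      have h0 : (y.tok b).val = 0 := by omega
      rcases ih with ⟨h1, h2⟩ | ⟨h1, h2⟩
      · left; refine ⟨h1, ?_⟩
        simp only [tsum, List.map_cons, List.sum_cons] at h2 ⊢; omega
      · right; refine ⟨h1, ?_⟩
        simp only [tsum, List.map_cons, List.sum_cons] at h2 ⊢; omega

/-- Test for the presence of an odometer token. -/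
def hasM (s : Sig k) (y : Cl c C k) : Sig k × Cl c C k :=
  ((s.1 || decide (0 < (y.tok false).val), s.2), y)

theorem hasM_run (w : List (Cl c C k)) : ∀ s : Sig k,
    (run hasM s w).2 = w ∧ ((run hasM s w).1.1 = true ↔ s.1 = true ∨ 0 < tsum false w) := by
  induction w with
  | nil => intro s; simp [run, tsum]
  | cons y w ih =>
    intro s
    obtain ⟨h1, h2⟩ := ih (hasM s y).1
    simp only [run, h1, h2]
    refine ⟨rfl, ?_⟩
    simp only [hasM, tsum, List.map_cons, List.sum_cons, Bool.or_eq_true, decide_eq_true_eq,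
      or_assoc, Nat.add_pos_iff_pos_or_pos]

theorem read_only {τ : Sig k → Cl c C k → Sig k × Cl c C k} (h : ∀ s y, (τ s y).2 = y)
    (s : Sig k) (w : List (Cl c C k)) : (run τ s w).2 = w := by
  induction w generalizing s with
  | nil => rfl
  | cons y w ih => simp [run, h, ih]

/-- Set all counters of track `t` to zero. -/
def rstM (t : Fin (c + 1)) (s : Sig k) (y : Cl c C k) : Sig k × Cl c C k :=
  (s, { y with bit := Function.update y.bit t false, top := Function.update y.top t false })

/-- Set all digits of the odometer to zero and put one odometer token on each block. -/
def resM (s : Sig k) (y : Cl c C k) : Sig k × Cl c C k :=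
  (s, { y with bit := fun t => if t = Fin.last c then y.bit t else false
               top := fun t => if t = Fin.last c then y.top t else false
               tok := Function.update y.tok false (if y.fin then 1 else 0) })

/-- A Mealy machine that does not use its state acts as a `map`. -/
theorem run_const (g : Cl c C k → Cl c C k) (s : Sig k) (w : List (Cl c C k)) :
    run (fun s y => (s, g y)) s w = (s, w.map g) := by
  induction w with
  | nil => rfl
  | cons y w ih => simp [run, ih]

/-- Mark the first cell as head position. -/
def hdM (s : Sig k) (y : Cl c C k) : Sig k × Cl c C k :=
  if s.1 then ((false, s.2), { y with hd := true }) else (s, y)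

/-- Read the symbol at the head position. -/
def readM (s : Sig k) (y : Cl c C k) : Sig k × Cl c C k :=
  ((s.1, s.2.1, if y.hd then y.sym else s.2.2), y)

/-- Write a symbol at the head position. -/
def wrF (a : Fin k) (y : Cl c C k) : Cl c C k := if y.hd then { y with sym := a } else y

/-- Move the head mark to the next cell. The flag tells that the mark has been picked up and not
yet been put down. -/
def shM (s : Sig k) (y : Cl c C k) : Sig k × Cl c C k :=
  if y.hd then ((true, s.2), { y with hd := false })
  else if s.1 then ((false, s.2), { y with hd := true })
  else (s, y)

theorem sweep_fwd (τ : Sig k → Cl c C k → Sig k × Cl c C k) (s : Sig k) (w : List (Cl c C k)) :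
    sweep τ idM s w = run τ s w := by
  have : (idM : Sig k → Cl c C k → Sig k × Cl c C k) = fun s y => (s, y) := rfl
  simp [sweep, this, run_id]

theorem run_append (τ : Sig k → Cl c C k → Sig k × Cl c C k) (u v : List (Cl c C k)) :
    ∀ s : Sig k, run τ s (u ++ v) = ((run τ (run τ s u).1 v).1,
      (run τ s u).2 ++ (run τ (run τ s u).1 v).2) := by
  induction u with
  | nil => intro s; rfl
  | cons y u ih => intro s; simp [run, ih]

theorem run_fix (τ : Sig k → Cl c C k → Sig k × Cl c C k) (s : Sig k) (w : List (Cl c C k))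
    (h : ∀ y ∈ w, τ s y = (s, y)) : run τ s w = (s, w) := by
  induction w with
  | nil => rfl
  | cons y w ih =>
    have h1 := h y (by simp)
    have h2 := ih (fun z hz => h z (by simp [hz]))
    simp [run, h1, h2]

/-! ### The simulating machine -/

/-- Transitions of an alternating machine. -/
abbrev TR (M : ATM) : Type := Fin M.states × Fin M.syms × Dir × Dir

/-- Control states of the machine simulating `M` with an odometer of `c` digits.

* `entry`, …, `chk` compute the reference value and check the lengths of the blocks;
* `fork` branches into the certificate tree and the simulation;
* `sim q` and `rd q a` stand for the state `q` of `M`, before and after reading the work tape;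
* `odo`, …, `ut` advance the odometer before an existential transition of `M`;
* `tokd`, `res`, `fk` pay for a universal branching of `M` and restart the odometer;
* `ap` and `wr` apply a transition to the input head and to the simulated work tape. -/
inductive Ctl (M : ATM) (c : ℕ) : Type
  | entry | set0 | set1 | scan | scanInc | rew | chk | rej | accp | fork | certc | inithd
  | sim (q : Fin M.states)
  | rd (q : Fin M.states) (a : Fin M.syms)
  | odo (tr : TR M)
  | inc (i : Fin c) (tr : TR M)
  | cmp (i : Fin c) (tr : TR M)
  | rst (i : Fin c) (tr : TR M)
  | ut (tr : TR M)
  | tokd (t₁ t₂ : TR M)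
  | res (t₁ t₂ : TR M)
  | fk (t₁ t₂ : TR M)
  | ap (tr : TR M)
  | wr (tr : TR M)

instance : Finite Dir := by
  refine Finite.of_surjective (fun i : Fin 3 =>
    match i with | 0 => Dir.left | 1 => Dir.stay | 2 => Dir.right) ?_
  intro d
  cases d
  exacts [⟨0, rfl⟩, ⟨1, rfl⟩, ⟨2, rfl⟩]

instance (M : ATM) (c : ℕ) : Finite (Ctl M c) := by
  let f : Fin 12 ⊕ Fin M.states ⊕ (Fin M.states × Fin M.syms) ⊕ (Fin 4 × TR M) ⊕
      (Fin 3 × Fin c × TR M) ⊕ (Fin 3 × TR M × TR M) → Ctl M c := fun z =>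
    match z with
    | .inl i =>
      match i with
      | 0 => .entry | 1 => .set0 | 2 => .set1 | 3 => .scan | 4 => .scanInc | 5 => .rew
      | 6 => .chk | 7 => .rej | 8 => .accp | 9 => .fork | 10 => .certc | 11 => .inithd
    | .inr (.inl q) => .sim q
    | .inr (.inr (.inl (q, a))) => .rd q a
    | .inr (.inr (.inr (.inl (i, tr)))) =>
      match i with
      | 0 => .odo tr | 1 => .ut tr | 2 => .ap tr | 3 => .wr tr
    | .inr (.inr (.inr (.inr (.inl (i, j, tr))))) =>
      match i with
      | 0 => .inc j tr | 1 => .cmp j tr | 2 => .rst j tr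
    | .inr (.inr (.inr (.inr (.inr (i, t₁, t₂))))) =>
      match i with
      | 0 => .tokd t₁ t₂ | 1 => .res t₁ t₂ | 2 => .fk t₁ t₂
  refine Finite.of_surjective f ?_
  intro q
  cases q with
  | entry => exact ⟨.inl 0, rfl⟩
  | set0 => exact ⟨.inl 1, rfl⟩
  | set1 => exact ⟨.inl 2, rfl⟩
  | scan => exact ⟨.inl 3, rfl⟩
  | scanInc => exact ⟨.inl 4, rfl⟩
  | rew => exact ⟨.inl 5, rfl⟩
  | chk => exact ⟨.inl 6, rfl⟩
  | rej => exact ⟨.inl 7, rfl⟩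
  | accp => exact ⟨.inl 8, rfl⟩
  | fork => exact ⟨.inl 9, rfl⟩
  | certc => exact ⟨.inl 10, rfl⟩
  | inithd => exact ⟨.inl 11, rfl⟩
  | sim q => exact ⟨.inr (.inl q), rfl⟩
  | rd q a => exact ⟨.inr (.inr (.inl (q, a))), rfl⟩
  | odo tr => exact ⟨.inr (.inr (.inr (.inl (0, tr)))), rfl⟩
  | ut tr => exact ⟨.inr (.inr (.inr (.inl (1, tr)))), rfl⟩
  | ap tr => exact ⟨.inr (.inr (.inr (.inl (2, tr)))), rfl⟩
  | wr tr => exact ⟨.inr (.inr (.inr (.inl (3, tr)))), rfl⟩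
  | inc j tr => exact ⟨.inr (.inr (.inr (.inr (.inl (0, j, tr))))), rfl⟩
  | cmp j tr => exact ⟨.inr (.inr (.inr (.inr (.inl (1, j, tr))))), rfl⟩
  | rst j tr => exact ⟨.inr (.inr (.inr (.inr (.inl (2, j, tr))))), rfl⟩
  | tokd t₁ t₂ => exact ⟨.inr (.inr (.inr (.inr (.inr (0, t₁, t₂))))), rfl⟩
  | res t₁ t₂ => exact ⟨.inr (.inr (.inr (.inr (.inr (1, t₁, t₂))))), rfl⟩
  | fk t₁ t₂ => exact ⟨.inr (.inr (.inr (.inr (.inr (2, t₁, t₂))))), rfl⟩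

/-- Go on with the digit of weight `N ^ i` of the odometer, or with the odometer tokens if there is
no such digit. -/
def digC {M : ATM} {c : ℕ} (i : ℕ) (tr : TR M) : Ctl M c :=
  if h : i < c then .inc ⟨i, h⟩ tr else .ut tr

/-- An initial cell. There is one odometer token on each block, and one branching token on each
block and `C` further ones on each cell of the last block. -/
def mkCell (c C : ℕ) {k : ℕ} (blank : Fin k) (fin lst : Bool) : Cl c C k where
  fin := fin
  lst := lst
  bit := fun _ => false
  top := fun _ => false
  tok := fun b => ⟨(if b && lst then C else 0) + (if fin then 1 else 0), by
    split <;> split <;> omega⟩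
  sym := blank
  hd := false

/-- The program simulating `M`. -/
def prog (M : ATM) (c C a cw : ℕ) :
    Prog (Ctl M c) (Cl c C M.syms) (Sig M.syms) (Bool × Bool) where
  op q :=
    match q with
    | .entry => .pass idM idM (false, false, M.blank) (fun _ => .set0)
    | .set0 => .pass (incM (Fin.last c)) idM (true, false, M.blank)
        (fun s => if s.2.1 then .rej else .set1)
    | .set1 => .pass (incM (Fin.last c)) idM (true, false, M.blank)
        (fun s => if s.2.1 then .rej else .scan)
    | .scan => .ex (fun o q' d => (o.isSome ∧ q' = .scanInc ∧ d = .right) ∨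
        (o = none ∧ q' = .rew ∧ d = .left))
    | .scanInc => .pass (incM (Fin.last c)) idM (true, false, M.blank)
        (fun s => if s.2.1 then .rej else .scan)
    | .rew => .ex (fun o q' d => (o.isSome ∧ q' = .rew ∧ d = .left) ∨
        (o = none ∧ q' = .chk ∧ d = .right))
    | .chk => .pass chkM idM (true, false, M.blank) (fun s => if s.1 then .fork else .rej)
    | .rej => .ex (fun _ _ _ => False)
    | .accp => .acc
    | .fork => .un .certc .inithd
    | .certc => .cert
    | .inithd => .pass hdM idM (true, false, M.blank) (fun _ => .sim M.start)
    | .sim q => .pass readM idM (false, false, M.blank) (fun s => .rd q s.2.2)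
    | .rd q b => .ex (fun o q' d => (M.accept q ∧ q' = .accp ∧ d = .stay) ∨
        (¬ M.univ q ∧ ∃ tr, M.trans q o b tr ∧ q' = .odo tr ∧ d = tr.2.2.1) ∨
        (M.univ q ∧ q' = .tokd (M.utrans q o b).1 (M.utrans q o b).2 ∧ d = .stay))
    | .odo tr => .pass hasM idM (false, false, M.blank)
        (fun s => if s.1 then digC 0 tr else .rej)
    | .inc i tr => .pass (incM i.castSucc) idM (true, false, M.blank) (fun _ => .cmp i tr)
    | .cmp i tr => .pass (cmpM i.castSucc) idM (true, false, M.blank)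
        (fun s => if s.1 then .rst i tr else .wr tr)
    | .rst i tr => .pass (rstM i.castSucc) idM (false, false, M.blank) (fun _ => digC (i + 1) tr)
    | .ut tr => .pass (tokM false) idM (false, false, M.blank)
        (fun s => if s.1 then .wr tr else .rej)
    | .tokd t₁ t₂ => .pass (tokM true) idM (false, false, M.blank)
        (fun s => if s.1 then .res t₁ t₂ else .rej)
    | .res t₁ t₂ => .pass resM idM (false, false, M.blank) (fun _ => .fk t₁ t₂)
    | .fk t₁ t₂ => .un (.ap t₁) (.ap t₂)
    | .ap tr => .ex (fun _ q' d => q' = .wr tr ∧ d = tr.2.2.1)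
    | .wr tr =>
      match tr.2.2.2 with
      | .stay => .pass (fun s y => (s, wrF tr.2.1 y)) idM (false, false, M.blank)
          (fun s => if s.1 then .rej else .sim tr.1)
      | .right => .pass (fun s y => shM s (wrF tr.2.1 y)) idM (false, false, M.blank)
          (fun s => if s.1 then .rej else .sim tr.1)
      | .left => .pass (fun s y => (s, wrF tr.2.1 y)) shM (false, false, M.blank)
          (fun s => if s.1 then .rej else .sim tr.1)
  gst := (false, true)
  gtr := fun g y g' => y = mkCell c C M.blank g'.2 g'.1 ∧ (g.1 = true → g'.1 = true ∧ g.2 = false) ∧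
    (g.1 = false → g.2 = false → g'.1 = false)
  gend := fun g => g.1 = true ∧ g.2 = true
  entry := .entry
  sg0 := (false, false, M.blank)
  W := a + cw
  weight := fun y => ⟨(if y.fin then a else 0) + (if y.lst then cw else 0), by
    split <;> split <;> omega⟩

section Steps

variable {M : ATM} {c C a cw : ℕ} {x : List Bool} {L : ℕ}
  {ok : GC (St (Ctl M c) (Sig M.syms) (Bool × Bool) (prog M c C a cw).W)
    (Option (Bool × Cl c C M.syms)) → Prop}

theorem fwd_step (hok : OkL ok L) {q : Ctl M c}
    {τ : Sig M.syms → Cl c C M.syms → Sig M.syms × Cl c C M.syms} {s₀ nxt}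
    (hq : (prog M c C a cw).op q = .pass τ idM s₀ nxt) (ip : ℤ) (w : List (Cl c C M.syms))
    (hw : w ≠ []) (hL : w.length ≤ L) :
    (prog M c C a cw).Sim x ok (2 * L + 2) ((prog M c C a cw).hc q ip w)
      ((prog M c C a cw).hc (nxt (run τ s₀ w).1) ip (run τ s₀ w).2) := by
  have h := pass_sim (x := x) hok hq ip w hw hL
  rwa [sweep_fwd] at h

end Steps

/-! ### Computing the reference value -/

/-- A cell with the reference counter erased. -/
def strip {c C k : ℕ} (y : Cl c C k) : Cl c C k :=
  { y with bit := Function.update y.bit (Fin.last c) false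
           top := Function.update y.top (Fin.last c) false }

theorem strip_incM {c C k : ℕ} (s : Sig k) (y : Cl c C k) :
    strip (incM (Fin.last c) s y).2 = strip y := by
  unfold incM strip
  split <;> simp

theorem map_of_strip {c C k : ℕ} {β : Type} {w w' : List (Cl c C k)}
    (h : w'.map strip = w.map strip) (g : Cl c C k → β) (hg : ∀ y, g (strip y) = g y) :
    w'.map g = w.map g := by
  have e : g = g ∘ strip := by funext y; simp [hg]
  rw [e, ← List.map_map, ← List.map_map, h]

section Setup

variable {M : ATM} {c C a cw : ℕ} {x : List Bool} {L : ℕ}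
  {ok : GC (St (Ctl M c) (Sig M.syms) (Bool × Bool) (prog M c C a cw).W)
    (Option (Bool × Cl c C M.syms)) → Prop}

/-- The word `w` differs from `w₀` only in the reference counters, all of which hold `m`. -/
structure RefIs (w₀ w : List (Cl c C M.syms)) (ls : List ℕ) (m : ℕ) : Prop where
  same : w.map strip = w₀.map strip
  val : dec (Fin.last c) w = ls.map (fun l => (m, l))

theorem RefIs.length {w₀ w : List (Cl c C M.syms)} {ls : List ℕ} {m : ℕ} (h : RefIs w₀ w ls m) :
    w.length = w₀.length := by
  simpa using congrArg List.length h.same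

theorem RefIs.ne_nil {w₀ w : List (Cl c C M.syms)} {ls : List ℕ} {m : ℕ} (h : RefIs w₀ w ls m)
    (h₀ : w₀ ≠ []) : w ≠ [] := by
  have := h.length
  rintro rfl
  exact h₀ (List.length_eq_zero_iff.1 this.symm)

theorem RefIs.fin {w₀ w : List (Cl c C M.syms)} {ls : List ℕ} {m : ℕ} (h : RefIs w₀ w ls m) :
    w.map Cl.fin = w₀.map Cl.fin :=
  map_of_strip h.same _ (fun _ => rfl)

theorem inc_ref (hok : OkL ok L) {q q' : Ctl M c}
    (hq : (prog M c C a cw).op q = .pass (incM (Fin.last c)) idM (true, false, M.blank)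
      (fun s => if s.2.1 then .rej else q')) (ip : ℤ) {w₀ w : List (Cl c C M.syms)} {ls : List ℕ}
    {m : ℕ} (hw : RefIs w₀ w ls m) (h₀ : w₀ ≠ []) (hL : w₀.length ≤ L) :
    ∃ w', (prog M c C a cw).Sim x ok (2 * L + 2) ((prog M c C a cw).hc q ip w)
        ((prog M c C a cw).hc (if ∃ l ∈ ls, 2 ^ (l + 1) ≤ m + 1 then .rej else q') ip w') ∧
      ((¬ ∃ l ∈ ls, 2 ^ (l + 1) ≤ m + 1) → RefIs w₀ w' ls (m + 1)) := by
  classical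
  have h1 := fwd_step (x := x) hok hq ip w (hw.ne_nil h₀) (by rw [hw.length]; exact hL)
  obtain ⟨h2, h3⟩ := incM_run (Fin.last c) w (true, false, M.blank)
  simp only [ovf_true, bump_true, hw.val, List.map_map, List.mem_map] at h2 h3
  have e : (∃ l ∈ ls, 2 ^ (l + 1) ≤ m + 1) ↔
      ∃ p, (∃ l ∈ ls, (m, l) = p) ∧ 2 ^ (p.2 + 1) ≤ p.1 + 1 := by
    constructor
    · rintro ⟨l, h, h'⟩; exact ⟨_, ⟨l, h, rfl⟩, h'⟩
    · rintro ⟨p, ⟨l, h, rfl⟩, h'⟩; exact ⟨l, h, h'⟩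
  refine ⟨(run (incM (Fin.last c)) (true, false, M.blank) w).2, ?_, ?_⟩
  rotate_left
  · intro hn
    rw [e] at hn
    refine ⟨?_, h3 (h2.2 ⟨trivial, hn⟩)⟩
    rw [run_map strip _ strip_incM]
    exact hw.same
  · by_cases hn : ∃ l ∈ ls, 2 ^ (l + 1) ≤ m + 1
    · rw [if_pos hn]
      have hf : (run (incM (Fin.last c)) (true, false, M.blank) w).1.2.1 = true := by
        by_contra hc
        exact (h2.1 (by simpa using hc)).2 (e.1 hn)
      simpa only [hf, if_true] using h1
    · rw [if_neg hn]
      have hf := h2.2 ⟨trivial, fun h => hn (e.2 h)⟩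
      simpa only [hf, Bool.false_eq_true, if_false] using h1

theorem inputAt_some (x : List Bool) (p : ℕ) (h : p < x.length) :
    (inputAt x (p : ℤ)).isSome := by
  simp [inputAt, h]

theorem inputAt_len (x : List Bool) : inputAt x (x.length : ℤ) = none := by
  simp [inputAt]

theorem scan_sim (hok : OkL ok L) {w₀ : List (Cl c C M.syms)} (h₀ : w₀ ≠ []) (hL : w₀.length ≤ L)
    {ls : List ℕ} (r : ℕ) : ∀ (p : ℕ) (w : List (Cl c C M.syms)), p + r = x.length →
    RefIs w₀ w ls (p + 2) → (∀ l ∈ ls, p + 2 < 2 ^ (l + 1)) →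
    ∃ q' ip' w', (prog M c C a cw).Sim x ok (r * (2 * L + 3) + 1)
        ((prog M c C a cw).hc .scan p w) ((prog M c C a cw).hc q' ip' w') ∧
      ((q' = .rew ∧ ip' = (x.length : ℤ) - 1 ∧ RefIs w₀ w' ls (x.length + 2) ∧
          ∀ l ∈ ls, x.length + 2 < 2 ^ (l + 1)) ∨
        (q' = .rej ∧ ∃ l ∈ ls, 2 ^ (l + 1) ≤ x.length + 2)) := by
  induction r with
  | zero =>
    intro p w hp hw hlt
    obtain rfl : p = x.length := by omega
    refine ⟨.rew, _, w, (ex_sim hok (q := .scan) rfl _ w (by rw [hw.length]; exact hL) .rew .left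
      ?_).mono (by omega), 
      .inl ⟨rfl, rfl, hw, hlt⟩⟩
    intro q' d
    simp [inputAt_len]
  | succ r ih =>
    intro p w hp hw hlt
    have hs := inputAt_some x p (by omega)
    have h1 : (prog M c C a cw).Sim x ok 1 _ _ :=
      ex_sim hok (q := .scan) rfl (p : ℤ) w (by rw [hw.length]; exact hL) .scanInc .right (by
        intro q' d
        rw [Option.isSome_iff_exists] at hs
        obtain ⟨b, hb⟩ := hs
        simp [hb])
    obtain ⟨w', h2, h3⟩ := inc_ref (x := x) (a := a) (cw := cw) hok (q := .scanInc) rfl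
      (moveDir (p : ℤ) .right) hw h₀ hL
    have h4 := h1.trans h2
    by_cases hn : ∃ l ∈ ls, 2 ^ (l + 1) ≤ p + 2 + 1
    · rw [if_pos hn] at h4
      refine ⟨_, _, w', h4.mono (by rw [Nat.add_mul r 1]; omega), .inr ⟨rfl, ?_⟩⟩
      obtain ⟨l, hl, hl'⟩ := hn
      exact ⟨l, hl, by omega⟩
    · rw [if_neg hn] at h4
      have e : moveDir (p : ℤ) .right = ((p + 1 : ℕ) : ℤ) := by simp [moveDir]
      obtain ⟨q', ip', w'', h5, h6⟩ := ih (p + 1) w' (by omega) (by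
        have := h3 hn
        rwa [show p + 1 + 2 = p + 2 + 1 by omega]) (by
        push Not at hn
        intro l hl
        have := hn l hl
        omega)
      rw [e] at h4
      exact ⟨q', ip', w'', (h4.trans h5).mono (by rw [Nat.add_mul r 1]; omega), h6⟩

theorem rew_sim (hok : OkL ok L) {w : List (Cl c C M.syms)} (hL : w.length ≤ L)
    (p : ℕ) : p ≤ x.length →
    (prog M c C a cw).Sim x ok (p + 1)
        ((prog M c C a cw).hc .rew ((p : ℤ) - 1) w) ((prog M c C a cw).hc .chk 0 w) := by
  induction p with
  | zero =>
    intro _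
    have h1 : (prog M c C a cw).Sim x ok 1 _ _ :=
      ex_sim hok (q := .rew) rfl (-1 : ℤ) w hL .chk .right (by intro q' d; simp [inputAt])
    simpa [moveDir] using h1
  | succ p ih =>
    intro hp
    have hs := inputAt_some x p (by omega)
    have h1 : (prog M c C a cw).Sim x ok 1 _ _ :=
      ex_sim hok (q := .rew) rfl (p : ℤ) w hL .rew .left (by
        intro q' d
        rw [Option.isSome_iff_exists] at hs
        obtain ⟨b, hb⟩ := hs
        simp [hb])
    have h2 := h1.trans (ih (by omega))
    simp only [Nat.cast_succ, add_sub_cancel_right]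
    exact h2.mono (by omega)

/-- The machine computes the reference value `x.length + 2` in all blocks, and goes on if and only
if all blocks have length `Nat.log 2 (x.length + 2)`. -/
theorem setup_sim (hok : OkL ok L) {w : List (Cl c C M.syms)} (h₀ : w ≠ []) (hL : w.length ≤ L)
    (hc : Cmp (w.map Cl.fin)) {ls : List ℕ} (hw : RefIs w w ls 0) :
    ∃ q' ip' w', (prog M c C a cw).Sim x ok ((x.length + 3) * (2 * L + 4))
        ((prog M c C a cw).hc .set0 0 w) ((prog M c C a cw).hc q' ip' w') ∧
      ((q' = .fork ∧ ip' = 0 ∧ RefIs w w' ls (x.length + 2) ∧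
          ∀ l ∈ ls, 2 ^ l ≤ x.length + 2 ∧ x.length + 2 < 2 ^ (l + 1)) ∨
        (q' = .rej ∧ ¬ ∀ l ∈ ls, 2 ^ l ≤ x.length + 2 ∧ x.length + 2 < 2 ^ (l + 1))) := by
  have hK : (x.length + 3) * (2 * L + 4) =
      (2 * L + 2) + (2 * L + 2) + (x.length * (2 * L + 3) + 1) + (x.length + 1) + (2 * L + 2)
        + 4 := by ring
  have hbad : ∀ m, m ≤ x.length + 2 → (∃ l ∈ ls, 2 ^ (l + 1) ≤ m) →
      ¬ ∀ l ∈ ls, 2 ^ l ≤ x.length + 2 ∧ x.length + 2 < 2 ^ (l + 1) := by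
    rintro m hm ⟨l, hl, hl'⟩ h
    have := (h l hl).2
    omega
  obtain ⟨w1, s1, r1⟩ := inc_ref (x := x) (a := a) (cw := cw) hok (q := .set0) rfl 0 hw h₀ hL
  by_cases h1 : ∃ l ∈ ls, 2 ^ (l + 1) ≤ 0 + 1
  · rw [if_pos h1] at s1
    exact ⟨_, _, w1, s1.mono (by omega), .inr ⟨rfl, hbad _ (by omega) h1⟩⟩
  rw [if_neg h1] at s1
  obtain ⟨w2, s2, r2⟩ := inc_ref (x := x) (a := a) (cw := cw) hok (q := .set1) rfl 0 (r1 h1) h₀ hL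
  have s3 := s1.trans s2
  by_cases h2 : ∃ l ∈ ls, 2 ^ (l + 1) ≤ 0 + 1 + 1
  · rw [if_pos h2] at s3
    exact ⟨_, _, w2, s3.mono (by omega), .inr ⟨rfl, hbad _ (by omega) h2⟩⟩
  rw [if_neg h2] at s3
  obtain ⟨q3, ip3, w3, s4, h3⟩ := scan_sim (x := x) (a := a) (cw := cw) hok h₀ hL x.length 0 w2
    (by omega) (r2 h2) (by
      push Not at h2
      intro l hl
      have := h2 l hl
      omega)
  have s5 := s3.trans s4
  rcases h3 with ⟨rfl, rfl, h3, hlt⟩ | ⟨rfl, h3⟩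
  rotate_left
  · exact ⟨_, _, w3, s5.mono (by omega), .inr ⟨rfl, hbad _ le_rfl h3⟩⟩
  have hL3 : w3.length ≤ L := by rw [h3.length]; exact hL
  have s6 := s5.trans (rew_sim (x := x) hok hL3 x.length le_rfl)
  have s7 := s6.trans (fwd_step (x := x) hok (q := .chk) rfl 0 w3 (h3.ne_nil h₀) hL3)
  rw [read_only (fun _ _ => rfl)] at s7
  have h5 := chkM_run w3 (by rw [h3.fin]; exact hc) (true, false, M.blank)
  simp only [h3.val, List.mem_map, true_and] at h5
  by_cases h6 : ∀ l ∈ ls, 2 ^ l ≤ x.length + 2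
  · rw [if_pos (h5.2 (by rintro p ⟨l, hl, rfl⟩; exact h6 l hl))] at s7
    exact ⟨_, _, w3, s7.mono (by omega), .inl ⟨rfl, rfl, h3, fun l hl => ⟨h6 l hl, hlt l hl⟩⟩⟩
  · rw [if_neg (fun h => h6 (fun l hl => h5.1 h _ ⟨l, hl, rfl⟩))] at s7
    exact ⟨_, _, w3, s7.mono (by omega), .inr ⟨rfl, fun h => h6 (fun l hl => (h l hl).1)⟩⟩

end Setup

/-! ### The odometer -/

section Odometer

variable {c C k : ℕ}

theorem dec_congr {t : Fin (c + 1)} {w w' : List (Cl c C k)}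
    (h : w'.map (fun y => (y.fin, y.bit t, y.top t)) = w.map (fun y => (y.fin, y.bit t, y.top t))) :
    dec t w' = dec t w := by
  simp only [dec, h]

theorem dec_snd (t : Fin (c + 1)) (w : List (Cl c C k)) : (dec t w).map Prod.snd = lens w := by
  unfold dec lens
  induction w with
  | nil => rfl
  | cons y w ih =>
    simp only [List.map_cons, decl]
    split
    · simpa using ih
    · revert ih
      generalize decl (w.map (fun y => (y.fin, y.bit t, y.top t))) = A
      generalize decl (w.map (fun y => (y.fin, false, false))) = B
      intro ih
      cases A <;> cases B <;> simp_all

/-- The parts of a cell that do not concern the simulated tape. -/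
def core (y : Cl c C k) : Bool × Bool × (Fin (c + 1) → Bool) × (Fin (c + 1) → Bool) ×
    (Bool → Fin (C + 2)) := (y.fin, y.lst, y.bit, y.top, y.tok)

/-- The parts of a cell that concern the simulated tape. -/
def symhd (y : Cl c C k) : Fin k × Bool := (y.sym, y.hd)

/-- The number of blocks. -/
def nfin (w : List (Cl c C k)) : ℕ := (w.map (fun y => if y.fin then 1 else 0)).sum

/-- The counters of the word `w`: the blocks have lengths `ls`, the reference value is `N`, the
odometer has digits `e` and `U` tokens, and there are `d` branching tokens. -/
structure Inv (ls : List ℕ) (N : ℕ) (w : List (Cl c C k)) (e : Fin c → ℕ) (U d : ℕ) : Prop where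
  cmp : Cmp (w.map Cl.fin)
  ref : dec (Fin.last c) w = ls.map (fun l => (N, l))
  dig : ∀ i : Fin c, dec i.castSucc w = ls.map (fun l => (e i, l))
  uns : tsum false w = U
  bra : tsum true w = d

theorem Inv.lens_eq {ls : List ℕ} {N : ℕ} {w : List (Cl c C k)} {e : Fin c → ℕ} {U d : ℕ}
    (h : Inv ls N w e U d) : lens w = ls := by
  rw [← dec_snd (Fin.last c), h.ref]
  simp [Function.comp_def]

theorem Inv.ls_ne_nil {ls : List ℕ} {N : ℕ} {w : List (Cl c C k)} {e : Fin c → ℕ} {U d : ℕ}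
    (h : Inv ls N w e U d) (hw : w ≠ []) : ls ≠ [] := by
  have := dec_ne_nil (Fin.last c) w h.cmp hw
  rw [h.ref] at this
  rintro rfl
  exact this rfl

theorem Inv.congr {ls : List ℕ} {N : ℕ} {w w' : List (Cl c C k)} {e : Fin c → ℕ} {U d : ℕ}
    (h : Inv ls N w e U d) (hw : w'.map core = w.map core) : Inv ls N w' e U d := by
  have hg : ∀ {β : Type} (g : Bool × Bool × (Fin (c + 1) → Bool) × (Fin (c + 1) → Bool) ×
      (Bool → Fin (C + 2)) → β), w'.map (fun y => g (core y)) = w.map (fun y => g (core y)) := by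
    intro β g
    have := congrArg (List.map g) hw
    rw [List.map_map, List.map_map] at this
    exact this
  refine ⟨?_, ?_, ?_, ?_, ?_⟩
  · have : w'.map Cl.fin = w.map Cl.fin := hg (fun z => z.1)
    rw [this]; exact h.cmp
  · rw [← h.ref]
    exact dec_congr (hg (fun z => (z.1, z.2.2.1 (Fin.last c), z.2.2.2.1 (Fin.last c))))
  · intro i
    rw [← h.dig i]
    exact dec_congr (hg (fun z => (z.1, z.2.2.1 i.castSucc, z.2.2.2.1 i.castSucc)))
  · rw [← h.uns]
    exact congrArg List.sum (hg (fun z => (z.2.2.2.2 false).val))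
  · rw [← h.bra]
    exact congrArg List.sum (hg (fun z => (z.2.2.2.2 true).val))

/-- Effect on the invariant of a change of digit `i` only. -/
theorem Inv.digit {ls : List ℕ} {N : ℕ} {w w' : List (Cl c C k)} {e : Fin c → ℕ} {U d : ℕ}
    (h : Inv ls N w e U d) (i : Fin c) (m : ℕ)
    (hg : ∀ {β : Type} (g : Cl c C k → β), (∀ (y : Cl c C k) (b t : Bool),
      g { y with bit := Function.update y.bit i.castSucc b
                 top := Function.update y.top i.castSucc t } = g y) → w'.map g = w.map g)
    (hi : dec i.castSucc w' = ls.map (fun l => (m, l))) :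
    Inv ls N w' (Function.update e i m) U d := by
  refine ⟨?_, ?_, ?_, ?_, ?_⟩
  · have : w'.map Cl.fin = w.map Cl.fin := hg _ (fun _ _ _ => rfl)
    rw [this]; exact h.cmp
  · rw [← h.ref]
    refine dec_congr (hg _ ?_)
    intro y b t
    have : Fin.last c ≠ i.castSucc := (Fin.castSucc_lt_last i).ne'
    simp [Function.update_of_ne this]
  · intro j
    by_cases hj : j = i
    · subst hj; simpa using hi
    · rw [Function.update_of_ne hj, ← h.dig j]
      refine dec_congr (hg _ ?_)
      intro y b t
      have : j.castSucc ≠ i.castSucc := fun h => hj (Fin.castSucc_injective _ h)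
      simp [Function.update_of_ne this]
  · rw [← h.uns]
    exact congrArg List.sum (hg (fun z => (z.tok false).val) (fun _ _ _ => rfl))
  · rw [← h.bra]
    exact congrArg List.sum (hg (fun z => (z.tok true).val) (fun _ _ _ => rfl))

theorem inc_map (t : Fin (c + 1)) {β : Type} (g : Cl c C k → β)
    (hg : ∀ (y : Cl c C k) (b b' : Bool), g { y with bit := Function.update y.bit t b
                                                     top := Function.update y.top t b' } = g y)
    (s : Sig k) (w : List (Cl c C k)) : (run (incM t) s w).2.map g = w.map g := by
  refine run_map g _ ?_ s w
  intro s y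
  unfold incM
  split
  · exact hg _ _ _
  · have := hg y (xor (y.bit t) s.1) (y.top t)
    rwa [Function.update_eq_self] at this

theorem Inv.inc {ls : List ℕ} {N : ℕ} {w : List (Cl c C k)} {e : Fin c → ℕ} {U d : ℕ}
    (h : Inv ls N w e U d) (i : Fin c) (b : Fin k) (hl : ∀ l ∈ ls, e i + 1 < 2 ^ (l + 1)) :
    Inv ls N (run (incM i.castSucc) (true, false, b) w).2 (Function.update e i (e i + 1)) U d := by
  refine h.digit i _ (fun g hg => inc_map _ g hg _ _) ?_
  obtain ⟨h1, h2⟩ := incM_run i.castSucc w (true, false, b)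
  rw [h2, bump_true, h.dig i]
  · simp [Function.comp_def]
  · rw [h1, ovf_true, h.dig i]
    refine ⟨rfl, ?_⟩
    rintro ⟨p, hp, hp'⟩
    obtain ⟨l, hl', rfl⟩ := List.mem_map.1 hp
    have := hl l hl'
    simp only at hp'
    omega

theorem Inv.rst {ls : List ℕ} {N : ℕ} {w : List (Cl c C k)} {e : Fin c → ℕ} {U d : ℕ}
    (h : Inv ls N w e U d) (i : Fin c) (s : Sig k) :
    Inv ls N (run (rstM i.castSucc) s w).2 (Function.update e i 0) U d := by
  refine h.digit i _ (fun g hg => run_map g _ ?_ s w) ?_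
  · intro s y
    exact hg y false false
  · unfold rstM
    rw [run_const, dec, List.map_map, decl_zero w _ (fun y _ => by simp), h.lens_eq]

theorem Inv.res {ls : List ℕ} {N : ℕ} {w : List (Cl c C k)} {e : Fin c → ℕ} {U d : ℕ}
    (h : Inv ls N w e U d) (s : Sig k) :
    Inv ls N (run resM s w).2 (fun _ => 0) (nfin w) d := by
  have hg : ∀ {β : Type} (g : Cl c C k → β) (_ : ∀ s y, g (resM s y).2 = g y),
      (run resM s w).2.map g = w.map g := fun g hg => run_map g _ hg s w
  refine ⟨?_, ?_, ?_, ?_, ?_⟩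
  · have : (run resM s w).2.map Cl.fin = w.map Cl.fin := hg _ (fun _ _ => rfl)
    rw [this]; exact h.cmp
  · rw [← h.ref]
    exact dec_congr (hg _ (fun _ _ => by simp [resM]))
  · intro i
    unfold resM
    have : i.castSucc ≠ Fin.last c := (Fin.castSucc_lt_last i).ne
    rw [run_const, dec, List.map_map, decl_zero w _ (fun y _ => by simp [this]), h.lens_eq]
  · unfold resM
    rw [run_const, tsum, nfin, List.map_map]
    congr 1
    refine List.map_congr_left (fun y _ => ?_)
    cases hy : y.fin <;> simp [hy]
  · rw [← h.bra]
    exact congrArg List.sum (hg (fun z => (z.tok true).val) (fun _ _ => by simp [resM]))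

theorem tokM_map (b : Bool) {β : Type} (g : Cl c C k → β)
    (hg : ∀ (y : Cl c C k) (m : Fin (C + 2)),
      g { y with tok := Function.update y.tok b m } = g y)
    (s : Sig k) (w : List (Cl c C k)) : (run (tokM b) s w).2.map g = w.map g := by
  refine run_map g _ ?_ s w
  intro s y
  unfold tokM
  split
  · exact hg _ _
  · rfl

theorem Inv.tokf {ls : List ℕ} {N : ℕ} {w : List (Cl c C k)} {e : Fin c → ℕ} {U d : ℕ}
    (h : Inv ls N w e U d) (s : Sig k) :
    Inv ls N (run (tokM false) s w).2 e (tsum false (run (tokM false) s w).2) d := by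
  have hg : ∀ {β : Type} (g : Cl c C k → β) (_ : ∀ (y : Cl c C k) (m : Fin (C + 2)),
      g { y with tok := Function.update y.tok false m } = g y),
      (run (tokM false) s w).2.map g = w.map g := fun g hg => tokM_map _ g hg s w
  refine ⟨?_, ?_, fun i => ?_, rfl, ?_⟩
  · have : (run (tokM false) s w).2.map Cl.fin = w.map Cl.fin := hg _ (fun _ _ => rfl)
    rw [this]; exact h.cmp
  · rw [← h.ref]; exact dec_congr (hg _ (fun _ _ => rfl))
  · rw [← h.dig i]; exact dec_congr (hg _ (fun _ _ => rfl))
  · rw [← h.bra]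
    exact congrArg List.sum (hg (fun z => (z.tok true).val) (fun _ _ => by simp))

theorem Inv.tokt {ls : List ℕ} {N : ℕ} {w : List (Cl c C k)} {e : Fin c → ℕ} {U d : ℕ}
    (h : Inv ls N w e U d) (s : Sig k) :
    Inv ls N (run (tokM true) s w).2 e U (tsum true (run (tokM true) s w).2) := by
  have hg : ∀ {β : Type} (g : Cl c C k → β) (_ : ∀ (y : Cl c C k) (m : Fin (C + 2)),
      g { y with tok := Function.update y.tok true m } = g y),
      (run (tokM true) s w).2.map g = w.map g := fun g hg => tokM_map _ g hg s w
  refine ⟨?_, ?_, fun i => ?_, ?_, rfl⟩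
  · have : (run (tokM true) s w).2.map Cl.fin = w.map Cl.fin := hg _ (fun _ _ => rfl)
    rw [this]; exact h.cmp
  · rw [← h.ref]; exact dec_congr (hg _ (fun _ _ => rfl))
  · rw [← h.dig i]; exact dec_congr (hg _ (fun _ _ => rfl))
  · rw [← h.uns]
    exact congrArg List.sum (hg (fun z => (z.tok false).val) (fun _ _ => by simp))

/-- The value of the digits of the odometer. -/
def oval (N : ℕ) (e : Fin c → ℕ) : ℕ := ∑ i, e i * N ^ (i : ℕ)

theorem oval_update (N : ℕ) (e : Fin c → ℕ) (i : Fin c) (m : ℕ) :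
    oval N (Function.update e i m) + e i * N ^ (i : ℕ) = oval N e + m * N ^ (i : ℕ) := by
  unfold oval
  rw [← Finset.add_sum_erase _ _ (Finset.mem_univ i),
    ← Finset.add_sum_erase (a := i) _ (fun i => e i * N ^ (i : ℕ)) (Finset.mem_univ i)]
  have : ∑ j ∈ Finset.univ.erase i, Function.update e i m j * N ^ (j : ℕ) =
      ∑ j ∈ Finset.univ.erase i, e j * N ^ (j : ℕ) := by
    refine Finset.sum_congr rfl (fun j hj => ?_)
    rw [Function.update_of_ne (Finset.ne_of_mem_erase hj)]
  rw [this, Function.update_self]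
  ring

theorem oval_lt {N c : ℕ} (e : Fin c → ℕ) (he : ∀ i, e i < N) :
    oval N e < N ^ c := by
  induction c with
  | zero => simp [oval]
  | succ c ih =>
    have h1 := ih (fun i => e i.castSucc) (fun i => he _)
    unfold oval at h1 ⊢
    rw [Fin.sum_univ_castSucc]
    simp only [Fin.val_castSucc, Fin.val_last]
    have h2 := he (Fin.last c)
    have h3 : (e (Fin.last c) + 1) * N ^ c ≤ N * N ^ c := Nat.mul_le_mul_right _ h2
    rw [pow_succ']
    linarith [h3, Nat.add_mul (e (Fin.last c)) 1 (N ^ c)]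

end Odometer

section OdometerSim

variable {M : ATM} {c C a cw : ℕ} {x : List Bool} {L : ℕ}
  {ok : GC (St (Ctl M c) (Sig M.syms) (Bool × Bool) (prog M c C a cw).W)
    (Option (Bool × Cl c C M.syms)) → Prop}

/-- Adding `N ^ i` to the odometer: this lowers the remaining budget by `N ^ i`. -/
theorem digit_sim (hok : OkL ok L) {ls : List ℕ} {N : ℕ} (hls : ∀ l ∈ ls, N < 2 ^ (l + 1))
    (tr : TR M) (ip : ℤ) (r : ℕ) : ∀ (i : ℕ) (w : List (Cl c C M.syms)) (e : Fin c → ℕ) (U d : ℕ),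
    i + r = c → Inv ls N w e U d → (∀ i, e i < N) → 0 < U → w ≠ [] → w.length ≤ L →
    ∃ w' e' U', (prog M c C a cw).Sim x ok ((3 * r + 1) * (2 * L + 2))
        ((prog M c C a cw).hc (digC i tr) ip w) ((prog M c C a cw).hc (.wr tr) ip w') ∧
      Inv ls N w' e' U' d ∧ (∀ i, e' i < N) ∧ w'.map symhd = w.map symhd ∧ nfin w' = nfin w ∧
      U * N ^ c + oval N e' = U' * N ^ c + oval N e + N ^ i := by
  induction r with
  | zero =>
    intro i w e U d hi hI he hU hw hL
    obtain rfl : i = c := by omega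
    have ed : (digC i tr : Ctl M i) = .ut tr := by simp [digC]
    rw [ed]
    have h1 := fwd_step (x := x) hok (q := .ut tr) rfl ip w hw hL
    rcases tokM_run false w (false, false, M.blank) rfl with ⟨_, h3⟩ | ⟨h2, h3⟩
    · rw [hI.uns] at h3; omega
    · rw [if_pos h2] at h1
      refine ⟨_, e, _, h1.mono (by omega), hI.tokf _, he, tokM_map _ _ (fun _ _ => rfl) _ _,
        congrArg List.sum (tokM_map _ _ (fun _ _ => rfl) _ _), ?_⟩
      rw [← hI.uns, h3]
      ring
  | succ r ih =>
    intro i w e U d hi hI he hU hw hL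
    have hic : i < c := by omega
    have ed : (digC i tr : Ctl M c) = .inc ⟨i, hic⟩ tr := by simp [digC, hic]
    rw [ed]
    have h1 := fwd_step (x := x) hok (q := .inc ⟨i, hic⟩ tr) rfl ip w hw hL
    have hI1 := hI.inc ⟨i, hic⟩ M.blank (fun l hl => by
      have := hls l hl
      have := he ⟨i, hic⟩
      omega)
    have m1 := @inc_map c C M.syms (Fin.castSucc ⟨i, hic⟩)
    have ms1 := m1 symhd (fun _ _ _ => rfl) (true, false, M.blank) w
    have mf1 : nfin (run (incM (Fin.castSucc ⟨i, hic⟩)) (true, false, M.blank) w).2 = nfin w :=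
      congrArg List.sum (m1 (fun y => if y.fin then 1 else 0) (fun _ _ _ => rfl)
        (true, false, M.blank) w)
    have hl1 : (run (incM (Fin.castSucc ⟨i, hic⟩)) (true, false, M.blank) w).2.length
      = w.length := run_length _ _ _
    revert h1 hI1 ms1 mf1 hl1
    generalize (run (incM (Fin.castSucc ⟨i, hic⟩)) (true, false, M.blank) w).2 = w1
    intro h1 hI1 ms1 mf1 hl1
    have hw1 : w1 ≠ [] := by
      rintro rfl
      exact hw (List.length_eq_zero_iff.1 hl1.symm)
    have hL1 : w1.length ≤ L := by omega
    have h2 := h1.trans (fwd_step (x := x) hok (q := .cmp ⟨i, hic⟩ tr) rfl ip w1 hw1 hL1)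
    rw [read_only (fun _ _ => rfl)] at h2
    have hcmp := cmpM_run (Fin.castSucc ⟨i, hic⟩) w1 hI1.cmp (true, false, M.blank)
    rw [hI1.ref, hI1.dig ⟨i, hic⟩, Function.update_self] at hcmp
    have hov := oval_update N e ⟨i, hic⟩
    by_cases heq : e ⟨i, hic⟩ + 1 = N
    · rw [if_pos (hcmp.2 ⟨rfl, by rw [heq]⟩)] at h2
      have h3 := h2.trans (fwd_step (x := x) hok (q := .rst ⟨i, hic⟩ tr) rfl ip w1 hw1 hL1)
      have hI2 := hI1.rst ⟨i, hic⟩ (false, false, M.blank)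
      rw [Function.update_idem] at hI2
      have m2 := fun {β : Type} (g : Cl c C M.syms → β) hg =>
        run_map g (rstM (Fin.castSucc ⟨i, hic⟩)) hg (false, false, M.blank) w1
      have ms2 := m2 symhd (fun _ _ => rfl)
      have mf2 : nfin (run (rstM (Fin.castSucc ⟨i, hic⟩)) (false, false, M.blank) w1).2 = nfin w1 :=
        congrArg List.sum (m2 (fun y => if y.fin then 1 else 0) (fun _ _ => rfl))
      have hl2 : (run (rstM (Fin.castSucc ⟨i, hic⟩)) (false, false, M.blank) w1).2.length
        = w1.length := run_length _ _ _
      revert h3 hI2 ms2 mf2 hl2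
      generalize (run (rstM (Fin.castSucc ⟨i, hic⟩)) (false, false, M.blank) w1).2 = w2
      intro h3 hI2 ms2 mf2 hl2
      have hw2 : w2 ≠ [] := by
        rintro rfl
        exact hw1 (List.length_eq_zero_iff.1 hl2.symm)
      obtain ⟨w', e', U', h4, h5, h6, h7, h8, h9⟩ := ih (i + 1) w2 _ U d (by omega) hI2 (by
        intro j
        by_cases hj : j = ⟨i, hic⟩
        · subst hj; rw [Function.update_self]; omega
        · rw [Function.update_of_ne hj]; exact he j) hU hw2 (by omega)
      refine ⟨w', e', U', (h3.trans h4).mono ?_, h5, h6, by rw [h7, ms2, ms1],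
        by rw [h8, mf2, mf1], ?_⟩
      · apply le_of_eq; ring
      · have h10 := hov 0
        simp only [zero_mul, add_zero] at h10
        have h11 : N ^ (i + 1) = e ⟨i, hic⟩ * N ^ i + N ^ i := by
          rw [pow_succ', ← heq]; ring_nf
        omega
    · rw [if_neg (fun h => heq (by
        have h' := (hcmp.1 h).2
        obtain ⟨l, ls', rfl⟩ := List.exists_cons_of_ne_nil (hI.ls_ne_nil hw)
        simp only [List.map_cons, List.cons.injEq, Prod.mk.injEq] at h'
        exact h'.1.1))] at h2
      refine ⟨w1, _, U, h2.mono ?_, hI1, ?_, ms1, mf1, ?_⟩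
      · rw [show (3 * (r + 1) + 1) * (2 * L + 2) = (2 * L + 2) + (2 * L + 2) +
          (3 * r + 2) * (2 * L + 2) by ring]
        omega
      · intro j
        by_cases hj : j = ⟨i, hic⟩
        · subst hj; rw [Function.update_self]; have := he ⟨i, hic⟩; omega
        · rw [Function.update_of_ne hj]; exact he j
      · have h10 := hov (e ⟨i, hic⟩ + 1)
        rw [Nat.add_mul, one_mul] at h10
        simp only at h10
        omega

end OdometerSim

/-! ### The simulated work tape -/

section Memory

variable {c C k : ℕ}

/-- The tape holding the word `u` on cells `0, …, u.length - 1`. -/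
def tapeOf (blank : Fin k) (u : List (Fin k)) : ℤ → Fin k :=
  fun i => if 0 ≤ i then (u[i.toNat]?).getD blank else blank

theorem tapeOf_at (blank : Fin k) (pre post : List (Fin k)) (b : Fin k) :
    tapeOf blank (pre ++ b :: post) pre.length = b := by
  simp [tapeOf]

theorem tapeOf_update (blank : Fin k) (pre post : List (Fin k)) (b b' : Fin k) (p : ℤ)
    (hp : p = pre.length) :
    Function.update (tapeOf blank (pre ++ b :: post)) p b' = tapeOf blank (pre ++ b' :: post) := by
  subst hp
  funext i
  by_cases h : i = pre.length
  · subst h; rw [Function.update_self, tapeOf_at]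
  · rw [Function.update_of_ne h]
    simp only [tapeOf]
    split
    · congr 1
      have : i.toNat ≠ pre.length := by omega
      rw [List.getElem?_append, List.getElem?_append]
      split
      · rfl
      · rw [List.getElem?_cons, List.getElem?_cons]
        have : i.toNat - pre.length ≠ 0 := by omega
        simp [this]
    · rfl

/-- The word `w` represents the work tape contents `tape` and the work head position `p`. -/
def Mem (blank : Fin k) (w : List (Cl c C k)) (tape : ℤ → Fin k) (p : ℤ) : Prop :=
  ∃ pre y post, w = pre ++ y :: post ∧ (∀ z ∈ pre, z.hd = false) ∧ y.hd = true ∧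
    (∀ z ∈ post, z.hd = false) ∧ p = (pre.length : ℤ) ∧ tape = tapeOf blank (w.map Cl.sym)

theorem Mem.congr {blank : Fin k} {w w' : List (Cl c C k)} {tape : ℤ → Fin k} {p : ℤ}
    (h : Mem blank w tape p) (hw : w'.map symhd = w.map symhd) : Mem blank w' tape p := by
  obtain ⟨pre, y, post, rfl, h1, h2, h3, h4, h5⟩ := h
  have hs : w'.map Cl.sym = (pre ++ y :: post).map Cl.sym := by
    have := congrArg (List.map Prod.fst) hw
    rw [List.map_map, List.map_map] at this
    exact this
  rw [List.map_append, List.map_cons] at hw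
  obtain ⟨pre', w'', rfl, hp, hw''⟩ := List.map_eq_append_iff.1 hw
  obtain ⟨y', post', rfl, hy, hpost⟩ := List.map_eq_cons_iff.1 hw''
  have key : ∀ {u u' : List (Cl c C k)}, u'.map symhd = u.map symhd → (∀ z ∈ u, z.hd = false) →
      ∀ z ∈ u', z.hd = false := by
    intro u u' he hu z hz
    have : symhd z ∈ u.map symhd := by rw [← he]; exact List.mem_map_of_mem hz
    obtain ⟨z', hz', he'⟩ := List.mem_map.1 this
    have := hu z' hz'
    simp only [symhd, Prod.mk.injEq] at he'
    rw [← he'.2]; exact this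
  refine ⟨pre', y', post', rfl, key hp h1, ?_, key hpost h3, ?_, ?_⟩
  · simp only [symhd, Prod.mk.injEq] at hy
    rw [hy.2]; exact h2
  · have := congrArg List.length hp
    simp only [List.length_map] at this
    rw [h4, this]
  · rw [h5, hs]

theorem Mem.bounds {blank : Fin k} {w : List (Cl c C k)} {tape : ℤ → Fin k} {p : ℤ}
    (h : Mem blank w tape p) : 0 ≤ p ∧ p < (w.length : ℤ) ∧
      ∀ i : ℤ, (i < 0 ∨ (w.length : ℤ) ≤ i) → tape i = blank := by
  obtain ⟨pre, y, post, rfl, h1, h2, h3, h4, h5⟩ := h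
  refine ⟨by omega, by simp [h4], ?_⟩
  rintro i hi
  rw [h5, tapeOf]
  split
  · rw [List.getElem?_eq_none]
    · rfl
    · rw [List.length_map]; omega
  · rfl

theorem Mem.read {blank : Fin k} {w : List (Cl c C k)} {tape : ℤ → Fin k} {p : ℤ}
    (h : Mem blank w tape p) (s : Sig k) : (run readM s w).1.2.2 = tape p := by
  obtain ⟨pre, y, post, rfl, h1, h2, h3, h4, h5⟩ := h
  have e1 : ∀ s : Sig k, run readM s pre = (s, pre) :=
    fun s => run_fix _ _ _ (fun z hz => by simp [readM, h1 z hz])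
  have e2 : ∀ s : Sig k, run readM s post = (s, post) :=
    fun s => run_fix _ _ _ (fun z hz => by simp [readM, h3 z hz])
  rw [run_append, e1]
  simp only [run, e2]
  have := tapeOf_at blank (pre.map Cl.sym) (post.map Cl.sym) y.sym
  rw [List.length_map] at this
  rw [h5, h4, List.map_append, List.map_cons, this]
  simp [readM, h2]

/-- Shifting the head mark off the end of the word. -/
theorem shM_run_nil (pre : List (Cl c C k)) (y : Cl c C k) (h1 : ∀ z ∈ pre, z.hd = false)
    (h2 : y.hd = true) (s2 : Bool × Fin k) :
    run shM (false, s2) (pre ++ [y]) = ((true, s2), pre ++ [{ y with hd := false }]) := by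
  have e : run shM (false, s2) pre = ((false, s2), pre) :=
    run_fix _ _ _ (fun z hz => by simp [shM, h1 z hz])
  rw [run_append, e]
  simp [run, shM, h2]

/-- Shifting the head mark by one cell. -/
theorem shM_run_cons (pre post : List (Cl c C k)) (y z : Cl c C k) (h1 : ∀ z ∈ pre, z.hd = false)
    (h2 : y.hd = true) (h3 : ∀ u ∈ z :: post, u.hd = false) (s2 : Bool × Fin k) :
    run shM (false, s2) (pre ++ y :: z :: post) =
      ((false, s2), pre ++ { y with hd := false } :: { z with hd := true } :: post) := by
  have e : ∀ u : List (Cl c C k), (∀ z ∈ u, z.hd = false) →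
      run shM (false, s2) u = ((false, s2), u) :=
    fun u hu => run_fix _ _ _ (fun z hz => by simp [shM, hu z hz])
  rw [run_append, e pre h1]
  have hz := h3 z (by simp)
  have e' := e post (fun z hz => h3 z (by simp [hz]))
  simp [run, shM, h2, hz, e']

theorem sweep_map {β : Type} (g : Cl c C k → β) {τf τb : Sig k → Cl c C k → Sig k × Cl c C k}
    (hf : ∀ s y, g (τf s y).2 = g y) (hb : ∀ s y, g (τb s y).2 = g y) (s : Sig k)
    (w : List (Cl c C k)) : (sweep τf τb s w).2.map g = w.map g := by
  unfold sweep
  rw [List.map_reverse, run_map g τb hb, List.map_reverse, run_map g τf hf, List.reverse_reverse]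

theorem core_wrF (b : Fin k) (y : Cl c C k) : core (wrF b y) = core y := by
  unfold wrF; split <;> rfl

theorem core_shM (s : Sig k) (y : Cl c C k) : core (shM s y).2 = core y := by
  unfold shM; split
  · rfl
  · split <;> rfl

theorem run_comp_map (τ : Sig k → Cl c C k → Sig k × Cl c C k) (g : Cl c C k → Cl c C k)
    (w : List (Cl c C k)) : ∀ s, run (fun s y => τ s (g y)) s w = run τ s (w.map g) := by
  induction w with
  | nil => intro s; rfl
  | cons y w ih => intro s; simp [run, ih]

theorem map_wrF {pre post : List (Cl c C k)} {y : Cl c C k} (h1 : ∀ z ∈ pre, z.hd = false)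
    (h2 : y.hd = true) (h3 : ∀ z ∈ post, z.hd = false) (b : Fin k) :
    (pre ++ y :: post).map (wrF b) = pre ++ { y with sym := b } :: post := by
  have e : ∀ u : List (Cl c C k), (∀ z ∈ u, z.hd = false) → u.map (wrF b) = u := by
    intro u hu
    conv_rhs => rw [← List.map_id u]
    exact List.map_congr_left (fun z hz => by simp [wrF, hu z hz])
  simp [e pre h1, e post h3, wrF, h2]

end Memory

section MemorySim

variable {M : ATM} {c C a cw : ℕ} {x : List Bool} {L : ℕ}
  {ok : GC (St (Ctl M c) (Sig M.syms) (Bool × Bool) (prog M c C a cw).W)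
    (Option (Bool × Cl c C M.syms)) → Prop}

/-- Writing a symbol and moving the work head; the simulation stops if the head leaves the word. -/
theorem wr_sim (hok : OkL ok L) {w : List (Cl c C M.syms)} (hL : w.length ≤ L)
    {tape : ℤ → Fin M.syms} {p : ℤ} (hm : Mem M.blank w tape p) (tr : TR M) (ip : ℤ) :
    ∃ q' w', (prog M c C a cw).Sim x ok (2 * L + 2)
        ((prog M c C a cw).hc (.wr tr) ip w) ((prog M c C a cw).hc q' ip w') ∧
      w'.map core = w.map core ∧
      ((q' = .rej ∧ (moveDir p tr.2.2.2 < 0 ∨ (w.length : ℤ) ≤ moveDir p tr.2.2.2)) ∨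
        (q' = .sim tr.1 ∧
          Mem M.blank w' (Function.update tape p tr.2.1) (moveDir p tr.2.2.2))) := by
  obtain ⟨q, b, di, dw⟩ := tr
  obtain ⟨pre, y, post, rfl, h1, h2, h3, h4, h5⟩ := hm
  have hne : pre ++ y :: post ≠ [] := by simp
  have htape : Function.update tape p b =
      tapeOf M.blank (pre.map Cl.sym ++ b :: post.map Cl.sym) := by
    rw [h5, List.map_append, List.map_cons, tapeOf_update _ _ _ _ _ p (by simpa using h4)]
  cases dw with
  | stay =>
    have hs := fwd_step (x := x) (a := a) (cw := cw) hok (q := .wr (q, b, di, .stay)) rfl ip _ hne hL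
    rw [run_const, map_wrF h1 h2 h3] at hs
    refine ⟨_, _, hs, by simp [core], .inr ⟨rfl, pre, _, post, rfl, h1, h2, h3, h4, ?_⟩⟩
    simp [htape]
  | right =>
    have hs := fwd_step (x := x) (a := a) (cw := cw) hok (q := .wr (q, b, di, .right)) rfl ip _ hne hL
    rw [run_comp_map, map_wrF h1 h2 h3] at hs
    cases post with
    | nil =>
      rw [shM_run_nil pre { y with sym := b } h1 h2] at hs
      refine ⟨_, _, hs, by simp [core], .inl ⟨rfl, .inr ?_⟩⟩
      simp [moveDir, h4]
    | cons z post' =>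
      rw [shM_run_cons pre post' { y with sym := b } z h1 h2 h3] at hs
      refine ⟨_, _, hs, by simp [core], .inr ⟨rfl, pre ++ [{ y with sym := b, hd := false }],
        { z with hd := true }, post', by simp, ?_, rfl, fun z hz => h3 z (by simp [hz]), ?_, ?_⟩⟩
      · intro z hz
        rcases List.mem_append.1 hz with hz | hz
        · exact h1 z hz
        · rw [List.mem_singleton.1 hz]
      · simp [moveDir, h4]
      · simp [htape]
  | left =>
    have hs : ∀ r, sweep (fun s y => (s, wrF b y)) shM (false, false, M.blank)
        (pre ++ y :: post) = r → (prog M c C a cw).Sim x ok (2 * L + 2)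
          ((prog M c C a cw).hc (.wr (q, b, di, .left)) ip (pre ++ y :: post))
          ((prog M c C a cw).hc (if r.1.1 then .rej else .sim q) ip r.2) := by
      rintro _ rfl
      exact pass_sim (P := prog M c C a cw) hok (q := .wr (q, b, di, .left)) rfl ip _ hne hL
    have hsw : ∀ r, run shM (false, false, M.blank)
        (post.reverse ++ { y with sym := b } :: pre.reverse) = r →
        sweep (fun s y => (s, wrF b y)) shM (false, false, M.blank) (pre ++ y :: post) =
          (r.1, r.2.reverse) := by
      rintro _ rfl
      unfold sweep
      rw [run_const, map_wrF h1 h2 h3]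
      simp only [List.reverse_append, List.reverse_cons, List.append_assoc, List.singleton_append]
    rcases List.eq_nil_or_concat pre with rfl | ⟨pre', z, rfl⟩
    · replace hs := hs _ (hsw _ (shM_run_nil post.reverse { y with sym := b }
        (by simpa using h3) h2 _))
      refine ⟨_, _, hs, by simp [core], .inl ⟨rfl, .inl ?_⟩⟩
      simp [moveDir, h4]
    · have e : (pre'.concat z).reverse = z :: pre'.reverse := by simp
      rw [e] at hsw
      replace hs := hs _ (hsw _ (shM_run_cons post.reverse pre'.reverse { y with sym := b } z
        (by simpa using h3) h2 (by
          intro u hu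
          refine h1 u ?_
          simpa [or_comm] using hu) _))
      refine ⟨_, _, hs, by simp [core], .inr ⟨rfl, pre', { z with hd := true },
        { y with sym := b, hd := false } :: post, by simp, fun z hz => h1 z (by simp [hz]), rfl,
        ?_, ?_, ?_⟩⟩
      · intro z hz
        rcases List.mem_cons.1 hz with hz | hz
        · rw [hz]
        · exact h3 z hz
      · simp [moveDir, h4]
      · simp [htape]

end MemorySim

/-! ### The simulation -/

/-- The word `w` of length `n` represents the configuration `cfg` of `M`, with `d` branchings and
`j` subdivisions of the current edge left. -/
structure Rep (M : ATM) {c C : ℕ} (ls : List ℕ) (N v n : ℕ) (w : List (Cl c C M.syms)) (j d : ℕ)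
    (cfg : M.Cfg) : Prop where
  inv : ∃ e U, Inv ls N w e U d ∧ (∀ i, e i < N) ∧ U * N ^ c = j + oval N e
  mem : Mem M.blank w cfg.tape cfg.wpos
  blocks : nfin w = v
  len : w.length = n

section SimulationSteps

variable {M : ATM} {c C a cw : ℕ} {x : List Bool} {L : ℕ}
  {ok : GC (St (Ctl M c) (Sig M.syms) (Bool × Bool) (prog M c C a cw).W)
    (Option (Bool × Cl c C M.syms)) → Prop}
  {ls : List ℕ} {N v n : ℕ} {w : List (Cl c C M.syms)} {j d : ℕ} {cfg : M.Cfg}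

theorem Rep.cfgOk (h : Rep M ls N v n w j d cfg) : M.CfgOk n cfg := by
  obtain ⟨h1, h2, h3⟩ := h.mem.bounds
  rw [h.len] at h2 h3
  exact ⟨h1, h2, h3⟩

theorem Rep.ne_nil (h : Rep M ls N v n w j d cfg) : w ≠ [] := by
  obtain ⟨h1, h2, h3⟩ := h.mem.bounds
  rintro rfl
  simp at h2
  omega

theorem rd_sim (hok : OkL ok L) (hL : n ≤ L) (h : Rep M ls N v n w j d cfg) :
    (prog M c C a cw).Sim x ok (2 * L + 2) ((prog M c C a cw).hc (.sim cfg.state) cfg.ipos w)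
      ((prog M c C a cw).hc (.rd cfg.state (cfg.tape cfg.wpos)) cfg.ipos w) := by
  have hs := fwd_step (x := x) (a := a) (cw := cw) hok (q := .sim cfg.state) rfl cfg.ipos w
    h.ne_nil (h.len ▸ hL)
  rw [h.mem.read, read_only] at hs
  · exact hs
  · intro s y; unfold readM; split <;> rfl

theorem wr_rep (hok : OkL ok L) (hL : n ≤ L) (h : Rep M ls N v n w j d cfg) (tr : TR M) (ip : ℤ) :
    ∃ q' w', (prog M c C a cw).Sim x ok (2 * L + 2)
        ((prog M c C a cw).hc (.wr tr) ip w) ((prog M c C a cw).hc q' ip w') ∧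
      ((q' = .rej ∧ ¬ M.CfgOk n (M.applyTr cfg tr)) ∨
        (q' = .sim tr.1 ∧ Rep M ls N v n w' j d (M.applyTr cfg tr))) := by
  obtain ⟨q', w', h1, h2, h3⟩ := wr_sim (x := x) (a := a) (cw := cw) hok (h.len ▸ hL) h.mem tr ip
  refine ⟨q', w', h1, ?_⟩
  have hl : w'.length = w.length := by simpa using congrArg List.length h2
  rcases h3 with ⟨h3, h4⟩ | ⟨h3, h4⟩
  · refine .inl ⟨h3, fun hc => ?_⟩
    obtain ⟨h5, h6, -⟩ := hc
    rw [h.len] at h4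
    simp only [ATM.applyTr] at h5 h6
    omega
  · obtain ⟨e, U, hI, he, hU⟩ := h.inv
    refine .inr ⟨h3, ⟨e, U, hI.congr h2, he, hU⟩, h4, ?_, by rw [hl, h.len]⟩
    rw [← h.blocks]
    have := congrArg (List.map (fun z => if z.1 then 1 else 0)) h2
    rw [List.map_map, List.map_map] at this
    exact congrArg List.sum this

theorem odo_rej (hok : OkL ok L) (hL : n ≤ L) (h : Rep M ls N v n w 0 d cfg) (tr : TR M) (ip : ℤ) :
    (prog M c C a cw).Sim x ok (2 * L + 2)
        ((prog M c C a cw).hc (.odo tr) ip w) ((prog M c C a cw).hc .rej ip w) := by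
  have hs := fwd_step (x := x) (a := a) (cw := cw) hok (q := .odo tr) rfl ip w
    h.ne_nil (h.len ▸ hL)
  obtain ⟨h1, h2⟩ := hasM_run w (false, false, M.blank)
  obtain ⟨e, U, hI, he, hU⟩ := h.inv
  have hlt := oval_lt e he
  have hU0 : U = 0 := by
    by_contra hne
    have : 1 * N ^ c ≤ U * N ^ c := Nat.mul_le_mul_right _ (by omega)
    omega
  rw [h1, if_neg (by rw [h2, hI.uns]; simp [hU0])] at hs
  exact hs

theorem odo_sim (hok : OkL ok L) (hL : n ≤ L) (hls : ∀ l ∈ ls, N < 2 ^ (l + 1))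
    (h : Rep M ls N v n w (j + 1) d cfg) (tr : TR M) (ip : ℤ) :
    ∃ w', (prog M c C a cw).Sim x ok ((3 * c + 2) * (2 * L + 2))
        ((prog M c C a cw).hc (.odo tr) ip w) ((prog M c C a cw).hc (.wr tr) ip w') ∧
      Rep M ls N v n w' j d cfg := by
  have hs := fwd_step (x := x) (a := a) (cw := cw) hok (q := .odo tr) rfl ip w
    h.ne_nil (h.len ▸ hL)
  obtain ⟨h1, h2⟩ := hasM_run w (false, false, M.blank)
  obtain ⟨e, U, hI, he, hU⟩ := h.inv
  have hU0 : 0 < U := by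
    rcases Nat.eq_zero_or_pos U with rfl | h
    · rw [zero_mul] at hU; omega
    · exact h
  rw [h1, if_pos (by rw [h2, hI.uns]; simp [hU0])] at hs
  obtain ⟨w', e', U', g1, g2, g3, g4, g5, g6⟩ := digit_sim (x := x) (a := a) (cw := cw) hok hls tr ip
    c 0 w e U d (by omega) hI he hU0 h.ne_nil (h.len ▸ hL)
  refine ⟨w', (hs.trans g1).mono (le_of_eq (by ring)), ⟨e', U', g2, g3, ?_⟩, h.mem.congr g4,
    by rw [g5, h.blocks], ?_⟩
  · rw [pow_zero] at g6; omega
  · rw [← h.len]; simpa using congrArg List.length g4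

theorem tokd_rej (hok : OkL ok L) (hL : n ≤ L) (h : Rep M ls N v n w j 0 cfg) (t₁ t₂ : TR M)
    (ip : ℤ) : ∃ w', (prog M c C a cw).Sim x ok (2 * L + 2)
        ((prog M c C a cw).hc (.tokd t₁ t₂) ip w) ((prog M c C a cw).hc .rej ip w') := by
  have hs := fwd_step (x := x) (a := a) (cw := cw) hok (q := .tokd t₁ t₂) rfl ip w
    h.ne_nil (h.len ▸ hL)
  obtain ⟨e, U, hI, he, hU⟩ := h.inv
  rcases tokM_run true w (false, false, M.blank) rfl with ⟨h2, h3⟩ | ⟨h2, h3⟩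
  · rw [if_neg (by simp [h2])] at hs
    exact ⟨_, hs⟩
  · rw [hI.bra] at h3; omega

theorem tokd_sim (hok : OkL ok L) (hL : n ≤ L) (hN : 0 < N)
    (h : Rep M ls N v n w j (d + 1) cfg) (t₁ t₂ : TR M) (ip : ℤ) :
    ∃ w', (prog M c C a cw).Sim x ok (2 * (2 * L + 2))
        ((prog M c C a cw).hc (.tokd t₁ t₂) ip w) ((prog M c C a cw).hc (.fk t₁ t₂) ip w') ∧
      Rep M ls N v n w' (v * N ^ c) d cfg := by
  have hs := fwd_step (x := x) (a := a) (cw := cw) hok (q := .tokd t₁ t₂) rfl ip w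
    h.ne_nil (h.len ▸ hL)
  obtain ⟨e, U, hI, he, hU⟩ := h.inv
  rcases tokM_run true w (false, false, M.blank) rfl with ⟨h2, h3⟩ | ⟨h2, h3⟩
  · rw [hI.bra] at h3; omega
  · rw [if_pos h2] at hs
    have hI1 := hI.tokt (false, false, M.blank)
    have hmap1 : ∀ {β : Type} (g : Cl c C M.syms → β), (∀ (y : Cl c C M.syms) (m : Fin (C + 2)),
        g { y with tok := Function.update y.tok true m } = g y) →
        (run (tokM true) (false, false, M.blank) w).2.map g = w.map g :=
      fun g hg => tokM_map _ g hg _ _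
    generalize (run (tokM true) (false, false, M.blank) w).2 = w1 at hs h3 hI1 hmap1
    have hl1 : w1.length = w.length := by
      simpa using congrArg List.length (hmap1 Cl.sym (fun _ _ => rfl))
    have hne : w1 ≠ [] := by
      rw [← List.length_pos_iff, hl1, List.length_pos_iff]; exact h.ne_nil
    have hs2 := fwd_step (x := x) (a := a) (cw := cw) hok (q := .res t₁ t₂) rfl ip w1
      hne (by rw [hl1, h.len]; exact hL)
    have hI2 := hI1.res (false, false, M.blank)
    have hd : tsum true w1 = d := by rw [hI.bra] at h3; omega
    have hb : nfin w1 = v := by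
      rw [← h.blocks]
      exact congrArg List.sum (hmap1 _ (fun _ _ => rfl))
    rw [hd, hb] at hI2
    refine ⟨_, (hs.trans hs2).mono (by omega), ⟨_, _, hI2, fun _ => hN, by simp [oval]⟩, ?_, ?_, ?_⟩
    · refine (h.mem.congr (hmap1 symhd (fun _ _ => rfl))).congr ?_
      exact run_map symhd resM (fun _ _ => rfl) _ _
    · rw [← hb]
      exact congrArg List.sum (run_map _ resM (fun _ _ => rfl) _ _)
    · rw [run_length, hl1, h.len]

theorem ap_sim (hok : OkL ok L) (hL : n ≤ L) (h : Rep M ls N v n w j d cfg) (tr : TR M) :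
    ∃ q' w', (prog M c C a cw).Sim x ok (2 * L + 3)
        ((prog M c C a cw).hc (.ap tr) cfg.ipos w)
        ((prog M c C a cw).hc q' (M.applyTr cfg tr).ipos w') ∧
      ((q' = .rej ∧ ¬ M.CfgOk n (M.applyTr cfg tr)) ∨
        (q' = .sim (M.applyTr cfg tr).state ∧ Rep M ls N v n w' j d (M.applyTr cfg tr))) := by
  have h1 := ex_sim (x := x) (P := prog M c C a cw) hok (q := .ap tr) rfl cfg.ipos w (h.len ▸ hL)
    (.wr tr) tr.2.2.1 (fun _ _ => Iff.rfl)
  obtain ⟨q', w', h2, h3⟩ := wr_rep (x := x) (a := a) (cw := cw) hok hL h tr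
    (moveDir cfg.ipos tr.2.2.1)
  exact ⟨q', w', (h1.trans h2).mono (by omega), h3⟩

theorem AccS_ok {okM : M.Cfg → Prop} {m : ℕ} (h : M.AccS x okM m d j cfg) : okM cfg := by
  cases h <;> assumption

/-- Bound for the number of nodes of a tree of depth `d` with edges subdivided `m` times, below a
node with `j` subdivisions left. -/
def tsize (m : ℕ) : ℕ → ℕ → ℕ
  | 0, j => j + 1
  | d + 1, j => j + 2 + 2 * tsize m d m

theorem tsize_succ (m d j : ℕ) : tsize m d (j + 1) = tsize m d j + 1 := by
  cases d <;> simp only [tsize] <;> omega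

theorem tsize_pos (m d j : ℕ) : 0 < tsize m d j := by
  cases d <;> simp only [tsize] <;> omega

/-- An accepting computation of `M` within the bounds is simulated. -/
theorem sim_complete (hok : OkL ok L) (hL : n ≤ L) (hls : ∀ l ∈ ls, N < 2 ^ (l + 1)) (hN : 0 < N)
    (h : M.AccS x (M.CfgOk n) (v * N ^ c) d j cfg) : ∀ w : List (Cl c C M.syms),
    Rep M ls N v n w j d cfg →
    (prog M c C a cw).toGM.Acc x ok ((3 * c + 5) * (2 * L + 2) * tsize (v * N ^ c) d j) d
      ((prog M c C a cw).hc (.sim cfg.state) cfg.ipos w) := by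
  induction h with
  | leaf d j cfg hacc _ =>
    intro w hr
    have h1 := acc_leaf (x := x) (P := prog M c C a cw) hok (q := .accp) rfl cfg.ipos w
      (hr.len ▸ hL) 0 d
    have h2 := (ex_iff (x := x) (P := prog M c C a cw) hok
      (q := .rd cfg.state (cfg.tape cfg.wpos)) rfl cfg.ipos w (hr.len ▸ hL) 1 d).2
      ⟨.accp, .stay, .inl ⟨hacc, rfl, rfl⟩, by simpa [moveDir] using h1⟩
    refine ((rd_sim hok hL hr).1 _ _ h2).mono (fun _ h => h) ?_ le_rfl
    have := tsize_pos (v * N ^ c) d j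
    calc 1 + 1 + (2 * L + 2) ≤ (3 * c + 5) * (2 * L + 2) * 1 := by nlinarith
      _ ≤ _ := Nat.mul_le_mul_left _ this
  | estep d j cfg tr _ hne htr hch ih =>
    intro w hr
    obtain ⟨w1, h1, hr1⟩ := odo_sim (x := x) (a := a) (cw := cw) hok hL hls hr tr
      (moveDir cfg.ipos tr.2.2.1)
    obtain ⟨q', w2, h2, h3⟩ := wr_rep (x := x) (a := a) (cw := cw) hok hL hr1 tr
      (moveDir cfg.ipos tr.2.2.1)
    rcases h3 with ⟨_, h3⟩ | ⟨rfl, hr2⟩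
    · exact absurd (AccS_ok hch) h3
    · have h4 := (h1.trans h2).1 _ _ (ih w2 hr2)
      have h5 := (ex_iff (x := x) (P := prog M c C a cw) hok
        (q := .rd cfg.state (cfg.tape cfg.wpos)) rfl cfg.ipos w (hr.len ▸ hL) _ d).2
        ⟨.odo tr, tr.2.2.1, .inr (.inl ⟨hne, tr, htr, rfl, rfl⟩), h4⟩
      refine ((rd_sim hok hL hr).1 _ _ h5).mono (fun _ h => h) ?_ le_rfl
      rw [tsize_succ]
      nlinarith
  | ustep d j cfg _ hu hl hr' ihl ihr =>
    intro w hr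
    obtain ⟨w1, h1, hr1⟩ := tokd_sim (x := x) (a := a) (cw := cw) hok hL hN hr
      (M.utrans cfg.state (inputAt x cfg.ipos) (cfg.tape cfg.wpos)).1
      (M.utrans cfg.state (inputAt x cfg.ipos) (cfg.tape cfg.wpos)).2 cfg.ipos
    obtain ⟨q2, w2, h2, h2'⟩ := ap_sim (x := x) (a := a) (cw := cw) hok hL hr1
      (M.utrans cfg.state (inputAt x cfg.ipos) (cfg.tape cfg.wpos)).1
    obtain ⟨q3, w3, h3, h3'⟩ := ap_sim (x := x) (a := a) (cw := cw) hok hL hr1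
      (M.utrans cfg.state (inputAt x cfg.ipos) (cfg.tape cfg.wpos)).2
    rcases h2' with ⟨_, h2'⟩ | ⟨rfl, hr2⟩
    · exact absurd (AccS_ok hl) h2'
    rcases h3' with ⟨_, h3'⟩ | ⟨rfl, hr3⟩
    · exact absurd (AccS_ok hr') h3'
    have h4 := un_complete (x := x) (P := prog M c C a cw) hok (q := .fk _ _) rfl cfg.ipos w1
      (hr1.len ▸ hL) (h2.1 _ _ (ihl w2 hr2)) (h3.1 _ _ (ihr w3 hr3))
    have h5 := (ex_iff (x := x) (P := prog M c C a cw) hok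
        (q := .rd cfg.state (cfg.tape cfg.wpos)) rfl cfg.ipos w (hr.len ▸ hL) _ _).2
        ⟨.tokd _ _, .stay, .inr (.inr ⟨hu, rfl, rfl⟩), h1.1 _ _ h4⟩
    refine ((rd_sim hok hL hr).1 _ _ h5).mono (fun _ h => h) ?_ le_rfl
    simp only [tsize]
    have hK : 5 * (2 * L + 2) ≤ (3 * c + 5) * (2 * L + 2) := Nat.mul_le_mul_right _ (by omega)
    generalize (3 * c + 5) * (2 * L + 2) = K at hK ⊢
    generalize tsize (v * N ^ c) d (v * N ^ c) = T
    have e : K * (j + 2 + 2 * T) = K * j + 2 * K + 2 * (K * T) := by ring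
    rw [e]
    omega

/-- An accepting computation of the simulating machine comes from one of `M` within the bounds. -/
theorem sim_sound (hok : OkL ok n) (hls : ∀ l ∈ ls, N < 2 ^ (l + 1)) (hN : 0 < N) (s : ℕ) :
    ∀ (w : List (Cl c C M.syms)) (j d : ℕ) (cfg : M.Cfg) (b : ℕ), Rep M ls N v n w j d cfg →
    (prog M c C a cw).toGM.Acc x ok s b ((prog M c C a cw).hc (.sim cfg.state) cfg.ipos w) →
    M.AccS x (M.CfgOk n) (v * N ^ c) d j cfg := by
  induction s using Nat.strong_induction_on with
  | _ s ih =>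
  intro w j d cfg b hr h
  replace h := (rd_sim hok le_rfl hr).2 _ _ h
  obtain ⟨s, rfl⟩ := Nat.exists_eq_add_of_lt (acc_pos h)
  rw [zero_add] at h
  obtain ⟨q', dd, hR, h⟩ := (ex_iff (x := x) (P := prog M c C a cw) hok
    (q := .rd cfg.state (cfg.tape cfg.wpos)) rfl cfg.ipos w hr.len.le _ b).1 h
  rcases hR with ⟨hacc, rfl, rfl⟩ | ⟨hne, tr, htr, rfl, rfl⟩ | ⟨hu, rfl, rfl⟩
  · exact .leaf _ _ _ hacc hr.cfgOk
  · cases j with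
    | zero => exact absurd ((odo_rej hok le_rfl hr tr _).2 _ _ h) (rej_false rfl _ _ _ _)
    | succ j =>
      obtain ⟨w1, h1, hr1⟩ := odo_sim (x := x) (a := a) (cw := cw) hok le_rfl hls hr tr
        (moveDir cfg.ipos tr.2.2.1)
      obtain ⟨q', w2, h2, h3⟩ := wr_rep (x := x) (a := a) (cw := cw) hok le_rfl hr1 tr
        (moveDir cfg.ipos tr.2.2.1)
      replace h := (h1.trans h2).2 _ _ h
      rcases h3 with ⟨rfl, h3⟩ | ⟨rfl, hr2⟩
      · exact absurd h (rej_false rfl _ _ _ _)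
      · exact .estep d j cfg tr hr.cfgOk hne htr
          (ih s (by omega) w2 j d (M.applyTr cfg tr) b hr2 h)
  · rw [show moveDir cfg.ipos .stay = cfg.ipos from rfl] at h
    cases d with
    | zero =>
      obtain ⟨w', h'⟩ := tokd_rej (x := x) (a := a) (cw := cw) hok le_rfl hr
        (M.utrans cfg.state (inputAt x cfg.ipos) (cfg.tape cfg.wpos)).1
        (M.utrans cfg.state (inputAt x cfg.ipos) (cfg.tape cfg.wpos)).2 cfg.ipos
      exact absurd (h'.2 _ _ h) (rej_false rfl _ _ _ _)
    | succ d =>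
      obtain ⟨w1, h1, hr1⟩ := tokd_sim (x := x) (a := a) (cw := cw) hok le_rfl hN hr
        (M.utrans cfg.state (inputAt x cfg.ipos) (cfg.tape cfg.wpos)).1
        (M.utrans cfg.state (inputAt x cfg.ipos) (cfg.tape cfg.wpos)).2 cfg.ipos
      obtain ⟨s₁, s₂, hs₁, hs₂, hl, hr'⟩ := un_sound (P := prog M c C a cw) rfl _ _ (h1.2 _ _ h)
      refine .ustep d j cfg hr.cfgOk hu ?_ ?_
      · obtain ⟨q2, w2, h2, h2'⟩ := ap_sim (x := x) (a := a) (cw := cw) hok le_rfl hr1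
          (M.utrans cfg.state (inputAt x cfg.ipos) (cfg.tape cfg.wpos)).1
        replace hl := h2.2 _ _ hl
        rcases h2' with ⟨rfl, _⟩ | ⟨rfl, hr2⟩
        · exact absurd hl (rej_false rfl _ _ _ _)
        · exact ih s₁ (by omega) w2 _ d _ b hr2 hl
      · obtain ⟨q2, w2, h2, h2'⟩ := ap_sim (x := x) (a := a) (cw := cw) hok le_rfl hr1
          (M.utrans cfg.state (inputAt x cfg.ipos) (cfg.tape cfg.wpos)).2
        replace hr' := h2.2 _ _ hr'
        rcases h2' with ⟨rfl, _⟩ | ⟨rfl, hr2⟩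
        · exact absurd hr' (rej_false rfl _ _ _ _)
        · exact ih s₂ (by omega) w2 _ d _ b hr2 hr'

end SimulationSteps

/-! ### The guessed words -/

section Words

variable {c C k : ℕ}

/-- The number of cells marked as belonging to the last block. -/
def nlst (w : List (Cl c C k)) : ℕ := (w.map (fun y => if y.lst then 1 else 0)).sum

theorem nlst_cons (y : Cl c C k) (w : List (Cl c C k)) :
    nlst (y :: w) = (if y.lst then 1 else 0) + nlst w := by simp [nlst]

theorem nfin_cons (y : Cl c C k) (w : List (Cl c C k)) :
    nfin (y :: w) = (if y.fin then 1 else 0) + nfin w := by simp [nfin]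

theorem lens_fin (y : Cl c C k) (w : List (Cl c C k)) (h : y.fin = true) :
    lens (y :: w) = 1 :: lens w := by
  simp [lens, decl, h]

theorem lens_nonfin (y : Cl c C k) (w : List (Cl c C k)) (h : y.fin = false) {l : ℕ} {r : List ℕ}
    (hw : lens w = l :: r) : lens (y :: w) = (l + 1) :: r := by
  unfold lens at hw ⊢
  obtain ⟨p, r', h1, h2, h3⟩ := List.map_eq_cons_iff.1 hw
  simp [decl, h, h1, ← h2, ← h3]

theorem lens_ne_nil (w : List (Cl c C k)) (h : Cmp (w.map Cl.fin)) (hw : w ≠ []) : lens w ≠ [] := by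
  rw [← dec_snd (Fin.last c) w]
  simpa using dec_ne_nil (Fin.last c) w h hw

theorem lens_facts (w : List (Cl c C k)) (h : Cmp (w.map Cl.fin)) :
    (lens w).length = nfin w ∧ (lens w).sum = w.length := by
  induction w with
  | nil => simp [lens, decl, nfin]
  | cons y w ih =>
    obtain ⟨h1, h2⟩ := ih h.2
    rw [nfin_cons]
    cases hy : y.fin with
    | true =>
      rw [lens_fin y w hy]
      simp [h1, h2, add_comm]
    | false =>
      have hne : w ≠ [] := by
        rcases h.1 with h | h
        · rw [hy] at h; cases h
        · rintro rfl; simp at h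
      obtain ⟨l, r, hl⟩ := List.exists_cons_of_ne_nil (lens_ne_nil w h.2 hne)
      rw [lens_nonfin y w hy hl]
      rw [hl] at h1 h2
      simp only [List.length_cons, List.sum_cons] at h1 h2 ⊢
      simp
      omega

/-- Every cell is an initial cell. -/
def Fresh (blank : Fin k) (w : List (Cl c C k)) : Prop :=
  ∀ y ∈ w, y = mkCell c C blank y.fin y.lst

theorem Fresh.tsum {blank : Fin k} {w : List (Cl c C k)} (h : Fresh blank w) :
    tsum false w = nfin w ∧ tsum true w = C * nlst w + nfin w := by
  induction w with
  | nil => simp [XALP.tsum, nfin, nlst]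
  | cons y w ih =>
    obtain ⟨h1, h2⟩ := ih (fun z hz => h z (List.mem_cons_of_mem _ hz))
    have e : ∀ b, XALP.tsum b (y :: w) = (y.tok b).val + XALP.tsum b w := by
      intro b; simp [XALP.tsum]
    have hy := h y (by simp)
    have e' : ∀ b, (y.tok b).val =
        (if b && y.lst then C else 0) + (if y.fin then 1 else 0) := by
      intro b; rw [hy]; rfl
    rw [e, e, e', e', nfin_cons, nlst_cons, h1, h2]
    refine ⟨by simp, ?_⟩
    cases y.lst
    · simp; ring
    · simp; ring

theorem Fresh.dec {blank : Fin k} {w : List (Cl c C k)} (h : Fresh blank w) (t : Fin (c + 1)) :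
    dec t w = (lens w).map (fun l => (0, l)) := by
  refine decl_zero w _ (fun y hy => ?_)
  conv_lhs => rw [h y hy]
  rfl

/-- Marking the first cell represents the initial work tape. -/
theorem hd_mem {blank : Fin k} {w : List (Cl c C k)} (hw : w ≠ []) (h1 : ∀ y ∈ w, y.hd = false)
    (h2 : ∀ y ∈ w, y.sym = blank) (s : Bool × Fin k) :
    Mem blank (run hdM (true, s) w).2 (fun _ => blank) 0 ∧
      (run hdM (true, s) w).2.map core = w.map core := by
  obtain ⟨y, w, rfl⟩ := List.exists_cons_of_ne_nil hw
  have e : run hdM (true, s) (y :: w) = ((false, s), { y with hd := true } :: w) := by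
    have : run hdM (false, s) w = ((false, s), w) := run_fix _ _ _ (fun z _ => by simp [hdM])
    simp [run, hdM, this]
  rw [e]
  refine ⟨⟨[], _, w, rfl, by simp, rfl, fun z hz => h1 z (by simp [hz]), rfl, ?_⟩, rfl⟩
  funext i
  unfold tapeOf
  split
  · have : ({ y with hd := true } :: w).map Cl.sym = List.replicate (w.length + 1) blank := by
      rw [List.eq_replicate_iff]
      refine ⟨by simp, ?_⟩
      intro b hb
      rcases List.mem_cons.1 hb with hb | hb
      · rw [hb]; exact h2 y (by simp)
      · obtain ⟨z, hz, rfl⟩ := List.mem_map.1 hb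
        exact h2 z (by simp [hz])
    rw [this]
    cases h : (List.replicate (w.length + 1) blank)[i.toNat]? with
    | none => rfl
    | some b =>
      have := List.mem_of_getElem? h
      rw [List.mem_replicate] at this
      simp [this.2]
  · rfl

end Words

section Guess

variable {M : ATM} {c C a cw : ℕ}

theorem gen_fresh {g : Bool × Bool} {w : List (Cl c C M.syms)} (h : (prog M c C a cw).Gen g w) :
    Fresh M.blank w ∧ Cmp (w.map Cl.fin) ∧ (w = [] → g = (true, true)) := by
  induction h with
  | nil g h =>
    obtain ⟨g1, g2⟩ := g
    obtain ⟨rfl, rfl⟩ := h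
    exact ⟨by simp [Fresh], trivial, fun _ => rfl⟩
  | cons g g' y w h hw ih =>
    obtain ⟨h1, h2, h3⟩ := ih
    have hy := h.1
    refine ⟨?_, ⟨?_, h2⟩, by simp⟩
    · intro z hz
      rcases List.mem_cons.1 hz with rfl | hz
      · rw [hy]; rfl
      · exact h1 z hz
    · by_cases hw' : w = []
      · left; rw [hy, h3 hw']; rfl
      · right; simpa using hw'

/-- The marks of the last block of a guessed word; the guessing state is the pair of marks of the
previous cell. -/
theorem gen_last {g : Bool × Bool} {w : List (Cl c C M.syms)} (h : (prog M c C a cw).Gen g w) :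
    (g = (true, true) → w = []) ∧ (g = (true, false) → lens w = [nlst w]) ∧
    (g = (false, true) → nlst w ∈ lens w) ∧ (g = (false, false) → nlst w ∈ (lens w).tail) := by
  induction h with
  | nil g h =>
    obtain ⟨g1, g2⟩ := g
    obtain ⟨rfl, rfl⟩ := h
    simp
  | cons g g' y w h hw ih =>
    obtain ⟨ih1, ih2, ih3, ih4⟩ := ih
    obtain ⟨hy, h1, h2⟩ := h
    have hf : y.fin = g'.2 := by rw [hy]; rfl
    have hl : y.lst = g'.1 := by rw [hy]; rfl
    have hn0 : nlst ([] : List (Cl c C M.syms)) = 0 := rfl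
    have hl0 : lens ([] : List (Cl c C M.syms)) = [] := rfl
    obtain ⟨g1, g2⟩ := g
    obtain ⟨g1', g2'⟩ := g'
    simp only at hf hl h1 h2
    rw [nlst_cons, hl]
    have key : (g1' = true → lens (y :: w) = [1 + nlst w]) ∧
        (g1' = false → nlst w ∈ (lens (y :: w)).tail) := by
      constructor
      · rintro rfl
        cases g2' with
        | true => rw [ih1 rfl, lens_fin _ _ hf, hn0, hl0]
        | false => rw [lens_nonfin _ _ hf (ih2 rfl), add_comm]
      · rintro rfl
        cases g2' with
        | true => rw [lens_fin _ _ hf]; exact ih3 rfl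
        | false =>
          have := ih4 rfl
          cases hw : lens w with
          | nil => rw [hw] at this; simp at this
          | cons l r =>
            rw [hw] at this
            rw [lens_nonfin _ _ hf hw]; exact this
    cases g1' with
    | true =>
      have hk := key.1 rfl
      simp only [if_true]
      refine ⟨?_, fun _ => hk, fun _ => by rw [hk]; simp, ?_⟩
      · intro hg; cases hg; exact absurd (h1 rfl).2 (by simp)
      · intro hg; cases hg; exact absurd (h2 rfl rfl) (by simp)
    | false =>
      have hk := key.2 rfl
      simp only [Bool.false_eq_true, if_false, zero_add]
      refine ⟨?_, ?_, fun _ => List.mem_of_mem_tail hk, fun _ => hk⟩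
      · intro hg; cases hg; exact absurd (h1 rfl).1 (by simp)
      · intro hg; cases hg; exact absurd (h1 rfl).1 (by simp)

theorem wsum_eq (w : List (Cl c C M.syms)) :
    (prog M c C a cw).wsum w = a * nfin w + cw * nlst w := by
  induction w with
  | nil => simp [Prog.wsum, nfin, nlst]
  | cons y w ih =>
    have e : (prog M c C a cw).wsum (y :: w) =
        ((if y.fin then a else 0) + (if y.lst then cw else 0)) + (prog M c C a cw).wsum w := by
      simp [Prog.wsum, prog]
    rw [e, ih, nfin_cons, nlst_cons]
    split <;> split <;> ring

variable (M c C) in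
/-- A block of `n + 1` initial cells, followed by `w`. -/
def blk (lst : Bool) (n : ℕ) (w : List (Cl c C M.syms)) : List (Cl c C M.syms) :=
  List.replicate n (mkCell c C M.blank false lst) ++ mkCell c C M.blank true lst :: w

theorem blk_zero (lst : Bool) (w : List (Cl c C M.syms)) :
    blk M c C lst 0 w = mkCell c C M.blank true lst :: w := rfl

theorem blk_succ (lst : Bool) (n : ℕ) (w : List (Cl c C M.syms)) :
    blk M c C lst (n + 1) w = mkCell c C M.blank false lst :: blk M c C lst n w := by
  simp [blk, List.replicate_succ]

theorem lens_blk (lst : Bool) (n : ℕ) (w : List (Cl c C M.syms)) :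
    lens (blk M c C lst n w) = (n + 1) :: lens w := by
  induction n with
  | zero => rw [blk_zero, lens_fin _ _ rfl]
  | succ n ih => rw [blk_succ, lens_nonfin _ _ rfl ih]

theorem gen_blk (lst : Bool) (n : ℕ) (w : List (Cl c C M.syms)) (g : Bool × Bool)
    (hg : g = (false, true) ∨ g = (lst, false))
    (h : (prog M c C a cw).Gen (lst, true) w) : (prog M c C a cw).Gen g (blk M c C lst n w) := by
  have htr : ∀ f, (prog M c C a cw).gtr g (mkCell c C M.blank f lst) (lst, f) := by
    intro f
    refine ⟨rfl, ?_, ?_⟩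
    · intro h1
      rcases hg with rfl | rfl
      · simp at h1
      · exact ⟨h1, rfl⟩
    · intro h1 h2
      rcases hg with rfl | rfl
      · simp at h2
      · exact h1
  induction n generalizing g with
  | zero => exact .cons _ _ _ _ (htr true) h
  | succ n ih =>
    rw [blk_succ]
    refine .cons _ _ _ _ (htr false) (ih _ (.inr rfl) ?_)
    intro f
    exact ⟨rfl, fun h => ⟨h, rfl⟩, fun h _ => h⟩

variable (M c C) in
/-- The word with `v + 1` blocks of length `n + 1`. -/
def word (n : ℕ) : ℕ → List (Cl c C M.syms)
  | 0 => blk M c C true n []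
  | v + 1 => blk M c C false n (word n v)

theorem gen_word (n v : ℕ) : (prog M c C a cw).Gen (prog M c C a cw).gst (word M c C n v) := by
  induction v with
  | zero => exact gen_blk true n [] _ (.inl rfl) (.nil _ ⟨rfl, rfl⟩)
  | succ v ih => exact gen_blk false n _ _ (.inl rfl) ih

theorem lens_word (n v : ℕ) : lens (word M c C n v) = List.replicate (v + 1) (n + 1) := by
  induction v with
  | zero => simp only [word]; rw [lens_blk]; rfl
  | succ v ih => simp only [word]; rw [lens_blk, ih]; rfl

theorem csize_blk_false (n : ℕ) (w : List (Cl c C M.syms)) :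
    (prog M c C a cw).csize (blk M c C false n w) =
      2 * n + 2 ^ a * (2 + (prog M c C a cw).csize w) := by
  induction n with
  | zero => simp [blk_zero, Prog.csize, prog, mkCell]
  | succ n ih =>
    rw [blk_succ]
    have e : ((prog M c C a cw).weight (mkCell c C M.blank false false)).val = 0 := by
      simp [prog, mkCell]
    simp only [Prog.csize, e, ih]
    ring

theorem csize_blk_true (hcw : 1 ≤ cw) (n : ℕ) :
    (prog M c C a cw).csize (blk M c C true n []) + 4 ≤ 8 * 2 ^ (a + cw * (n + 1)) := by
  induction n with
  | zero =>
    have e : ((prog M c C a cw).weight (mkCell c C M.blank true true)).val = a + cw := by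
      simp [prog, mkCell]
    simp only [blk_zero, Prog.csize, e, zero_add, mul_one]
    have : 1 ≤ 2 ^ (a + cw) := Nat.one_le_two_pow
    omega
  | succ n ih =>
    rw [blk_succ]
    have e : ((prog M c C a cw).weight (mkCell c C M.blank false true)).val = cw := by
      simp [prog, mkCell]
    simp only [Prog.csize, e]
    have h2 : 2 ≤ 2 ^ cw := by
      calc 2 = 2 ^ 1 := rfl
        _ ≤ 2 ^ cw := Nat.pow_le_pow_right (by omega) hcw
    calc _ ≤ 2 ^ cw * ((prog M c C a cw).csize (blk M c C true n []) + 4) := by nlinarith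
      _ ≤ 2 ^ cw * (8 * 2 ^ (a + cw * (n + 1))) := Nat.mul_le_mul_left _ ih
      _ = 8 * 2 ^ (a + cw * (n + 1 + 1)) := by ring

theorem csize_word (ha : 2 ≤ a) (hcw : 1 ≤ cw) (n v : ℕ) :
    (prog M c C a cw).csize (word M c C n v) + (2 * n + 4) ≤
      10 * 2 ^ (a * (v + 1) + cw * (n + 1)) := by
  have hn : n < 2 ^ n := Nat.lt_two_pow_self
  have hn' : 2 ^ n ≤ 2 ^ (a + cw * (n + 1)) := Nat.pow_le_pow_right (by omega) (by nlinarith)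
  have h4 : 4 ≤ 2 ^ a := by
    calc 4 = 2 ^ 2 := rfl
      _ ≤ 2 ^ a := Nat.pow_le_pow_right (by omega) ha
  induction v with
  | zero =>
    simp only [word]
    have := csize_blk_true (M := M) (c := c) (C := C) (a := a) hcw n
    rw [zero_add, mul_one]
    omega
  | succ v ih =>
    simp only [word]
    rw [csize_blk_false]
    calc _ ≤ 2 ^ a * ((prog M c C a cw).csize (word M c C n v) + (2 * n + 4)) := by nlinarith
      _ ≤ 2 ^ a * (10 * 2 ^ (a * (v + 1) + cw * (n + 1))) := Nat.mul_le_mul_left _ ih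
      _ = _ := by ring

end Guess

/-! ### The computations of the simulating machine -/

section Machine

variable {M : ATM} {c C a cw : ℕ} {x : List Bool} {L : ℕ}
  {ok : GC (St (Ctl M c) (Sig M.syms) (Bool × Bool) (prog M c C a cw).W)
    (Option (Bool × Cl c C M.syms)) → Prop}

theorem Fresh.ref {u : List (Cl c C M.syms)} (h : Fresh M.blank u) : RefIs u u (lens u) 0 :=
  ⟨rfl, h.dec _⟩

theorem logb_unique {n l : ℕ} (h1 : 2 ^ l ≤ n + 2) (h2 : n + 2 < 2 ^ (l + 1)) : l = logb n :=
  ((Nat.log_eq_iff (Or.inr ⟨by omega, by omega⟩)).2 ⟨h1, h2⟩).symm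

theorem logb_spec (n : ℕ) : 2 ^ logb n ≤ n + 2 ∧ n + 2 < 2 ^ (logb n + 1) :=
  ⟨Nat.pow_log_le_self 2 (by omega), Nat.lt_pow_succ_log_self (by omega) _⟩

theorem logb_pos (n : ℕ) : 0 < logb n := Nat.log_pos (by omega) (by omega)

/-- After the lengths of the blocks have been checked, the word represents the initial
configuration of `M` with full budgets. -/
theorem init_rep (hok : OkL ok L) {u w : List (Cl c C M.syms)} (hne : u ≠ []) (hL : u.length ≤ L)
    (hu : (prog M c C a cw).Gen (prog M c C a cw).gst u) {N l : ℕ} (hN : 0 < N)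
    (hw : RefIs u w (lens u) N) (hl : ∀ l' ∈ lens u, l' = l) :
    u.length = nfin u * l ∧
    (prog M c C a cw).wsum w = a * nfin u + cw * l ∧
    ∃ w', (prog M c C a cw).Sim x ok (2 * L + 2) ((prog M c C a cw).hc .inithd 0 w)
        ((prog M c C a cw).hc (.sim M.start) 0 w') ∧
      Rep M (lens u) N (nfin u) (nfin u * l) w' (nfin u * N ^ c) (C * l + nfin u) M.init := by
  obtain ⟨hf, hcmp, -⟩ := gen_fresh hu
  have hlast : nlst u = l := hl _ ((gen_last hu).2.2.1 rfl)
  obtain ⟨hlen, hsum⟩ := lens_facts u hcmp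
  have hlen' : u.length = nfin u * l := by
    rw [← hsum, ← hlen, List.eq_replicate_of_mem hl]
    simp
  have hm : ∀ {β : Type} (g : Cl c C M.syms → β), (∀ y, g (strip y) = g y) → w.map g = u.map g :=
    fun g hg => map_of_strip hw.same g hg
  have hnf : nfin w = nfin u := congrArg List.sum (hm _ (fun _ => rfl))
  have hnl : nlst w = nlst u := congrArg List.sum (hm _ (fun _ => rfl))
  refine ⟨hlen', by rw [wsum_eq, hnf, hnl, hlast], ?_⟩
  have hs := fwd_step (x := x) (a := a) (cw := cw) hok (q := .inithd) rfl 0 w (hw.ne_nil hne)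
    (by rw [hw.length]; exact hL)
  have hsh : ∀ y ∈ w, y.hd = false ∧ y.sym = M.blank := by
    intro y hy
    have : symhd y ∈ w.map symhd := List.mem_map_of_mem hy
    rw [hm symhd (fun _ => rfl)] at this
    obtain ⟨z, hz, he⟩ := List.mem_map.1 this
    rw [hf z hz] at he
    simp only [symhd, Prod.mk.injEq] at he
    exact ⟨he.2.symm, he.1.symm⟩
  obtain ⟨h1, h2⟩ := hd_mem (hw.ne_nil hne) (fun y hy => (hsh y hy).1) (fun y hy => (hsh y hy).2)
    (false, M.blank)
  have hI : Inv (lens u) N w (fun _ => 0) (nfin u) (C * l + nfin u) := by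
    obtain ⟨t1, t2⟩ := hf.tsum
    refine ⟨by rw [hw.fin]; exact hcmp, hw.val, ?_, ?_, ?_⟩
    · intro i
      rw [← hf.dec i.castSucc]
      refine dec_congr (hm _ (fun y => ?_))
      have : i.castSucc ≠ Fin.last c := (Fin.castSucc_lt_last i).ne
      simp [strip, this]
    · rw [← t1]; exact congrArg List.sum (hm _ (fun _ => rfl))
    · rw [← hlast, ← t2]; exact congrArg List.sum (hm _ (fun _ => rfl))
  refine ⟨_, hs, ⟨_, _, hI.congr h2, fun _ => hN, by simp [oval]⟩, h1, ?_, ?_⟩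
  · rw [← hnf]
    have := congrArg (List.map (fun z => if z.1 then 1 else 0)) h2
    rw [List.map_map, List.map_map] at this
    exact congrArg List.sum this
  · rw [run_length, hw.length, hlen']

/-- An accepting computation tree contains a certificate tree for a number `v` of blocks and an
accepting computation of `M` within the budgets given by `v`. -/
theorem machine_sound {s b : ℕ} (h : (prog M c C a cw).toGM.Acc x (fun _ => True) s b
      ⟨(prog M c C a cw).toGM.start, 0, fun _ => (prog M c C a cw).toGM.blank, 0⟩) :
    ∃ v, 2 ^ (a * v + cw * logb x.length) ≤ s ∧
      M.AccS x (M.CfgOk (v * logb x.length)) (v * (x.length + 2) ^ c)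
        (C * logb x.length + v) (v * (x.length + 2) ^ c) M.init := by
  obtain ⟨u, hu, hne, h⟩ := start_sound rfl h
  have hok : OkL (fun _ : GC (St (Ctl M c) (Sig M.syms) (Bool × Bool) (prog M c C a cw).W)
    (Option (Bool × Cl c C M.syms)) => True) u.length := fun _ _ _ _ _ _ _ => trivial
  obtain ⟨hf, hcmp, -⟩ := gen_fresh hu
  obtain ⟨q', ip', w, h1, h2⟩ := setup_sim (x := x) (a := a) (cw := cw) hok hne le_rfl hcmp hf.ref
  replace h := h1.2 _ _ h
  rcases h2 with ⟨rfl, rfl, hw, hl⟩ | ⟨rfl, _⟩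
  · have hl' : ∀ l ∈ lens u, l = logb x.length := fun l hm => logb_unique (hl l hm).1 (hl l hm).2
    obtain ⟨s₁, s₂, hs₁, hs₂, hc, hi⟩ := un_sound (P := prog M c C a cw) rfl _ _ h
    obtain ⟨hlen, hws, w', h3, hr⟩ := init_rep (x := x) hok hne le_rfl hu (N := x.length + 2)
      (by omega) hw hl'
    refine ⟨nfin u, ?_, ?_⟩
    · have := cert_sound (P := prog M c C a cw) rfl _ _ hc
      rw [hws] at this
      omega
    · refine sim_sound (hlen ▸ hok) (fun l hm => (hl l hm).2) (by omega) s₂ w' _ _ M.init b hr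
        (h3.2 _ _ hi)
  · exact absurd h (rej_false rfl _ _ _ _)

/-- If `M` accepts with the budgets belonging to `v`, then the simulating machine accepts by guessing
`v`. -/
theorem machine_complete {v L : ℕ} (hv : 0 < v) (hL : v * logb x.length = L) (hok : OkL ok L)
    (ha : 2 ≤ a) (hcw : 1 ≤ cw) {b : ℕ} (hb1 : a * v + cw * logb x.length ≤ b)
    (hb2 : C * logb x.length + v ≤ b)
    (h : M.AccS x (M.CfgOk (v * logb x.length)) (v * (x.length + 2) ^ c)
      (C * logb x.length + v) (v * (x.length + 2) ^ c) M.init) :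
    (prog M c C a cw).toGM.Acc x ok (10 * 2 ^ (a * v + cw * logb x.length) +
        (3 * c + 5) * (2 * L + 2) * tsize (v * (x.length + 2) ^ c) (C * logb x.length + v)
          (v * (x.length + 2) ^ c) + (x.length + 3) * (2 * L + 4) + (4 * L + 5)) (b + 1)
      ⟨(prog M c C a cw).toGM.start, 0, fun _ => (prog M c C a cw).toGM.blank, 0⟩ := by
  obtain ⟨v, rfl⟩ := Nat.exists_eq_add_of_lt hv
  have hlp := logb_pos x.length
  obtain ⟨n, hn⟩ := Nat.exists_eq_add_of_lt hlp
  have hu := gen_word (M := M) (c := c) (C := C) (a := a) (cw := cw) n v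
  have hlw := lens_word (M := M) (c := c) (C := C) n v
  have hcs := csize_word (M := M) (c := c) (C := C) ha hcw n v
  generalize word M c C n v = u at hu hlw hcs
  obtain ⟨hf, hcmp, -⟩ := gen_fresh hu
  obtain ⟨hl1, hl2⟩ := lens_facts u hcmp
  rw [hlw] at hl1 hl2
  rw [List.length_replicate] at hl1
  have hne : u ≠ [] := by
    rintro rfl
    simp [lens, decl, List.replicate_succ] at hlw
  have hall : ∀ l ∈ lens u, l = logb x.length := by
    intro l hl
    rw [hlw] at hl
    rw [(List.mem_replicate.1 hl).2, hn]; omega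
  have hul : u.length = L := by
    rw [← hl2, ← hL, hn]; simp
  obtain ⟨q', ip', w, h1, h2⟩ := setup_sim (x := x) (a := a) (cw := cw) hok hne hul.le hcmp hf.ref
  rcases h2 with ⟨rfl, rfl, hw, hl⟩ | ⟨_, hbad⟩
  · obtain ⟨hlen, hws, w', h3, hr⟩ := init_rep (x := x) hok hne hul.le hu (N := x.length + 2)
      (by omega) hw hall
    rw [← hl1] at hws hr
    rw [zero_add] at h hb1 hb2 hL ⊢
    have hsim := h3.1 _ _ (sim_complete hok hL.le (fun l hm => (hl l hm).2) (by omega) h w' hr)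
    have hcert := cert_complete (x := x) (P := prog M c C a cw) hok (q := .certc) rfl 0 w
      (by rw [hw.length, hul])
    rw [hws] at hcert
    have hfork := un_complete (x := x) (P := prog M c C a cw) hok (q := .fork) rfl 0 w
      (by rw [hw.length, hul]) (hcert.mono (fun _ h => h) le_rfl hb1)
      (hsim.mono (fun _ h => h) le_rfl hb2)
    have hst := start_complete (x := x) (P := prog M c C a cw) hok rfl hu hne hul.le
      (h1.1 _ _ hfork)
    refine hst.mono (fun _ h => h) ?_ le_rfl
    have e : (prog M c C a cw).csize w = (prog M c C a cw).csize u := by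
      have key : ∀ w₁ w₂ : List (Cl c C M.syms), w₁.map strip = w₂.map strip →
          (prog M c C a cw).csize w₁ = (prog M c C a cw).csize w₂ := by
        intro w₁
        induction w₁ with
        | nil => intro w₂ h; cases w₂ with
          | nil => rfl
          | cons y w₂ => simp at h
        | cons y w₁ ih => intro w₂ h; cases w₂ with
          | nil => simp at h
          | cons z w₂ =>
            simp only [List.map_cons, List.cons.injEq] at h
            have hw : (prog M c C a cw).weight y = (prog M c C a cw).weight z := by
              have : (prog M c C a cw).weight (strip y) = (prog M c C a cw).weight (strip z) := by
                rw [h.1]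
              exact this
            simp only [Prog.csize, ih w₂ h.2, hw]
      exact key _ _ hw.same
    have e2 : 0 + n + 1 = n + 1 := by omega
    rw [e]
    rw [hn, e2] at *
    omega
  · exact absurd (fun l hl => by rw [hall l hl]; exact logb_spec x.length) hbad

end Machine

/-! ### Parameters of the simulation -/

theorem tsize_bound (m d : ℕ) : tsize m d m + (m + 2) ≤ 2 ^ d * (2 * m + 3) := by
  induction d with
  | zero => simp only [tsize]; omega
  | succ d ih => simp only [tsize, pow_succ]; linarith

/-- The tree size of the simulation, bounded with `ℓ = logb n` and `N = n + 2`. -/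
theorem size_bound {v ℓ N c C a cw κ : ℕ} (hv : 0 < v) (hℓ : 2 ^ ℓ ≤ N) (hN : 2 ≤ N)
    (hcw : c + C + 2 ≤ cw) (ha : 3 ≤ a) (hκ : 6 * (3 * c + 5) + 40 ≤ κ) :
    10 * 2 ^ (a * v + cw * ℓ) +
        (3 * c + 5) * (2 * (v * ℓ) + 2) * tsize (v * N ^ c) (C * ℓ + v) (v * N ^ c) +
        (N + 1) * (2 * (v * ℓ) + 4) + (4 * (v * ℓ) + 5) ≤ 2 ^ (a * v + κ) * N ^ cw := by
  have hp : ∀ r, 2 ^ (r * ℓ) ≤ N ^ r := fun r => by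
    rw [mul_comm, pow_mul]; exact Nat.pow_le_pow_left hℓ r
  have hℓN : ℓ + 1 ≤ N := le_trans Nat.lt_two_pow_self hℓ
  have hv2 : v + 1 ≤ 2 ^ v := Nat.lt_two_pow_self
  have hL : v * ℓ + 1 ≤ 2 ^ v * N := by nlinarith
  have hNc : 1 ≤ N ^ c := Nat.one_le_pow _ _ (by omega)
  have hm : 2 * (v * N ^ c) + 3 ≤ 3 * (2 ^ v * N ^ c) := by nlinarith
  have hT : tsize (v * N ^ c) (C * ℓ + v) (v * N ^ c) ≤
      N ^ C * 2 ^ v * (3 * (2 ^ v * N ^ c)) := by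
    refine (le_trans (Nat.le_add_right _ _) (tsize_bound _ _)).trans ?_
    rw [pow_add]
    exact Nat.mul_le_mul (Nat.mul_le_mul (hp C) le_rfl) hm
  have h1 : (2 : ℕ) ^ (a * v + cw * ℓ) ≤ 2 ^ (a * v) * N ^ cw := by
    rw [pow_add]; exact Nat.mul_le_mul le_rfl (hp cw)
  have hB : ∀ i j, i ≤ 3 → j ≤ cw → (2 ^ v) ^ i * N ^ j ≤ 2 ^ (a * v) * N ^ cw := by
    intro i j hi hj
    rw [← pow_mul, mul_comm v i]
    exact Nat.mul_le_mul (Nat.pow_le_pow_right (by omega) (Nat.mul_le_mul (by omega) le_rfl))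
      (Nat.pow_le_pow_right (by omega) hj)
  have h2 : (3 * c + 5) * (2 * (v * ℓ) + 2) * tsize (v * N ^ c) (C * ℓ + v) (v * N ^ c) ≤
      (6 * (3 * c + 5)) * (2 ^ (a * v) * N ^ cw) := by
    calc _ ≤ (3 * c + 5) * (2 * (2 ^ v * N)) * (N ^ C * 2 ^ v * (3 * (2 ^ v * N ^ c))) :=
          Nat.mul_le_mul (Nat.mul_le_mul le_rfl (by omega)) hT
      _ = (6 * (3 * c + 5)) * ((2 ^ v) ^ 3 * N ^ (c + C + 1)) := by ring
      _ ≤ _ := Nat.mul_le_mul le_rfl (hB _ _ le_rfl (by omega))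
  have h3 : (N + 1) * (2 * (v * ℓ) + 4) ≤ 8 * (2 ^ (a * v) * N ^ cw) := by
    calc _ ≤ (2 * N) * (4 * (2 ^ v * N)) := Nat.mul_le_mul (by omega) (by nlinarith)
      _ = 8 * ((2 ^ v) ^ 1 * N ^ 2) := by ring
      _ ≤ _ := Nat.mul_le_mul le_rfl (hB _ _ (by omega) (by omega))
  have h4 : 4 * (v * ℓ) + 5 ≤ 5 * (2 ^ (a * v) * N ^ cw) := by
    calc _ ≤ 5 * ((2 ^ v) ^ 1 * N ^ 1) := by rw [pow_one, pow_one]; omega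
      _ ≤ _ := Nat.mul_le_mul le_rfl (hB _ _ (by omega) (by omega))
  have hk2 : κ < 2 ^ κ := Nat.lt_two_pow_self
  calc _ ≤ (6 * (3 * c + 5) + 23) * (2 ^ (a * v) * N ^ cw) := by linarith
    _ ≤ 2 ^ κ * (2 ^ (a * v) * N ^ cw) := Nat.mul_le_mul (by omega) le_rfl
    _ = _ := by rw [pow_add]; ring

/-- A certificate of size `2 ^ (a * v + cw * ℓ)` fits into the size bound for the parameter value
`f` only if `v ≤ f`. -/
theorem guess_le {v f ℓ N a cw κ : ℕ} (hN : N < 2 ^ (ℓ + 1)) (hcw : 1 ≤ cw) (ha : a = cw + κ)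
    (h : 2 ^ (a * v + cw * ℓ) ≤ 2 ^ (a * f + κ) * N ^ cw) : v ≤ f := by
  have h1 : 2 ^ (a * v + cw * ℓ) < 2 ^ (a * (f + 1) + cw * ℓ) := by
    refine lt_of_le_of_lt h ?_
    have : a * (f + 1) + cw * ℓ = (a * f + κ) + (ℓ + 1) * cw := by subst ha; ring
    rw [this, pow_add _ (a * f + κ), pow_mul]
    exact Nat.mul_lt_mul_of_pos_left (Nat.pow_lt_pow_left hN (by omega)) (by positivity)
  have h2 := (Nat.pow_lt_pow_iff_right (by omega : 1 < 2)).1 h1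
  have h3 : a * v < a * (f + 1) := by omega
  exact Nat.lt_succ_iff.1 (lt_of_mul_lt_mul_left h3 (Nat.zero_le _))

theorem computable_pow {f : ℕ → ℕ} (hf : Computable f) (a κ : ℕ) :
    Computable fun k => 2 ^ (a * f k + κ) := by
  have hp : Primrec fun n : ℕ => 2 ^ n := by
    refine (Primrec.nat_rec₁ 1 (f := fun _ r : ℕ => 2 * r) ?_).of_eq ?_
    · exact Primrec.nat_mul.comp₂ (Primrec₂.const 2) Primrec₂.right
    · intro n
      induction n with
      | zero => rfl
      | succ n ih => rw [pow_succ, ← ih, mul_comm]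
  have hl : Primrec fun n : ℕ => 2 ^ (a * n + κ) :=
    hp.comp (Primrec.nat_add.comp (Primrec.nat_mul.comp (Primrec.const a) Primrec.id)
      (Primrec.const κ))
  exact hl.to_comp.comp hf

theorem ATM.CfgOk.mono {M : ATM} {s s' : ℕ} (h : s ≤ s') {c : M.Cfg} (hc : M.CfgOk s c) :
    M.CfgOk s' c :=
  ⟨hc.1, by have := hc.2.1; omega, fun i hi => hc.2.2 i (by omega)⟩

theorem okL_code {Ct Cell Sg G : Type} (P : Prog Ct Cell Sg G) {n k : ℕ}
    (e : St Ct Sg G P.W ≃ Fin n) (e' : Option (Bool × Cell) ≃ Fin k) {L s : ℕ} (h : L + 1 ≤ s) :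
    OkL (fun c => (P.toGM.toATM e e').CfgOk s (P.toGM.code e e' c)) L := by
  intro st ip w p hw h0 hp
  refine ⟨h0, ?_, ?_⟩
  · change p < _
    omega
  · intro i hi
    change e' (wtape w i) = e' none
    congr 1
    unfold wtape
    split
    · rw [List.getElem?_eq_none (by omega)]; rfl
    · rfl

/-- subdivided-shallow-binary-tree ATMs can be assumed to have
polynomial treesize and O(log n) + g(k) co-non-deterministic steps per
computation path. -/
theorem atm_subdiv_subset_atm_fewco (Q : ParamProblem)
    (h : SolvableATMSubdiv Q) : SolvableATMFewCo Q := by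
  obtain ⟨M, f, c, C, hf, hQ⟩ := h
  -- The constants `κ`, `cw`, `a` are variables with equations, so that `omega` treats them as atoms.
  obtain ⟨κ, hκ⟩ : ∃ κ, κ = 6 * (3 * c + 5) + 40 := ⟨_, rfl⟩
  obtain ⟨cw, hcw⟩ : ∃ cw, cw = c + C + 2 := ⟨_, rfl⟩
  obtain ⟨a, ha⟩ : ∃ a, a = cw + κ := ⟨_, rfl⟩
  let P := prog M c C a cw
  obtain ⟨n₁, ⟨e⟩⟩ :=
    Finite.exists_equiv_fin (St (Ctl M c) (Sig M.syms) (Bool × Bool) (prog M c C a cw).W)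
  obtain ⟨n₂, ⟨e'⟩⟩ := Finite.exists_equiv_fin (Option (Bool × Cl c C M.syms))
  refine ⟨P.toGM.toATM e e', fun k => 2 ^ (a * f k + κ), cw, cw, computable_pow hf a κ, ?_⟩
  intro x k
  have hinit : (P.toGM.toATM e e').init =
      P.toGM.code e e' ⟨P.toGM.start, 0, fun _ => P.toGM.blank, 0⟩ := rfl
  have hspec := logb_spec x.length
  have hlp := logb_pos x.length
  rw [hQ, ← ATM.acc_iff_tree, hinit, GM.acc_code_iff]
  unfold IsSubdividedBinaryTree
  rw [← ATM.accS_iff_tree]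
  constructor
  · intro hM
    -- If `f k = 0`, no configuration of `M` respects the space bound.
    have hfp : 0 < f k := by
      rcases Nat.eq_zero_or_pos (f k) with h0 | h0
      · have h1 := AccS_ok hM
        rw [h0, Nat.zero_mul] at h1
        exact absurd (lt_of_le_of_lt h1.1 h1.2.1) (by simp)
      · exact h0
    have hg : a * f k + κ + 1 ≤ 2 ^ (a * f k + κ) := Nat.lt_two_pow_self
    have haf : f k ≤ a * f k := Nat.le_mul_of_pos_left _ (by omega)
    have hsp : f k * logb x.length + 1 ≤ 2 ^ (a * f k + κ) * logb x.length := by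
      have : f k + 1 ≤ 2 ^ (a * f k + κ) := by omega
      nlinarith
    have hCl : C * logb x.length ≤ cw * logb x.length := Nat.mul_le_mul (by omega) le_rfl
    refine GM.Acc.mono (fun _ h => h) (machine_complete (b := a * f k + cw * logb x.length)
      hfp rfl (okL_code P e e' hsp) (by omega) (by omega) le_rfl (by omega) hM)
      (size_bound hfp hspec.1 (by omega) (by omega) (by omega) (by omega)) (by beta_reduce; omega)
  · intro hA
    obtain ⟨v, hv, hM⟩ := machine_sound (GM.Acc.mono (fun _ _ => trivial) hA le_rfl le_rfl)
    have hvf : v ≤ f k := guess_le hspec.2 (by omega) ha hv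
    have hm : v * (x.length + 2) ^ c ≤ f k * (x.length + 2) ^ c := Nat.mul_le_mul hvf le_rfl
    exact hM.mono (fun _ => ATM.CfgOk.mono (Nat.mul_le_mul hvf le_rfl)) hm (by omega) hm

end XALP
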